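/- arXiv:math/0012195 — 4 statements merged into one kernel-verified Lean document; each statement's English description precedes it below -/
import Mathlib

section
/- For every λ, μ ∈ ℂ, the operators on W^{∞/2+*}(F_{λ,μ}) given by θ(L_n) = Σ_{m∈ℤ}(−m + μ − nλ + λ)(:τ(u_{m+n})ε(u_m'): + :β(u_{m+n})γ(u_m'):), θ(H_n) = λΣ_{m∈ℤ}:τ(u_m)ε(u_{m+n}'): + (λ−1)Σ_{m∈ℤ}:β(u_m)γ(u_{m+n}'): + μδ_{n,0}, θ(G^+_{n−1/2}) = √2·Σ_{m∈ℤ}γ(u_{m+n}')τ(u_m), θ(G^−_{n+1/2}) = √2·Σ_{m∈ℤ}(m − μ − (n+1)λ)β(u_{m−n})ε(u_m'), and θ(ℒ_n) = −θ(L_{−n}) + ((n+1)/2)θ(H_n), define a representation of the N = 2 superconformal algebra on W^{∞/2+*}(F_{λ,μ}) with central charge 3 − 6λ, i.e. the central element 𝒸 acts as (3 − 6λ)·id. -/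
noncomputable section

open Function

/-- Kronecker delta `δ_{n,0}` with values in `ℂ`. -/
def deltaZ (n : ℤ) : ℂ := if n = 0 then 1 else 0

/-- The semi-infinite Weil module `W^{∞/2+*}(Ṽ)` attached to a loop space with homogeneous
basis `u_m` (`u : ι`, `m : ℤ`, `u_m = u ⊗ tᵐ`): a complex vector space `W` equipped with
operators `β(u_m)`, `γ(u_m')` (the symmetric part) and `τ(u_m)`, `ε(u_m')` (the exterior
part) obeying the canonical (anti)commutation relations, with a vacuum vector annihilated
by `β(x), τ(x)` for `x` of positive degree and by `γ(x'), ε(x')` for `x'` dual to vectors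
of nonpositive degree, and cyclically generated by the operators from the vacuum. -/
structure WeilModule (ι : Type*) [DecidableEq ι] (W : Type*) [AddCommGroup W] [Module ℂ W] where
  vac : W
  β : ι → ℤ → Module.End ℂ W
  γ : ι → ℤ → Module.End ℂ W
  τ : ι → ℤ → Module.End ℂ W
  ε : ι → ℤ → Module.End ℂ W
  rel_γβ : ∀ u m v k, γ u m * β v k - β v k * γ u m = if u = v ∧ m = k then 1 else 0
  rel_ββ : ∀ u m v k, β u m * β v k = β v k * β u m
  rel_γγ : ∀ u m v k, γ u m * γ v k = γ v k * γ u m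
  rel_ετ : ∀ u m v k, ε u m * τ v k + τ v k * ε u m = if u = v ∧ m = k then 1 else 0
  rel_ττ : ∀ u m v k, τ u m * τ v k + τ v k * τ u m = 0
  rel_εε : ∀ u m v k, ε u m * ε v k + ε v k * ε u m = 0
  rel_βτ : ∀ u m v k, β u m * τ v k = τ v k * β u m
  rel_βε : ∀ u m v k, β u m * ε v k = ε v k * β u m
  rel_γτ : ∀ u m v k, γ u m * τ v k = τ v k * γ u m
  rel_γε : ∀ u m v k, γ u m * ε v k = ε v k * γ u m
  vac_β : ∀ u m, 0 < m → β u m vac = 0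
  vac_γ : ∀ u m, m ≤ 0 → γ u m vac = 0
  vac_τ : ∀ u m, 0 < m → τ u m vac = 0
  vac_ε : ∀ u m, m ≤ 0 → ε u m vac = 0
  cyclic : ∀ p : Submodule ℂ W, vac ∈ p →
    (∀ u m, ∀ w ∈ p, β u m w ∈ p ∧ γ u m w ∈ p ∧ τ u m w ∈ p ∧ ε u m w ∈ p) → p = ⊤

namespace WeilModule

variable {ι W : Type*} [DecidableEq ι] [AddCommGroup W] [Module ℂ W]

/-- Normal ordering `:τ(u_a) ε(v_b'):`  (`ε(v_b')` is an annihilation operator iff `b ≤ 0`). -/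
def noτε (M : WeilModule ι W) (u : ι) (a : ℤ) (v : ι) (b : ℤ) : Module.End ℂ W :=
  if b ≤ 0 then M.τ u a * M.ε v b else -(M.ε v b * M.τ u a)

/-- Normal ordering `:β(u_a) γ(v_b'):`. -/
def noβγ (M : WeilModule ι W) (u : ι) (a : ℤ) (v : ι) (b : ℤ) : Module.End ℂ W :=
  if b ≤ 0 then M.β u a * M.γ v b else M.γ v b * M.β u a

/-- Normal ordering `:γ(v_b') β(u_a):`. -/
def noγβ (M : WeilModule ι W) (v : ι) (b : ℤ) (u : ι) (a : ℤ) : Module.End ℂ W :=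
  if 0 < b then M.γ v b * M.β u a else M.β u a * M.γ v b

end WeilModule

/-- The commutation relations of the `N = 2` superconformal algebra with central charge `C`,
holding pointwise on the submodule `P`: `Lc n` represents `ℒ_n`, `Hc n` represents `H_n`,
`Gp n` represents `G⁺_{n-1/2}` and `Gm n` represents `G⁻_{n+1/2}`, and the central element
`𝒸` acts as `C • id`. -/
def IsN2RepOn {W : Type*} [AddCommGroup W] [Module ℂ W] (P : Submodule ℂ W) (C : ℂ)
    (Lc Hc Gp Gm : ℤ → Module.End ℂ W) : Prop :=
  (∀ n m, ∀ w ∈ P, (Lc n * Lc m - Lc m * Lc n) w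
      = ((n : ℂ) - (m : ℂ)) • Lc (n + m) w + (C / 12 * ((n : ℂ) ^ 3 - (n : ℂ)) * deltaZ (n + m)) • w) ∧
  (∀ n m, ∀ w ∈ P, (Lc n * Hc m - Hc m * Lc n) w = (-(m : ℂ)) • Hc (n + m) w) ∧
  (∀ n k, ∀ w ∈ P, (Lc n * Gp k - Gp k * Lc n) w = ((n : ℂ) / 2 - (k : ℂ) + 1 / 2) • Gp (n + k) w) ∧
  (∀ n k, ∀ w ∈ P, (Lc n * Gm k - Gm k * Lc n) w = ((n : ℂ) / 2 - (k : ℂ) - 1 / 2) • Gm (n + k) w) ∧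
  (∀ k l, ∀ w ∈ P, (Gp k * Gm l + Gm l * Gp k) w
      = (2 : ℂ) • Lc (k + l) w + ((k : ℂ) - (l : ℂ) - 1) • Hc (k + l) w
        + (C / 3 * ((k : ℂ) ^ 2 - (k : ℂ)) * deltaZ (k + l)) • w) ∧
  (∀ k l, ∀ w ∈ P, (Gp k * Gp l + Gp l * Gp k) w = 0) ∧
  (∀ k l, ∀ w ∈ P, (Gm k * Gm l + Gm l * Gm k) w = 0) ∧
  (∀ n m, ∀ w ∈ P, (Hc n * Hc m - Hc m * Hc n) w = (C / 3 * (n : ℂ) * deltaZ (n + m)) • w) ∧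
  (∀ n k, ∀ w ∈ P, (Hc n * Gp k - Gp k * Hc n) w = Gp (n + k) w) ∧
  (∀ n k, ∀ w ∈ P, (Hc n * Gm k - Gm k * Hc n) w = -(Gm (n + k) w))

section Aux

variable {W : Type*} [AddCommGroup W] [Module ℂ W]

/-- locally finite sum of operators -/
def LS (f : ℤ → Module.End ℂ W) (A : Module.End ℂ W) : Prop :=
  ∀ w, (Function.support fun m => f m w).Finite ∧ A w = ∑ᶠ m, f m w

namespace LS

variable {f g : ℤ → Module.End ℂ W} {A B : Module.End ℂ W}

theorem uniq (h : LS f A) (h' : LS f B) : A = B := by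
  ext w; rw [(h w).2, (h' w).2]

theorem add (h : LS f A) (h' : LS g B) : LS (fun m => f m + g m) (A + B) := by
  intro w
  refine ⟨((h w).1.union (h' w).1).subset ?_, ?_⟩
  · simpa using Function.support_add (fun m => f m w) (fun m => g m w)
  · simp only [LinearMap.add_apply]
    rw [finsum_add_distrib (h w).1 (h' w).1, (h w).2, (h' w).2]

theorem mulLeft (X : Module.End ℂ W) (h : LS f A) : LS (fun m => X * f m) (X * A) := by
  intro w
  refine ⟨(h w).1.subset ?_, ?_⟩
  · intro m hm hm'
    apply hm
    have hm' : f m w = 0 := hm'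
    simp only [Module.End.mul_apply]
    rw [hm', map_zero]
  · simp only [Module.End.mul_apply]
    rw [(h w).2]
    exact X.toAddMonoidHom.map_finsum (h w).1

theorem mulRight (X : Module.End ℂ W) (h : LS f A) : LS (fun m => f m * X) (A * X) := by
  intro w
  exact h (X w)

theorem smul (c : ℂ) (h : LS f A) : LS (fun m => c • f m) (c • A) := by
  have := h.mulLeft (c • (1 : Module.End ℂ W))
  simpa using this

theorem neg (h : LS f A) : LS (fun m => - f m) (- A) := by
  have := h.smul (-1)
  simpa using this

theorem sub (h : LS f A) (h' : LS g B) : LS (fun m => f m - g m) (A - B) := by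
  simpa [sub_eq_add_neg] using h.add h'.neg

theorem shift (k : ℤ) (h : LS f A) : LS (fun m => f (m + k)) A := by
  intro w
  refine ⟨?_, ?_⟩
  · exact (h w).1.preimage (f := fun m => m + k) (fun a _ b _ hab => by simpa using hab)
  · rw [(h w).2]
    exact (finsum_comp_equiv (Equiv.addRight k) (f := fun m => f m w)).symm

theorem single (k : ℤ) (X : Module.End ℂ W) : LS (fun m => if m = k then X else 0) X := by
  intro w
  refine ⟨(Set.finite_singleton k).subset ?_, ?_⟩
  · intro m hm
    by_contra h
    apply hm
    have h : m ≠ k := h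
    simp [h]
  · rw [finsum_eq_single _ k]
    · simp
    · intro m hm; simp [hm]

theorem zero : LS (fun _ => (0 : Module.End ℂ W)) 0 := by
  intro w; simp

theorem exist (h : ∀ w, (Function.support fun m => f m w).Finite) : ∃ A, LS f A := by
  refine ⟨{ toFun := fun w => ∑ᶠ m, f m w, map_add' := ?_, map_smul' := ?_ }, fun w => ⟨h w, rfl⟩⟩
  · intro x y
    simp only [map_add]
    exact finsum_add_distrib (h x) (h y)
  · intro c x
    simp only [map_smul, RingHom.id_apply]
    exact (smul_finsum' c (h x)).symm

end LS

open Classical in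
/-- the sum of a locally finite family -/
def lsum (f : ℤ → Module.End ℂ W) : Module.End ℂ W :=
  if h : ∃ A, LS f A then h.choose else 0

theorem lsum_spec {f : ℤ → Module.End ℂ W}
    (h : ∀ w, (Function.support fun m => f m w).Finite) : LS f (lsum f) := by
  have h' := LS.exist h
  rw [lsum, dif_pos h']
  exact h'.choose_spec

/-- step function -/
def hv (m : ℤ) : ℂ := if m ≤ 0 then 0 else 1

/-- signed sum over `0 < m ≤ n` -/
def Sg (n : ℤ) (f : ℤ → ℂ) : ℂ := ∑ᶠ m, f m * (hv m - hv (m - n))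

theorem Sg_fin (n : ℤ) (f : ℤ → ℂ) :
    (Function.support fun m => f m * (hv m - hv (m - n))).Finite := by
  refine (Set.finite_Icc (-|n|) |n|).subset ?_
  intro m hm
  by_contra h
  apply hm
  have : hv m = hv (m - n) := by
    simp only [Set.mem_Icc, not_and_or, not_le] at h
    have h1 := le_abs_self n
    have h2 := neg_abs_le n
    unfold hv
    congr 1
    apply propext
    omega
  simp [this]

theorem Sg_LS (n : ℤ) (f : ℤ → ℂ) :
    LS (fun m => (f m * (hv m - hv (m - n))) • (1 : Module.End ℂ W)) (Sg n f • 1) := by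
  intro w
  refine ⟨(Sg_fin n f).subset ?_, ?_⟩
  · intro m hm hm'
    apply hm
    have hm' : f m * (hv m - hv (m - n)) = 0 := hm'
    simp only [hm', zero_smul, LinearMap.zero_apply]
  · simp only [LinearMap.smul_apply, Module.End.one_apply]
    unfold Sg
    exact finsum_smul' (Sg_fin n f) w

theorem Sg_succ (n : ℤ) (f : ℤ → ℂ) : Sg (n + 1) f = Sg n f + f (n + 1) := by
  have : f (n + 1) = ∑ᶠ m, f m * (hv (m - n) - hv (m - (n + 1))) := by
    rw [finsum_eq_single _ (n + 1)]
    · simp [hv]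
    · intro m hm
      have : hv (m - n) = hv (m - (n + 1)) := by
        unfold hv
        congr 1
        apply propext
        omega
      simp [this]
  have e : (fun m => f m * (hv (m - n) - hv (m - (n + 1)))) = fun m =>
      f m * (hv m - hv (m - (n + 1))) - f m * (hv m - hv (m - n)) := by
    funext m; ring
  rw [this, e, finsum_sub_distrib (Sg_fin _ f) (Sg_fin _ f)]
  unfold Sg
  ring

theorem Sg_lin (n : ℤ) (f : ℤ → ℂ) (c d : ℂ) (hf : ∀ m : ℤ, f m = c * m + d) :
    Sg n f = c * (n * (n + 1) / 2) + d * n := by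
  induction n using Int.induction_on with
  | zero => simp [Sg]
  | succ i ih => rw [Sg_succ, ih, hf]; push_cast; ring
  | pred i ih =>
    have := Sg_succ (-(i : ℤ) - 1) f
    rw [sub_add_cancel, ih, hf] at this
    push_cast at this ⊢
    linear_combination -this

theorem Sg_sub (n : ℤ) (f g : ℤ → ℂ) : Sg n (fun m => f m - g m) = Sg n f - Sg n g := by
  unfold Sg
  rw [← finsum_sub_distrib (Sg_fin _ f) (Sg_fin _ g)]
  congr 1; funext m; ring

namespace WeilModule

variable {ι : Type*} [DecidableEq ι] (M : WeilModule ι W) (u : ι)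

theorem bound (w : W) : ∃ N : ℤ, (∀ m, N < m → M.β u m w = 0 ∧ M.τ u m w = 0) ∧
    (∀ m, m < -N → M.γ u m w = 0 ∧ M.ε u m w = 0) := by
  let p : Submodule ℂ W :=
    { carrier := {w | ∃ N : ℤ, (∀ m, N < m → M.β u m w = 0 ∧ M.τ u m w = 0) ∧
        (∀ m, m < -N → M.γ u m w = 0 ∧ M.ε u m w = 0)}
      zero_mem' := ⟨0, by simp⟩
      add_mem' := by
        rintro a b ⟨N, h1, h2⟩ ⟨N', h1', h2'⟩
        refine ⟨max N N', fun m hm => ?_, fun m hm => ?_⟩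
        · have := h1 m (by omega)
          have := h1' m (by omega)
          simp_all
        · have := h2 m (by omega)
          have := h2' m (by omega)
          simp_all
      smul_mem' := by
        rintro c a ⟨N, h1, h2⟩
        refine ⟨N, fun m hm => ?_, fun m hm => ?_⟩
        · simp [h1 m hm]
        · simp [h2 m hm] }
  have hp : p = ⊤ := by
    apply M.cyclic
    · exact ⟨0, fun m hm => ⟨M.vac_β u m hm, M.vac_τ u m hm⟩,
        fun m hm => ⟨M.vac_γ u m (by omega), M.vac_ε u m (by omega)⟩⟩
    · rintro v k w ⟨N, h1, h2⟩
      have ev : ∀ {A B : Module.End ℂ W}, A = B → ∀ w, A w = B w := by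
        intro A B h w; rw [h]
      refine ⟨?_, ?_, ?_, ?_⟩ <;>
        refine ⟨max N |k|, fun m hm => ?_, fun m hm => ?_⟩ <;>
        have hk1 := le_abs_self k <;> have hk2 := neg_abs_le k
      · have := h1 m (by omega)
        have r1 := ev (M.rel_ββ u m v k) w
        have r2 := ev (M.rel_βτ v k u m) w
        simp_all
      · have := h2 m (by omega)
        have r1 := ev (M.rel_γβ u m v k) w
        have r2 := ev (M.rel_βε v k u m) w
        have : m ≠ k := by omega
        simp_all
      · have := h1 m (by omega)
        have r1 := ev (M.rel_γβ v k u m) w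
        have r2 := ev (M.rel_γτ v k u m) w
        have : k ≠ m := by omega
        simp_all
      · have := h2 m (by omega)
        have r1 := ev (M.rel_γγ u m v k) w
        have r2 := ev (M.rel_γε v k u m) w
        simp_all
      · have := h1 m (by omega)
        have r1 := ev (M.rel_βτ u m v k) w
        have r2 := ev (M.rel_ττ u m v k) w
        simp_all
      · have := h2 m (by omega)
        have r1 := ev (M.rel_γτ u m v k) w
        have r2 := ev (M.rel_ετ u m v k) w
        have : m ≠ k := by omega
        simp_all
      · have := h1 m (by omega)
        have r1 := ev (M.rel_βε u m v k) w
        have r2 := ev (M.rel_ετ v k u m) w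
        have : k ≠ m := by omega
        simp_all
      · have := h2 m (by omega)
        have r1 := ev (M.rel_γε u m v k) w
        have r2 := ev (M.rel_εε u m v k) w
        simp_all
  have : w ∈ p := by rw [hp]; trivial
  exact this

theorem fin_of {f : ℤ → Module.End ℂ W}
    (h : ∀ w, ∃ N : ℤ, ∀ m, (N < m ∨ m < -N) → f m w = 0) (a : ℤ → ℂ) :
    ∀ w, (Function.support fun m => (a m • f m) w).Finite := by
  intro w
  obtain ⟨N, hN⟩ := h w
  refine (Set.finite_Icc (-N) N).subset ?_
  intro m hm
  by_contra hc
  apply hm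
  simp only [Set.mem_Icc, not_and_or, not_le] at hc
  simp [hN m (by tauto)]

/-- `Σ a(m) :τ_{m+n} ε_m:` -/
def T (a : ℤ → ℂ) (n : ℤ) : Module.End ℂ W := lsum fun m => a m • M.noτε u (m + n) u m
/-- `Σ a(m) :β_{m+n} γ_m:` -/
def B (a : ℤ → ℂ) (n : ℤ) : Module.End ℂ W := lsum fun m => a m • M.noβγ u (m + n) u m
/-- `Σ a(m) τ_{m+n} γ_m` -/
def P (a : ℤ → ℂ) (n : ℤ) : Module.End ℂ W := lsum fun m => a m • (M.τ u (m + n) * M.γ u m)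
/-- `Σ a(m) β_{m+n} ε_m` -/
def Q (a : ℤ → ℂ) (n : ℤ) : Module.End ℂ W := lsum fun m => a m • (M.β u (m + n) * M.ε u m)

theorem T_LS (a : ℤ → ℂ) (n : ℤ) : LS (fun m => a m • M.noτε u (m + n) u m) (M.T u a n) := by
  apply lsum_spec
  apply fin_of
  intro w
  obtain ⟨N, h1, h2⟩ := M.bound u w
  have hk1 := le_abs_self n
  have hk2 := neg_abs_le n
  refine ⟨|N| + |n|, fun m hm => ?_⟩
  have hk3 := le_abs_self N
  have hk4 := neg_abs_le N
  unfold noτε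
  split_ifs with h
  · have := h2 m (by omega)
    simp [this]
  · have := h1 (m + n) (by omega)
    simp [this]

theorem B_LS (a : ℤ → ℂ) (n : ℤ) : LS (fun m => a m • M.noβγ u (m + n) u m) (M.B u a n) := by
  apply lsum_spec
  apply fin_of
  intro w
  obtain ⟨N, h1, h2⟩ := M.bound u w
  have hk1 := le_abs_self n
  have hk2 := neg_abs_le n
  refine ⟨|N| + |n|, fun m hm => ?_⟩
  have hk3 := le_abs_self N
  have hk4 := neg_abs_le N
  unfold noβγ
  split_ifs with h
  · have := h2 m (by omega)
    simp [this]
  · have := h1 (m + n) (by omega)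
    simp [this]

theorem P_LS (a : ℤ → ℂ) (n : ℤ) :
    LS (fun m => a m • (M.τ u (m + n) * M.γ u m)) (M.P u a n) := by
  apply lsum_spec
  apply fin_of
  intro w
  obtain ⟨N, h1, h2⟩ := M.bound u w
  have hk1 := le_abs_self n
  have hk2 := neg_abs_le n
  refine ⟨|N| + |n|, fun m hm => ?_⟩
  have hk3 := le_abs_self N
  have hk4 := neg_abs_le N
  by_cases h : m ≤ 0
  · have := h2 m (by omega)
    simp [this]
  · have := h1 (m + n) (by omega)
    rw [← M.rel_γτ]
    simp [this]

theorem Q_LS (a : ℤ → ℂ) (n : ℤ) :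
    LS (fun m => a m • (M.β u (m + n) * M.ε u m)) (M.Q u a n) := by
  apply lsum_spec
  apply fin_of
  intro w
  obtain ⟨N, h1, h2⟩ := M.bound u w
  have hk1 := le_abs_self n
  have hk2 := neg_abs_le n
  refine ⟨|N| + |n|, fun m hm => ?_⟩
  have hk3 := le_abs_self N
  have hk4 := neg_abs_le N
  by_cases h : m ≤ 0
  · have := h2 m (by omega)
    simp [this]
  · have := h1 (m + n) (by omega)
    rw [M.rel_βε]
    simp [this]

/-- Kronecker delta as an operator -/
def dl (m k : ℤ) : Module.End ℂ W := if m = k then 1 else 0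

theorem r_ετ (m k : ℤ) : M.ε u m * M.τ u k = dl m k - M.τ u k * M.ε u m := by
  have := M.rel_ετ u m u k
  simp only [true_and] at this
  rw [dl, ← this]; abel

theorem r_γβ (m k : ℤ) : M.γ u m * M.β u k = dl m k + M.β u k * M.γ u m := by
  have := M.rel_γβ u m u k
  simp only [true_and] at this
  rw [dl, ← this]; abel

theorem dl_comm (m k : ℤ) (X : Module.End ℂ W) : X * dl m k = dl m k * X := by
  unfold dl; split_ifs <;> simp

theorem dl_eq (m k : ℤ) : (dl m k : Module.End ℂ W) = (deltaZ (m - k)) • 1 := by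
  unfold dl deltaZ
  by_cases h : m = k
  · simp [h]
  · simp [h, sub_eq_zero]

theorem no1 (a b : ℤ) : M.noτε u a u b = M.τ u a * M.ε u b - hv b • dl b a := by
  unfold noτε hv
  split_ifs
  · simp
  · rw [r_ετ]; simp

theorem no2 (a b : ℤ) : M.noβγ u a u b = M.β u a * M.γ u b + hv b • dl b a := by
  unfold noβγ hv
  split_ifs
  · simp
  · rw [r_γβ]; simp [add_comm]

theorem hv_comm (c : ℂ) (m k : ℤ) (X : Module.End ℂ W) :
    X * (c • dl m k) = (c • dl m k) * X := by
  rw [mul_smul_comm, smul_mul_assoc, dl_comm]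

theorem T_τ (a : ℤ → ℂ) (n k : ℤ) :
    M.T u a n * M.τ u k - M.τ u k * M.T u a n = a k • M.τ u (k + n) := by
  have h := ((M.T_LS u a n).mulRight (M.τ u k)).sub ((M.T_LS u a n).mulLeft (M.τ u k))
  refine h.uniq ?_
  convert LS.single k (a k • M.τ u (k + n)) using 2 with m
  have e : M.noτε u (m + n) u m * M.τ u k - M.τ u k * M.noτε u (m + n) u m =
      dl m k * M.τ u (m + n) := by
    rw [no1]
    linear_combination (norm := noncomm_ring) M.τ u (m + n) * M.r_ετ u m k
      - M.rel_ττ u k u (m + n) * M.ε u m + dl_comm m k (M.τ u (m + n))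
      + hv_comm (hv m) m (m + n) (M.τ u k)
  rw [smul_mul_assoc, mul_smul_comm, ← smul_sub, e, dl]
  split_ifs with h
  · simp [h]
  · simp

theorem T_ε (a : ℤ → ℂ) (n k : ℤ) :
    M.T u a n * M.ε u k - M.ε u k * M.T u a n = -(a (k - n) • M.ε u (k - n)) := by
  have h := ((M.T_LS u a n).mulRight (M.ε u k)).sub ((M.T_LS u a n).mulLeft (M.ε u k))
  refine h.uniq ?_
  convert LS.single (k - n) (-(a (k - n) • M.ε u (k - n))) using 2 with m
  have e : M.noτε u (m + n) u m * M.ε u k - M.ε u k * M.noτε u (m + n) u m =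
      -(dl k (m + n) * M.ε u m) := by
    rw [no1]
    linear_combination (norm := noncomm_ring) - M.r_ετ u k (m + n) * M.ε u m
      + M.τ u (m + n) * M.rel_εε u m u k
      + hv_comm (hv m) m (m + n) (M.ε u k)
  rw [smul_mul_assoc, mul_smul_comm, ← smul_sub, e, dl]
  by_cases h : m = k - n
  · simp [h]
  · have : ¬ (k = m + n) := by omega
    simp [h, this]

theorem T_comm (a : ℤ → ℂ) (n : ℤ) (X : Module.End ℂ W) (h1 : ∀ m, M.τ u m * X = X * M.τ u m)
    (h2 : ∀ m, M.ε u m * X = X * M.ε u m) : M.T u a n * X = X * M.T u a n := by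
  have h := ((M.T_LS u a n).mulRight X)
  refine h.uniq ?_
  convert ((M.T_LS u a n).mulLeft X) using 2 with m
  have e : M.noτε u (m + n) u m * X = X * M.noτε u (m + n) u m := by
    rw [no1]
    linear_combination (norm := noncomm_ring) M.τ u (m + n) * h2 m + h1 (m + n) * M.ε u m
      + hv_comm (hv m) m (m + n) X
  rw [smul_mul_assoc, mul_smul_comm, e]

theorem B_β (a : ℤ → ℂ) (n k : ℤ) :
    M.B u a n * M.β u k - M.β u k * M.B u a n = a k • M.β u (k + n) := by
  have h := ((M.B_LS u a n).mulRight (M.β u k)).sub ((M.B_LS u a n).mulLeft (M.β u k))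
  refine h.uniq ?_
  convert LS.single k (a k • M.β u (k + n)) using 2 with m
  have e : M.noβγ u (m + n) u m * M.β u k - M.β u k * M.noβγ u (m + n) u m =
      dl m k * M.β u (m + n) := by
    rw [no2]
    linear_combination (norm := noncomm_ring) M.β u (m + n) * M.r_γβ u m k
      - M.rel_ββ u k u (m + n) * M.γ u m + dl_comm m k (M.β u (m + n))
      - hv_comm (hv m) m (m + n) (M.β u k)
  rw [smul_mul_assoc, mul_smul_comm, ← smul_sub, e, dl]
  split_ifs with h
  · simp [h]
  · simp

theorem B_γ (a : ℤ → ℂ) (n k : ℤ) :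
    M.B u a n * M.γ u k - M.γ u k * M.B u a n = -(a (k - n) • M.γ u (k - n)) := by
  have h := ((M.B_LS u a n).mulRight (M.γ u k)).sub ((M.B_LS u a n).mulLeft (M.γ u k))
  refine h.uniq ?_
  convert LS.single (k - n) (-(a (k - n) • M.γ u (k - n))) using 2 with m
  have e : M.noβγ u (m + n) u m * M.γ u k - M.γ u k * M.noβγ u (m + n) u m =
      -(dl k (m + n) * M.γ u m) := by
    rw [no2]
    linear_combination (norm := noncomm_ring) - M.r_γβ u k (m + n) * M.γ u m
      + M.β u (m + n) * M.rel_γγ u m u k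
      - hv_comm (hv m) m (m + n) (M.γ u k)
  rw [smul_mul_assoc, mul_smul_comm, ← smul_sub, e, dl]
  by_cases h : m = k - n
  · simp [h]
  · have : ¬ (k = m + n) := by omega
    simp [h, this]

theorem B_comm (a : ℤ → ℂ) (n : ℤ) (X : Module.End ℂ W) (h1 : ∀ m, M.β u m * X = X * M.β u m)
    (h2 : ∀ m, M.γ u m * X = X * M.γ u m) : M.B u a n * X = X * M.B u a n := by
  have h := ((M.B_LS u a n).mulRight X)
  refine h.uniq ?_
  convert ((M.B_LS u a n).mulLeft X) using 2 with m
  have e : M.noβγ u (m + n) u m * X = X * M.noβγ u (m + n) u m := by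
    rw [no2]
    linear_combination (norm := noncomm_ring) M.β u (m + n) * h2 m + h1 (m + n) * M.γ u m
      - hv_comm (hv m) m (m + n) X
  rw [smul_mul_assoc, mul_smul_comm, e]

theorem P_β (a : ℤ → ℂ) (n k : ℤ) :
    M.P u a n * M.β u k - M.β u k * M.P u a n = a k • M.τ u (k + n) := by
  have h := ((M.P_LS u a n).mulRight (M.β u k)).sub ((M.P_LS u a n).mulLeft (M.β u k))
  refine h.uniq ?_
  convert LS.single k (a k • M.τ u (k + n)) using 2 with m
  have e : M.τ u (m + n) * M.γ u m * M.β u k - M.β u k * (M.τ u (m + n) * M.γ u m) =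
      dl m k * M.τ u (m + n) := by
    linear_combination (norm := noncomm_ring) M.τ u (m + n) * M.r_γβ u m k
      - M.rel_βτ u k u (m + n) * M.γ u m + dl_comm m k (M.τ u (m + n))
  rw [smul_mul_assoc, mul_smul_comm, ← smul_sub, e, dl]
  split_ifs with h
  · simp [h]
  · simp

theorem P_ε (a : ℤ → ℂ) (n k : ℤ) :
    M.P u a n * M.ε u k + M.ε u k * M.P u a n = a (k - n) • M.γ u (k - n) := by
  have h := ((M.P_LS u a n).mulRight (M.ε u k)).add ((M.P_LS u a n).mulLeft (M.ε u k))
  refine h.uniq ?_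
  convert LS.single (k - n) (a (k - n) • M.γ u (k - n)) using 2 with m
  have e : M.τ u (m + n) * M.γ u m * M.ε u k + M.ε u k * (M.τ u (m + n) * M.γ u m) =
      dl k (m + n) * M.γ u m := by
    linear_combination (norm := noncomm_ring) M.r_ετ u k (m + n) * M.γ u m
      + M.τ u (m + n) * M.rel_γε u m u k
  rw [smul_mul_assoc, mul_smul_comm, ← smul_add, e, dl]
  by_cases h : m = k - n
  · simp [h]
  · have : ¬ (k = m + n) := by omega
    simp [h, this]

theorem P_γ (a : ℤ → ℂ) (n k : ℤ) : M.P u a n * M.γ u k = M.γ u k * M.P u a n := by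
  refine ((M.P_LS u a n).mulRight (M.γ u k)).uniq ?_
  convert ((M.P_LS u a n).mulLeft (M.γ u k)) using 2 with m
  have e : M.τ u (m + n) * M.γ u m * M.γ u k = M.γ u k * (M.τ u (m + n) * M.γ u m) := by
    linear_combination (norm := noncomm_ring) M.τ u (m + n) * M.rel_γγ u m u k
      - M.rel_γτ u k u (m + n) * M.γ u m
  rw [smul_mul_assoc, mul_smul_comm, e]

theorem P_τ (a : ℤ → ℂ) (n k : ℤ) : M.P u a n * M.τ u k = -(M.τ u k * M.P u a n) := by
  refine ((M.P_LS u a n).mulRight (M.τ u k)).uniq ?_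
  convert ((M.P_LS u a n).mulLeft (M.τ u k)).neg using 2 with m
  have e : M.τ u (m + n) * M.γ u m * M.τ u k = -(M.τ u k * (M.τ u (m + n) * M.γ u m)) := by
    linear_combination (norm := noncomm_ring) M.τ u (m + n) * M.rel_γτ u m u k
      + M.rel_ττ u k u (m + n) * M.γ u m
  rw [smul_mul_assoc, mul_smul_comm, e, smul_neg]

theorem Q_β (a : ℤ → ℂ) (n k : ℤ) : M.Q u a n * M.β u k = M.β u k * M.Q u a n := by
  refine ((M.Q_LS u a n).mulRight (M.β u k)).uniq ?_
  convert ((M.Q_LS u a n).mulLeft (M.β u k)) using 2 with m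
  have e : M.β u (m + n) * M.ε u m * M.β u k = M.β u k * (M.β u (m + n) * M.ε u m) := by
    linear_combination (norm := noncomm_ring) - M.β u (m + n) * M.rel_βε u k u m
      + M.rel_ββ u (m + n) u k * M.ε u m
  rw [smul_mul_assoc, mul_smul_comm, e]

theorem Q_ε (a : ℤ → ℂ) (n k : ℤ) : M.Q u a n * M.ε u k = -(M.ε u k * M.Q u a n) := by
  refine ((M.Q_LS u a n).mulRight (M.ε u k)).uniq ?_
  convert ((M.Q_LS u a n).mulLeft (M.ε u k)).neg using 2 with m
  have e : M.β u (m + n) * M.ε u m * M.ε u k = -(M.ε u k * (M.β u (m + n) * M.ε u m)) := by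
    linear_combination (norm := noncomm_ring) M.β u (m + n) * M.rel_εε u m u k
      - M.rel_βε u (m + n) u k * M.ε u m
  rw [smul_mul_assoc, mul_smul_comm, e, smul_neg]

/-! Quadratic commutators -/

theorem key_delta (n p m : ℤ) (a b : ℤ → ℂ) :
    (b m * a (m + p)) • hv m • (dl m (m + p + n) : Module.End ℂ W)
      - (b m * a (m - n)) • hv (m - n) • dl (m - n) (m + p) =
    deltaZ (n + p) • ((b m * a (m - n)) * (hv m - hv (m - n))) • 1 := by
  rw [dl_eq, dl_eq]
  by_cases h : n + p = 0
  · obtain rfl : p = -n := by omega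
    simp only [deltaZ, smul_smul, ← sub_smul]
    congr 1
    simp [← sub_eq_add_neg]
    ring
  · have h1 : m - (m + p + n) ≠ 0 := by omega
    have h2 : m - n - (m + p) ≠ 0 := by omega
    simp [deltaZ, h, h1, h2]

theorem TT (a b : ℤ → ℂ) (n p : ℤ) :
    M.T u a n * M.T u b p - M.T u b p * M.T u a n =
      M.T u (fun m => b m * a (m + p)) (n + p) - M.T u (fun m => b (m + n) * a m) (n + p)
      + (deltaZ (n + p) * Sg n (fun m => b m * a (m - n))) • 1 := by
  have h := ((M.T_LS u b p).mulLeft (M.T u a n)).sub ((M.T_LS u b p).mulRight (M.T u a n))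
  refine h.uniq ?_
  have h2 := ((M.T_LS u (fun m => b m * a (m + p)) (n + p)).sub
    ((M.T_LS u (fun m => b (m + n) * a m) (n + p)).shift (-n))).add
    ((Sg_LS (W := W) n (fun m => b m * a (m - n))).smul (deltaZ (n + p)))
  rw [smul_smul] at h2
  convert h2 using 2 with m
  have e : M.T u a n * M.noτε u (m + p) u m - M.noτε u (m + p) u m * M.T u a n =
      a (m + p) • (M.τ u (m + p + n) * M.ε u m) - a (m - n) • (M.τ u (m + p) * M.ε u (m - n)) := by
    rw [no1, ← smul_mul_assoc, ← mul_smul_comm]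
    linear_combination (norm := noncomm_ring) M.T_τ u a n (m + p) * M.ε u m
      + M.τ u (m + p) * M.T_ε u a n m - hv_comm (hv m) m (m + p) (M.T u a n)
  rw [smul_mul_assoc, mul_smul_comm, ← smul_sub, e]
  rw [show m + -n + (n + p) = m + p by ring, show m + (n + p) = m + p + n by ring,
    show m + -n + n = m by ring, show m + -n = m - n by ring, ← key_delta n p m a b, no1, no1]
  simp only [smul_sub, smul_smul]
  abel

theorem BB (a b : ℤ → ℂ) (n p : ℤ) :
    M.B u a n * M.B u b p - M.B u b p * M.B u a n =
      M.B u (fun m => b m * a (m + p)) (n + p) - M.B u (fun m => b (m + n) * a m) (n + p)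
      - (deltaZ (n + p) * Sg n (fun m => b m * a (m - n))) • 1 := by
  have h := ((M.B_LS u b p).mulLeft (M.B u a n)).sub ((M.B_LS u b p).mulRight (M.B u a n))
  refine h.uniq ?_
  have h2 := ((M.B_LS u (fun m => b m * a (m + p)) (n + p)).sub
    ((M.B_LS u (fun m => b (m + n) * a m) (n + p)).shift (-n))).sub
    ((Sg_LS (W := W) n (fun m => b m * a (m - n))).smul (deltaZ (n + p)))
  rw [smul_smul] at h2
  convert h2 using 2 with m
  have e : M.B u a n * M.noβγ u (m + p) u m - M.noβγ u (m + p) u m * M.B u a n =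
      a (m + p) • (M.β u (m + p + n) * M.γ u m) - a (m - n) • (M.β u (m + p) * M.γ u (m - n)) := by
    rw [no2, ← smul_mul_assoc, ← mul_smul_comm]
    linear_combination (norm := noncomm_ring) M.B_β u a n (m + p) * M.γ u m
      + M.β u (m + p) * M.B_γ u a n m + hv_comm (hv m) m (m + p) (M.B u a n)
  rw [smul_mul_assoc, mul_smul_comm, ← smul_sub, e]
  rw [show m + -n + (n + p) = m + p by ring, show m + (n + p) = m + p + n by ring,
    show m + -n + n = m by ring, show m + -n = m - n by ring, ← key_delta n p m a b, no2, no2]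
  simp only [smul_sub, smul_add, smul_smul]
  abel

theorem TB (a b : ℤ → ℂ) (n p : ℤ) :
    M.T u a n * M.B u b p = M.B u b p * M.T u a n := by
  symm
  apply B_comm
  · intro m
    symm
    apply T_comm
    · intro k; rw [M.rel_βτ]
    · intro k; rw [M.rel_βε]
  · intro m
    symm
    apply T_comm
    · intro k; rw [M.rel_γτ]
    · intro k; rw [M.rel_γε]

theorem T_β (a : ℤ → ℂ) (n k : ℤ) : M.T u a n * M.β u k = M.β u k * M.T u a n := by
  apply T_comm
  · intro k; rw [M.rel_βτ]
  · intro k; rw [M.rel_βε]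

theorem T_γ (a : ℤ → ℂ) (n k : ℤ) : M.T u a n * M.γ u k = M.γ u k * M.T u a n := by
  apply T_comm
  · intro k; rw [M.rel_γτ]
  · intro k; rw [M.rel_γε]

theorem B_τ (a : ℤ → ℂ) (n k : ℤ) : M.B u a n * M.τ u k = M.τ u k * M.B u a n := by
  apply B_comm
  · intro k; rw [M.rel_βτ]
  · intro k; rw [M.rel_γτ]

theorem B_ε (a : ℤ → ℂ) (n k : ℤ) : M.B u a n * M.ε u k = M.ε u k * M.B u a n := by
  apply B_comm
  · intro k; rw [M.rel_βε]
  · intro k; rw [M.rel_γε]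

theorem TP (a b : ℤ → ℂ) (n p : ℤ) :
    M.T u a n * M.P u b p - M.P u b p * M.T u a n = M.P u (fun m => b m * a (m + p)) (n + p) := by
  refine (((M.P_LS u b p).mulLeft (M.T u a n)).sub ((M.P_LS u b p).mulRight (M.T u a n))).uniq ?_
  convert M.P_LS u (fun m => b m * a (m + p)) (n + p) using 2 with m
  have e : M.T u a n * (M.τ u (m + p) * M.γ u m) - M.τ u (m + p) * M.γ u m * M.T u a n =
      a (m + p) • (M.τ u (m + p + n) * M.γ u m) := by
    rw [← smul_mul_assoc]
    linear_combination (norm := noncomm_ring) M.T_τ u a n (m + p) * M.γ u m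
      + M.τ u (m + p) * M.T_γ u a n m
  rw [smul_mul_assoc, mul_smul_comm, ← smul_sub, e, smul_smul,
    show m + (n + p) = m + p + n by ring]

theorem BQ (a b : ℤ → ℂ) (n p : ℤ) :
    M.B u a n * M.Q u b p - M.Q u b p * M.B u a n = M.Q u (fun m => b m * a (m + p)) (n + p) := by
  refine (((M.Q_LS u b p).mulLeft (M.B u a n)).sub ((M.Q_LS u b p).mulRight (M.B u a n))).uniq ?_
  convert M.Q_LS u (fun m => b m * a (m + p)) (n + p) using 2 with m
  have e : M.B u a n * (M.β u (m + p) * M.ε u m) - M.β u (m + p) * M.ε u m * M.B u a n =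
      a (m + p) • (M.β u (m + p + n) * M.ε u m) := by
    rw [← smul_mul_assoc]
    linear_combination (norm := noncomm_ring) M.B_β u a n (m + p) * M.ε u m
      + M.β u (m + p) * M.B_ε u a n m
  rw [smul_mul_assoc, mul_smul_comm, ← smul_sub, e, smul_smul,
    show m + (n + p) = m + p + n by ring]

theorem TQ (a b : ℤ → ℂ) (n p : ℤ) :
    M.T u a n * M.Q u b p - M.Q u b p * M.T u a n =
      - M.Q u (fun m => b (m + n) * a m) (n + p) := by
  refine (((M.Q_LS u b p).mulLeft (M.T u a n)).sub ((M.Q_LS u b p).mulRight (M.T u a n))).uniq ?_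
  convert ((M.Q_LS u (fun m => b (m + n) * a m) (n + p)).shift (-n)).neg using 2 with m
  have e : M.T u a n * (M.β u (m + p) * M.ε u m) - M.β u (m + p) * M.ε u m * M.T u a n =
      - (a (m - n) • (M.β u (m + p) * M.ε u (m - n))) := by
    rw [← mul_smul_comm]
    linear_combination (norm := noncomm_ring) M.T_β u a n (m + p) * M.ε u m
      + M.β u (m + p) * M.T_ε u a n m
  rw [smul_mul_assoc, mul_smul_comm, ← smul_sub, e, smul_neg, smul_smul,
    show m + -n + (n + p) = m + p by ring,
    show m + -n + n = m by ring, show m + -n = m - n by ring]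

theorem BP (a b : ℤ → ℂ) (n p : ℤ) :
    M.B u a n * M.P u b p - M.P u b p * M.B u a n =
      - M.P u (fun m => b (m + n) * a m) (n + p) := by
  refine (((M.P_LS u b p).mulLeft (M.B u a n)).sub ((M.P_LS u b p).mulRight (M.B u a n))).uniq ?_
  convert ((M.P_LS u (fun m => b (m + n) * a m) (n + p)).shift (-n)).neg using 2 with m
  have e : M.B u a n * (M.τ u (m + p) * M.γ u m) - M.τ u (m + p) * M.γ u m * M.B u a n =
      - (a (m - n) • (M.τ u (m + p) * M.γ u (m - n))) := by
    rw [← mul_smul_comm]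
    linear_combination (norm := noncomm_ring) M.B_τ u a n (m + p) * M.γ u m
      + M.τ u (m + p) * M.B_γ u a n m
  rw [smul_mul_assoc, mul_smul_comm, ← smul_sub, e, smul_neg, smul_smul,
    show m + -n + (n + p) = m + p by ring,
    show m + -n + n = m by ring, show m + -n = m - n by ring]

theorem PP (a b : ℤ → ℂ) (n p : ℤ) :
    M.P u a n * M.P u b p + M.P u b p * M.P u a n = 0 := by
  refine (((M.P_LS u b p).mulLeft (M.P u a n)).add ((M.P_LS u b p).mulRight (M.P u a n))).uniq ?_
  convert LS.zero using 2 with m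
  have e : M.P u a n * (M.τ u (m + p) * M.γ u m) + M.τ u (m + p) * M.γ u m * M.P u a n = 0 := by
    linear_combination (norm := noncomm_ring) M.P_τ u a n (m + p) * M.γ u m
      - M.τ u (m + p) * M.P_γ u a n m
  rw [smul_mul_assoc, mul_smul_comm, ← smul_add, e, smul_zero]

theorem QQ (a b : ℤ → ℂ) (n p : ℤ) :
    M.Q u a n * M.Q u b p + M.Q u b p * M.Q u a n = 0 := by
  refine (((M.Q_LS u b p).mulLeft (M.Q u a n)).add ((M.Q_LS u b p).mulRight (M.Q u a n))).uniq ?_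
  convert LS.zero using 2 with m
  have e : M.Q u a n * (M.β u (m + p) * M.ε u m) + M.β u (m + p) * M.ε u m * M.Q u a n = 0 := by
    linear_combination (norm := noncomm_ring) M.Q_β u a n (m + p) * M.ε u m
      + M.β u (m + p) * M.Q_ε u a n m
  rw [smul_mul_assoc, mul_smul_comm, ← smul_add, e, smul_zero]

/-- general even element -/
def E (a b : ℤ → ℂ) (c : ℂ) (n : ℤ) : Module.End ℂ W := M.T u a n + M.B u b n + c • 1

theorem PQ (a b : ℤ → ℂ) (n p : ℤ) :
    M.P u a n * M.Q u b p + M.Q u b p * M.P u a n =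
      M.E u (fun m => b m * a (m + p)) (fun m => b (m + n) * a m)
        (deltaZ (n + p) * Sg n (fun m => b m * a (m - n))) (n + p) := by
  refine (((M.Q_LS u b p).mulLeft (M.P u a n)).add ((M.Q_LS u b p).mulRight (M.P u a n))).uniq ?_
  have h2 := ((M.T_LS u (fun m => b m * a (m + p)) (n + p)).add
    ((M.B_LS u (fun m => b (m + n) * a m) (n + p)).shift (-n))).add
    ((Sg_LS (W := W) n (fun m => b m * a (m - n))).smul (deltaZ (n + p)))
  unfold E
  rw [smul_smul] at h2
  convert h2 using 2 with m
  have e : M.P u a n * (M.β u (m + p) * M.ε u m) + M.β u (m + p) * M.ε u m * M.P u a n =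
      a (m + p) • (M.τ u (m + p + n) * M.ε u m) + a (m - n) • (M.β u (m + p) * M.γ u (m - n)) := by
    rw [← smul_mul_assoc, ← mul_smul_comm]
    linear_combination (norm := noncomm_ring) M.P_β u a n (m + p) * M.ε u m
      + M.β u (m + p) * M.P_ε u a n m
  rw [smul_mul_assoc, mul_smul_comm, ← smul_add, e]
  rw [show m + -n + (n + p) = m + p by ring, show m + (n + p) = m + p + n by ring,
    show m + -n + n = m by ring, show m + -n = m - n by ring, ← key_delta n p m a b, no1, no2]
  simp only [smul_sub, smul_add, smul_smul]
  abel

theorem T_add (a b : ℤ → ℂ) (n : ℤ) : M.T u (fun m => a m + b m) n = M.T u a n + M.T u b n := by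
  refine (M.T_LS u _ n).uniq ?_
  simpa only [add_smul] using (M.T_LS u a n).add (M.T_LS u b n)

theorem T_smul (c : ℂ) (a : ℤ → ℂ) (n : ℤ) : M.T u (fun m => c * a m) n = c • M.T u a n := by
  refine (M.T_LS u _ n).uniq ?_
  simpa only [smul_smul] using (M.T_LS u a n).smul c

theorem B_add (a b : ℤ → ℂ) (n : ℤ) : M.B u (fun m => a m + b m) n = M.B u a n + M.B u b n := by
  refine (M.B_LS u _ n).uniq ?_
  simpa only [add_smul] using (M.B_LS u a n).add (M.B_LS u b n)

theorem B_smul (c : ℂ) (a : ℤ → ℂ) (n : ℤ) : M.B u (fun m => c * a m) n = c • M.B u a n := by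
  refine (M.B_LS u _ n).uniq ?_
  simpa only [smul_smul] using (M.B_LS u a n).smul c

theorem P_add (a b : ℤ → ℂ) (n : ℤ) : M.P u (fun m => a m + b m) n = M.P u a n + M.P u b n := by
  refine (M.P_LS u _ n).uniq ?_
  simpa only [add_smul] using (M.P_LS u a n).add (M.P_LS u b n)

theorem P_smul (c : ℂ) (a : ℤ → ℂ) (n : ℤ) : M.P u (fun m => c * a m) n = c • M.P u a n := by
  refine (M.P_LS u _ n).uniq ?_
  simpa only [smul_smul] using (M.P_LS u a n).smul c

theorem Q_add (a b : ℤ → ℂ) (n : ℤ) : M.Q u (fun m => a m + b m) n = M.Q u a n + M.Q u b n := by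
  refine (M.Q_LS u _ n).uniq ?_
  simpa only [add_smul] using (M.Q_LS u a n).add (M.Q_LS u b n)

theorem Q_smul (c : ℂ) (a : ℤ → ℂ) (n : ℤ) : M.Q u (fun m => c * a m) n = c • M.Q u a n := by
  refine (M.Q_LS u _ n).uniq ?_
  simpa only [smul_smul] using (M.Q_LS u a n).smul c

theorem T_sub (a b : ℤ → ℂ) (n : ℤ) : M.T u (fun m => a m - b m) n = M.T u a n - M.T u b n := by
  refine (M.T_LS u _ n).uniq ?_
  simpa only [sub_smul] using (M.T_LS u a n).sub (M.T_LS u b n)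

theorem B_sub (a b : ℤ → ℂ) (n : ℤ) : M.B u (fun m => a m - b m) n = M.B u a n - M.B u b n := by
  refine (M.B_LS u _ n).uniq ?_
  simpa only [sub_smul] using (M.B_LS u a n).sub (M.B_LS u b n)

theorem P_sub (a b : ℤ → ℂ) (n : ℤ) : M.P u (fun m => a m - b m) n = M.P u a n - M.P u b n := by
  refine (M.P_LS u _ n).uniq ?_
  simpa only [sub_smul] using (M.P_LS u a n).sub (M.P_LS u b n)

theorem Q_sub (a b : ℤ → ℂ) (n : ℤ) : M.Q u (fun m => a m - b m) n = M.Q u a n - M.Q u b n := by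
  refine (M.Q_LS u _ n).uniq ?_
  simpa only [sub_smul] using (M.Q_LS u a n).sub (M.Q_LS u b n)

theorem E_add (a b a' b' : ℤ → ℂ) (c c' : ℂ) (n : ℤ) :
    M.E u a b c n + M.E u a' b' c' n =
      M.E u (fun m => a m + a' m) (fun m => b m + b' m) (c + c') n := by
  unfold E
  rw [T_add, B_add, add_smul]; abel

theorem E_smul (k : ℂ) (a b : ℤ → ℂ) (c : ℂ) (n : ℤ) :
    k • M.E u a b c n = M.E u (fun m => k * a m) (fun m => k * b m) (k * c) n := by
  unfold E
  rw [T_smul, B_smul, mul_smul, smul_add, smul_add]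

theorem E_const (k : ℂ) (a b : ℤ → ℂ) (c : ℂ) (n : ℤ) :
    M.E u a b c n + k • 1 = M.E u a b (c + k) n := by
  unfold E
  rw [add_smul]; abel

theorem EE (a b a' b' : ℤ → ℂ) (c c' : ℂ) (n p : ℤ) :
    M.E u a b c n * M.E u a' b' c' p - M.E u a' b' c' p * M.E u a b c n =
      M.E u (fun m => a' m * a (m + p) - a' (m + n) * a m)
        (fun m => b' m * b (m + p) - b' (m + n) * b m)
        (deltaZ (n + p) * Sg n (fun m => a' m * a (m - n) - b' m * b (m - n))) (n + p) := by
  have h1 := M.TT u a a' n p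
  have h2 := M.BB u b b' n p
  have h3 := M.TB u a b' n p
  have h4 := M.TB u a' b p n
  unfold E
  rw [T_sub, B_sub, Sg_sub, mul_sub, sub_smul]
  have h5 : ∀ (k : ℂ) (X : Module.End ℂ W), (k • (1 : Module.End ℂ W)) * X
      = X * (k • (1 : Module.End ℂ W)) := by
    intro k X; simp
  have h6 := h5 c (M.T u a' p + M.B u b' p + c' • 1)
  have h7 := h5 c' (M.T u a n + M.B u b n)
  generalize M.T u (fun m => a' m * a (m + p)) (n + p) = Z1 at h1 ⊢
  generalize M.T u (fun m => a' (m + n) * a m) (n + p) = Z2 at h1 ⊢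
  generalize M.B u (fun m => b' m * b (m + p)) (n + p) = Z3 at h2 ⊢
  generalize M.B u (fun m => b' (m + n) * b m) (n + p) = Z4 at h2 ⊢
  generalize c • (1 : Module.End ℂ W) = X at h6 h7 ⊢
  generalize c' • (1 : Module.End ℂ W) = X' at h6 h7 ⊢
  linear_combination (norm := noncomm_ring) h1 + h2 + h3 - h4 + h6 - h7

theorem EP (a b f : ℤ → ℂ) (c : ℂ) (n p : ℤ) :
    M.E u a b c n * M.P u f p - M.P u f p * M.E u a b c n =
      M.P u (fun m => f m * a (m + p) - f (m + n) * b m) (n + p) := by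
  have h1 := M.TP u a f n p
  have h2 := M.BP u b f n p
  unfold E
  rw [P_sub]
  have h5 : ∀ (k : ℂ) (X : Module.End ℂ W), (k • (1 : Module.End ℂ W)) * X
      = X * (k • (1 : Module.End ℂ W)) := by
    intro k X; simp
  linear_combination (norm := noncomm_ring) h1 + h2 + h5 c (M.P u f p)

theorem EQ (a b f : ℤ → ℂ) (c : ℂ) (n p : ℤ) :
    M.E u a b c n * M.Q u f p - M.Q u f p * M.E u a b c n =
      M.Q u (fun m => f m * b (m + p) - f (m + n) * a m) (n + p) := by
  have h1 := M.TQ u a f n p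
  have h2 := M.BQ u b f n p
  unfold E
  rw [Q_sub]
  have h5 : ∀ (k : ℂ) (X : Module.End ℂ W), (k • (1 : Module.End ℂ W)) * X
      = X * (k • (1 : Module.End ℂ W)) := by
    intro k X; simp
  linear_combination (norm := noncomm_ring) h1 + h2 + h5 c (M.Q u f p)

end WeilModule

end Aux

open WeilModule in
/-- For every `λ, μ ∈ ℂ` the operators
`θ(L_n) = Σ_m (−m+μ−nλ+λ)(:τ(u_{m+n})ε(u_m'): + :β(u_{m+n})γ(u_m'):)`,
`θ(H_n) = λ Σ_m :τ(u_m)ε(u_{m+n}'): + (λ−1) Σ_m :β(u_m)γ(u_{m+n}'): + μδ_{n,0}`,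
`θ(G⁺_{n−1/2}) = √2 Σ_m γ(u_{m+n}')τ(u_m)`,
`θ(G⁻_{n+1/2}) = √2 Σ_m (m−μ−(n+1)λ) β(u_{m−n})ε(u_m')` and
`θ(ℒ_n) = −θ(L_{−n}) + ((n+1)/2)θ(H_n)` define a representation of the `N = 2`
superconformal algebra on `W^{∞/2+*}(F_{λ,μ})` with central charge `3 − 6λ`. -/
theorem n2_on_weil_complex_of_Witt_module
    (lam mu : ℂ) (W : Type*) [AddCommGroup W] [Module ℂ W]
    (M : WeilModule PUnit W)
    (ΘL ΘH Θh Θp : ℤ → Module.End ℂ W)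
    -- local finiteness of all the quadratic sums
    (hfinL : ∀ (n : ℤ) (w : W), (Function.support fun m : ℤ =>
        ((-(m : ℂ) + mu - (n : ℂ) * lam + lam) •
          (M.noτε ⟨⟩ ((m + n : ℤ)) ⟨⟩ m + M.noβγ ⟨⟩ ((m + n : ℤ)) ⟨⟩ m)) w).Finite)
    (hfinHτ : ∀ (n : ℤ) (w : W), (Function.support fun m : ℤ => (M.noτε ⟨⟩ m ⟨⟩ ((m + n : ℤ))) w).Finite)
    (hfinHβ : ∀ (n : ℤ) (w : W), (Function.support fun m : ℤ => (M.noβγ ⟨⟩ m ⟨⟩ ((m + n : ℤ))) w).Finite)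
    (hfinh : ∀ (n : ℤ) (w : W), (Function.support fun m : ℤ => (M.γ ⟨⟩ ((m + n : ℤ)) * M.τ ⟨⟩ m) w).Finite)
    (hfinp : ∀ (n : ℤ) (w : W), (Function.support fun m : ℤ =>
        (((m : ℂ) - mu - ((n : ℂ) + 1) * lam) • (M.β ⟨⟩ ((m - n : ℤ)) * M.ε ⟨⟩ m)) w).Finite)
    -- the defining formulas (3.5), (3.6) for the operators
    (hΘL : ∀ (n : ℤ) (w : W), ΘL n w = ∑ᶠ m : ℤ,
        ((-(m : ℂ) + mu - (n : ℂ) * lam + lam) •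
          (M.noτε ⟨⟩ ((m + n : ℤ)) ⟨⟩ m + M.noβγ ⟨⟩ ((m + n : ℤ)) ⟨⟩ m)) w)
    (hΘH : ∀ (n : ℤ) (w : W), ΘH n w = lam • (∑ᶠ m : ℤ, (M.noτε ⟨⟩ m ⟨⟩ ((m + n : ℤ))) w)
        + (lam - 1) • (∑ᶠ m : ℤ, (M.noβγ ⟨⟩ m ⟨⟩ ((m + n : ℤ))) w)
        + (mu * deltaZ n) • w)
    (hΘh : ∀ (n : ℤ) (w : W), Θh n w = ∑ᶠ m : ℤ, (M.γ ⟨⟩ ((m + n : ℤ)) * M.τ ⟨⟩ m) w)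
    (hΘp : ∀ (n : ℤ) (w : W), Θp n w = ∑ᶠ m : ℤ,
        (((m : ℂ) - mu - ((n : ℂ) + 1) * lam) • (M.β ⟨⟩ ((m - n : ℤ)) * M.ε ⟨⟩ m)) w) :
    IsN2RepOn (⊤ : Submodule ℂ W) (3 - 6 * lam)
      (fun n => -ΘL (-n) + (((n : ℂ) + 1) / 2) • ΘH n)
      ΘH
      (fun n => (Real.sqrt 2 : ℂ) • Θh n)
      (fun n => (Real.sqrt 2 : ℂ) • Θp n) := by
  have two : (Real.sqrt 2 : ℂ) * (Real.sqrt 2 : ℂ) = 2 := by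
    rw [← Complex.ofReal_mul, Real.mul_self_sqrt (by norm_num)]; norm_num
  have eH : ∀ n, ΘH n = M.E ⟨⟩ (fun _ => lam) (fun _ => lam - 1) (mu * deltaZ n) (-n) := by
    intro n
    have h1 := M.T_LS ⟨⟩ (fun _ => 1) (-n)
    have h2 := M.B_LS ⟨⟩ (fun _ => 1) (-n)
    have h1' := h1.shift n
    have h2' := h2.shift n
    simp only [one_smul, add_neg_cancel_right] at h1' h2'
    have e1 := M.T_smul ⟨⟩ lam (fun _ => 1) (-n)
    have e2 := M.B_smul ⟨⟩ (lam - 1) (fun _ => 1) (-n)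
    simp only [mul_one] at e1 e2
    ext w
    rw [hΘH, E, e1, e2]
    simp only [LinearMap.add_apply, LinearMap.smul_apply, Module.End.one_apply]
    rw [(h1' w).2, (h2' w).2]
  have eL : ∀ n, ΘL n = M.E ⟨⟩ (fun m => -(m : ℂ) + mu - (n : ℂ) * lam + lam)
      (fun m => -(m : ℂ) + mu - (n : ℂ) * lam + lam) 0 n := by
    intro n
    have h : LS _ (ΘL n) := fun w => ⟨hfinL n w, hΘL n w⟩
    refine h.uniq ?_
    rw [E, zero_smul, add_zero]
    simpa only [smul_add] using (M.T_LS ⟨⟩ (fun m => -(m : ℂ) + mu - (n : ℂ) * lam + lam) n).add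
      (M.B_LS ⟨⟩ (fun m => -(m : ℂ) + mu - (n : ℂ) * lam + lam) n)
  have eP : ∀ n, (Real.sqrt 2 : ℂ) • Θh n = M.P ⟨⟩ (fun _ => (Real.sqrt 2 : ℂ)) (-n) := by
    intro n
    have h : LS _ (Θh n) := fun w => ⟨hfinh n w, hΘh n w⟩
    have h1 := (M.P_LS ⟨⟩ (fun _ => (Real.sqrt 2 : ℂ)) (-n)).shift n
    refine (h.smul _).uniq ?_
    simpa only [M.rel_γτ, add_neg_cancel_right] using h1
  have eQ : ∀ n, (Real.sqrt 2 : ℂ) • Θp n =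
      M.Q ⟨⟩ (fun m => (Real.sqrt 2 : ℂ) * ((m : ℂ) - mu - ((n : ℂ) + 1) * lam)) (-n) := by
    intro n
    have h : LS _ (Θp n) := fun w => ⟨hfinp n w, hΘp n w⟩
    have h1 := (M.Q_LS ⟨⟩
      (fun m => (Real.sqrt 2 : ℂ) * ((m : ℂ) - mu - ((n : ℂ) + 1) * lam)) (-n))
    refine (h.smul _).uniq ?_
    simpa only [smul_smul, sub_eq_add_neg] using h1
  have eLc : ∀ n : ℤ, -ΘL (-n) + (((n : ℂ) + 1) / 2) • ΘH n =
      M.E ⟨⟩ (fun m => (m : ℂ) - mu - ((n : ℂ) + 1) * lam / 2)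
        (fun m => (m : ℂ) - mu - ((n : ℂ) + 1) * (lam + 1) / 2) (mu / 2 * deltaZ n) (-n) := by
    intro n
    rw [eL, eH, ← neg_one_smul ℂ, M.E_smul, M.E_smul, M.E_add]
    congr 1
    · funext m; push_cast; ring
    · funext m; push_cast; ring
    · unfold deltaZ
      split_ifs with h
      · simp [h]; ring
      · simp
  have key : ∀ {A B : Module.End ℂ W}, A = B → ∀ w ∈ (⊤ : Submodule ℂ W), A w = B w := by
    intro A B h w _; rw [h]
  have dneg : ∀ n m : ℤ, deltaZ (-n + -m) = deltaZ (n + m) := by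
    intro n m
    unfold deltaZ
    congr 1
    apply propext
    omega
  have nadd : ∀ n m : ℤ, -(n + m) = -n + -m := by intro n m; ring
  simp only [IsN2RepOn, eLc, eP, eQ]
  simp only [eH]
  refine ⟨?_, ?_, ?_, ?_, ?_, ?_, ?_, ?_, ?_, ?_⟩
  · intro n m w hw
    have : ∀ (A : Module.End ℂ W) (c d : ℂ), c • A w + d • w = (c • A + d • 1) w := by
      intros; simp
    rw [this]
    refine key ?_ w hw
    rw [M.EE, M.E_smul, M.E_const, nadd, dneg]
    congr 1
    · funext k; push_cast; ring
    · funext k; push_cast; ring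
    · by_cases h : n + m = 0
      · obtain rfl : m = -n := by omega
        rw [Sg_lin _ _ 1 ((n + 1) / 2 * (- mu - (1 - n) * lam / 2)
          + (1 - n) / 2 * (n - mu - (n + 1) * lam / 2) - (1 - n) / 2 * ((n + 1) / 2)) ?_]
        · simp [deltaZ]; ring
        · intro k; push_cast; ring
      · simp [deltaZ, h]
  · intro n m w hw
    refine key (B := (-(m : ℂ)) • M.E _ _ _ _ _) ?_ w hw
    rw [M.EE, M.E_smul, nadd, dneg]
    congr 1
    · funext k; push_cast; ring
    · funext k; push_cast; ring
    · by_cases h : n + m = 0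
      · obtain rfl : m = -n := by omega
        rw [Sg_lin _ _ 1 (n - mu - (n+1)/2) ?_]
        · simp [deltaZ]; ring
        · intro k; push_cast; ring
      · simp [deltaZ, h]
  · intro n m w hw
    refine key (B := ((n : ℂ) / 2 - (m : ℂ) + 1 / 2) • M.P _ _ _) ?_ w hw
    rw [M.EP, ← M.P_smul, nadd]
    congr 1
    funext k; push_cast; ring
  · intro n m w hw
    refine key (B := ((n : ℂ) / 2 - (m : ℂ) - 1 / 2) • M.Q _ _ _) ?_ w hw
    rw [M.EQ, ← M.Q_smul, nadd]
    congr 1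
    funext k; push_cast; ring
  · intro n m w hw
    have : ∀ (A A' : Module.End ℂ W) (c c' d : ℂ), c • A w + c' • A' w + d • w
        = (c • A + c' • A' + d • 1) w := by
      intros; simp
    rw [this]
    refine key ?_ w hw
    rw [M.PQ, M.E_smul, M.E_smul, M.E_add, M.E_const, nadd, dneg]
    congr 1
    · funext k; push_cast; linear_combination ((k : ℂ) - mu - ((m : ℂ) + 1) * lam) * two
    · funext k; push_cast; linear_combination ((k : ℂ) - n - mu - ((m : ℂ) + 1) * lam) * two
    · by_cases h : n + m = 0
      · obtain rfl : m = -n := by omega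
        rw [Sg_lin _ _ 2 (2 * (- mu - (-n+1)*lam)) ?_]
        · simp [deltaZ]; ring
        · intro k; push_cast; linear_combination ((k : ℂ) - mu - (-(n : ℂ) + 1) * lam) * two
      · simp [deltaZ, h]
  · intro n m w hw
    exact key (M.PP _ _ _ _ _) w hw
  · intro n m w hw
    exact key (M.QQ _ _ _ _ _) w hw
  · intro n m w hw
    have : ∀ (d : ℂ), d • w = (d • (1 : Module.End ℂ W)) w := by
      intros; simp
    rw [this]
    refine key ?_ w hw
    have z : ∀ d : ℂ, d • (1 : Module.End ℂ W) = M.E ⟨⟩ (fun _ => 0) (fun _ => 0) d (-n + -m) := by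
      intro d
      have e1 := M.T_smul ⟨⟩ 0 (fun _ => 0) (-n + -m)
      have e2 := M.B_smul ⟨⟩ 0 (fun _ => 0) (-n + -m)
      simp only [mul_zero, zero_smul] at e1 e2
      simp [WeilModule.E, e1, e2]
    rw [M.EE, z, dneg]
    congr 1
    · funext k; ring
    · funext k; ring
    · rw [Sg_lin _ _ 0 (2 * lam - 1) (by intro k; ring)]
      push_cast; ring
  · intro n m w hw
    refine key (B := M.P _ _ _) ?_ w hw
    rw [M.EP, nadd]
    congr 1
    funext k; ring
  · intro n m w hw
    refine key (B := -M.Q _ _ _) ?_ w hw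
    rw [M.EQ, ← neg_one_smul ℂ (M.Q _ _ _), ← M.Q_smul, nadd]
    congr 1
    funext k; push_cast; ring
end
end

section
/- Let α ∈ ℤ. The Lie superalgebra of exterior derivations Der_ext S'(2,α) = Der S'(2,α)/Inn S'(2,α) is purely even and isomorphic to 𝔰𝔩(2,ℂ): it is spanned by the classes of three even derivations 𝖤, 𝖧, 𝖥 of S'(2,α) satisfying [𝖧,𝖤] = 2𝖤, [𝖧,𝖥] = −2𝖥, [𝖤,𝖥] = 𝖧 modulo inner derivations, whose action on the odd basis elements is 𝖤(𝔥_k^α) = 𝔵_{k−1+α}, 𝖤(𝔶_k^α) = 𝔭_{k−1+α}, 𝖥(𝔵_k) = 𝔥_{k+1−α}^α, 𝖥(𝔭_k) = 𝔶_{k+1−α}^α, 𝖧(𝔵_k) = 𝔵_k, 𝖧(𝔥_k^α) = −𝔥_k^α, 𝖧(𝔭_k) = 𝔭_k, 𝖧(𝔶_k^α) = −𝔶_k^α. -/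
noncomputable section

/-- The Laurent polynomial ring `ℂ[t,t⁻¹]`, as the space of finitely supported
functions `ℤ →₀ ℂ` (the function `f` represents `Σ_n f(n)tⁿ`). -/
abbrev Lau : Type := ℤ →₀ ℂ

/-- The supercommutative superalgebra `A = ℂ[t,t⁻¹] ⊗ Λ(θ₁,θ₂)`, an element
`(a,b,c,d)` representing `a + bθ₁ + cθ₂ + dθ₁θ₂`. -/
abbrev GA : Type := Lau × Lau × Lau × Lau

/-- The derivative `∂_t` on `ℂ[t,t⁻¹]`: `tⁿ ↦ n tⁿ⁻¹`. -/
def tder : Lau →ₗ[ℂ] Lau :=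
  Finsupp.lsum ℂ fun n => (n : ℂ) • Finsupp.lsingle (n - 1)

/-- Multiplication by `t^k` on `ℂ[t,t⁻¹]`. -/
def tshift (k : ℤ) : Lau →ₗ[ℂ] Lau := Finsupp.lmapDomain ℂ ℂ (· + k)

/-- Components of `A`. -/
def pr0 : GA →ₗ[ℂ] Lau := LinearMap.fst ℂ Lau (Lau × Lau × Lau)
def pr1 : GA →ₗ[ℂ] Lau :=
  (LinearMap.fst ℂ Lau (Lau × Lau)).comp (LinearMap.snd ℂ Lau (Lau × Lau × Lau))
def pr2 : GA →ₗ[ℂ] Lau :=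
  ((LinearMap.fst ℂ Lau Lau).comp (LinearMap.snd ℂ Lau (Lau × Lau))).comp
    (LinearMap.snd ℂ Lau (Lau × Lau × Lau))
def pr3 : GA →ₗ[ℂ] Lau :=
  ((LinearMap.snd ℂ Lau Lau).comp (LinearMap.snd ℂ Lau (Lau × Lau))).comp
    (LinearMap.snd ℂ Lau (Lau × Lau × Lau))

/-- Build an endomorphism of `A` from its four components. -/
def mk4 (f0 f1 f2 f3 : GA →ₗ[ℂ] Lau) : Module.End ℂ GA :=
  f0.prod (f1.prod (f2.prod f3))

/-- The even derivation `∂_t` of `A`. -/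
def Dt : Module.End ℂ GA :=
  mk4 (tder.comp pr0) (tder.comp pr1) (tder.comp pr2) (tder.comp pr3)

/-- The odd (left) derivation `∂₁ = ∂/∂θ₁` of `A`. -/
def Dθ1 : Module.End ℂ GA := mk4 pr1 0 pr3 0

/-- The odd (left) derivation `∂₂ = ∂/∂θ₂` of `A`. -/
def Dθ2 : Module.End ℂ GA := mk4 pr2 (-pr3) 0 0

/-- Multiplication by `θ₁` on `A`. -/
def Mθ1 : Module.End ℂ GA := mk4 0 pr0 0 pr2

/-- Multiplication by `θ₂` on `A`. -/
def Mθ2 : Module.End ℂ GA := mk4 0 0 pr0 (-pr1)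

/-- Multiplication by `t^k` on `A`. -/
def Mt (k : ℤ) : Module.End ℂ GA :=
  mk4 ((tshift k).comp pr0) ((tshift k).comp pr1) ((tshift k).comp pr2) ((tshift k).comp pr3)

/-- `ℒ_n^α = −tⁿ(t∂_t + (1/2)(n+α+1)(θ₁∂₁ + θ₂∂₂))`. -/
def Lop (α : ℂ) (n : ℤ) : Module.End ℂ GA :=
  -(Mt (n + 1) * Dt + (((n : ℂ) + α + 1) / 2) • (Mt n * (Mθ1 * Dθ1 + Mθ2 * Dθ2)))

/-- `E_n = tⁿθ₂∂₁`. -/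
def Eop (n : ℤ) : Module.End ℂ GA := Mt n * Mθ2 * Dθ1

/-- `H_n = tⁿ(θ₂∂₂ − θ₁∂₁)`. -/
def Hop (n : ℤ) : Module.End ℂ GA := Mt n * Mθ2 * Dθ2 - Mt n * Mθ1 * Dθ1

/-- `F_n = tⁿθ₁∂₂`. -/
def Fop (n : ℤ) : Module.End ℂ GA := Mt n * Mθ1 * Dθ2

/-- `𝔥_n^α = tⁿθ₂∂_t − (n+α)tⁿ⁻¹θ₁θ₂∂₁`. -/
def hop (α : ℂ) (n : ℤ) : Module.End ℂ GA :=
  Mt n * Mθ2 * Dt - ((n : ℂ) + α) • (Mt (n - 1) * Mθ1 * Mθ2 * Dθ1)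

/-- `𝔭_n = −tⁿ⁺¹∂₂`. -/
def pop (n : ℤ) : Module.End ℂ GA := -(Mt (n + 1) * Dθ2)

/-- `𝔵_n = tⁿ⁺¹∂₁`. -/
def xop (n : ℤ) : Module.End ℂ GA := Mt (n + 1) * Dθ1

/-- `𝔶_n^α = tⁿθ₁∂_t + (n+α)tⁿ⁻¹θ₁θ₂∂₂`. -/
def yop (α : ℂ) (n : ℤ) : Module.End ℂ GA :=
  Mt n * Mθ1 * Dt + ((n : ℂ) + α) • (Mt (n - 1) * Mθ1 * Mθ2 * Dθ2)

/-- The parity involution of `A = ℂ[t,t⁻¹] ⊗ Λ(θ₁,θ₂)` (identity on the even part,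
`−1` on the odd part). -/
def sigmaGA : Module.End ℂ GA := mk4 pr0 (-pr1) (-pr2) pr3

/-- The supercommutator on `End(A)`, extended bilinearly from homogeneous elements
(for homogeneous `x, y` it equals `x∘y − (−1)^{p(x)p(y)} y∘x`, parity being measured
by conjugation by the parity involution). -/
def sbr (x y : Module.End ℂ GA) : Module.End ℂ GA :=
  x * y - ((1 : ℂ) / 2) • ((y + sigmaGA * y * sigmaGA) * x)
    - ((1 : ℂ) / 2) • ((y - sigmaGA * y * sigmaGA) * (sigmaGA * x * sigmaGA))

/-- The generating set of the superalgebra `S'(2,α) ⊆ W(2)`: all the basis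
elements `ℒ_n^α, E_n, H_n, F_n, 𝔥_n^α, 𝔭_n, 𝔵_n, 𝔶_n^α`. -/
def s2Gen (α : ℂ) : Set (Module.End ℂ GA) :=
  {e | ∃ n : ℤ, e = Lop α n ∨ e = Eop n ∨ e = Hop n ∨ e = Fop n ∨
    e = hop α n ∨ e = pop n ∨ e = xop n ∨ e = yop α n}

/-- The superalgebra `S'(2,α)`, as the span of its basis inside `W(2) ⊆ End(A)`. -/
def s2Span (α : ℂ) : Submodule ℂ (Module.End ℂ GA) := Submodule.span ℂ (s2Gen α)

/-- `D` is an even derivation of `S'(2,α)`: it preserves parity and satisfies the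
Leibniz rule `D[x,y] = [Dx,y] + [x,Dy]`. -/
def IsEvenDer (α : ℂ) (D : ↥(s2Span α) →ₗ[ℂ] ↥(s2Span α)) : Prop :=
  (∀ x z : ↥(s2Span α), (z : Module.End ℂ GA) = sigmaGA * (x : Module.End ℂ GA) * sigmaGA →
    ((D z : Module.End ℂ GA)) = sigmaGA * (D x : Module.End ℂ GA) * sigmaGA) ∧
  (∀ x y z : ↥(s2Span α),
    (z : Module.End ℂ GA) = sbr (x : Module.End ℂ GA) (y : Module.End ℂ GA) →
    ((D z : Module.End ℂ GA)) = sbr (D x : Module.End ℂ GA) (y : Module.End ℂ GA)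
      + sbr (x : Module.End ℂ GA) (D y : Module.End ℂ GA))

/-- `D` is an odd derivation of `S'(2,α)`: it reverses parity and satisfies the
Leibniz rule `D[x,y] = [Dx,y] + (−1)^{p(x)}[x,Dy]`. -/
def IsOddDer (α : ℂ) (D : ↥(s2Span α) →ₗ[ℂ] ↥(s2Span α)) : Prop :=
  (∀ x z : ↥(s2Span α), (z : Module.End ℂ GA) = sigmaGA * (x : Module.End ℂ GA) * sigmaGA →
    ((D z : Module.End ℂ GA)) = -(sigmaGA * (D x : Module.End ℂ GA) * sigmaGA)) ∧
  (∀ x y z : ↥(s2Span α),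
    (z : Module.End ℂ GA) = sbr (x : Module.End ℂ GA) (y : Module.End ℂ GA) →
    ((D z : Module.End ℂ GA)) = sbr (D x : Module.End ℂ GA) (y : Module.End ℂ GA)
      + sbr (sigmaGA * (x : Module.End ℂ GA) * sigmaGA) (D y : Module.End ℂ GA))

/-- `D` is a superderivation of `S'(2,α)`: a sum of an even and an odd derivation. -/
def IsSuperDer (α : ℂ) (D : ↥(s2Span α) →ₗ[ℂ] ↥(s2Span α)) : Prop :=
  ∃ De Do, D = De + Do ∧ IsEvenDer α De ∧ IsOddDer α Do

/-- `D` is an inner derivation of `S'(2,α)`: `D = ad s` for some `s ∈ S'(2,α)`. -/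
def IsInnerDer (α : ℂ) (D : ↥(s2Span α) →ₗ[ℂ] ↥(s2Span α)) : Prop :=
  ∃ s : ↥(s2Span α), ∀ x : ↥(s2Span α),
    ((D x : Module.End ℂ GA)) = sbr (s : Module.End ℂ GA) (x : Module.End ℂ GA)

set_option linter.unusedSimpArgs false
set_option linter.all false
namespace S2

inductive Kd | L | E | H | F | h | y | x | p
  deriving DecidableEq

open Kd

abbrev V : Type := (Kd × ℤ) →₀ ℂ

def e (k : Kd) (n : ℤ) : V := Finsupp.single (k, n) 1

def bas (a : ℤ) : Kd → ℤ → Module.End ℂ GA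
  | L, n => Lop (a : ℂ) n
  | E, n => Eop n
  | H, n => Hop n
  | F, n => Fop n
  | h, n => hop (a : ℂ) n
  | y, n => yop (a : ℂ) n
  | x, n => xop (n - 1 + a)
  | p, n => pop (n - 1 + a)

/-- the table of brackets -/
def tb (a : ℤ) : Kd → ℤ → Kd → ℤ → V
  | L, n, L, m => ((n : ℂ) - m) • e L (n + m)
  | L, n, E, m => (-(m : ℂ)) • e E (n + m)
  | L, n, H, m => (-(m : ℂ)) • e H (n + m)
  | L, n, F, m => (-(m : ℂ)) • e F (n + m)
  | E, n, L, m => (n : ℂ) • e E (n + m)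
  | H, n, L, m => (n : ℂ) • e H (n + m)
  | F, n, L, m => (n : ℂ) • e F (n + m)
  | L, n, k, m => ((n : ℂ) / 2 - m + (1 - a) / 2) • e k (n + m)
  | k, n, L, m => (-((m : ℂ) / 2 - n + (1 - a) / 2)) • e k (n + m)
  | H, n, E, m => (2 : ℂ) • e E (n + m)
  | E, n, H, m => (-2 : ℂ) • e E (n + m)
  | H, n, F, m => (-2 : ℂ) • e F (n + m)
  | F, n, H, m => (2 : ℂ) • e F (n + m)
  | E, n, F, m => e H (n + m)
  | F, n, E, m => (-1 : ℂ) • e H (n + m)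
  | H, n, h, m => e h (n + m)
  | H, n, x, m => e x (n + m)
  | H, n, y, m => (-1 : ℂ) • e y (n + m)
  | H, n, p, m => (-1 : ℂ) • e p (n + m)
  | h, n, H, m => (-1 : ℂ) • e h (n + m)
  | x, n, H, m => (-1 : ℂ) • e x (n + m)
  | y, n, H, m => e y (n + m)
  | p, n, H, m => e p (n + m)
  | E, n, y, m => e h (n + m)
  | E, n, p, m => e x (n + m)
  | F, n, h, m => e y (n + m)
  | F, n, x, m => e p (n + m)
  | y, n, E, m => (-1 : ℂ) • e h (n + m)
  | p, n, E, m => (-1 : ℂ) • e x (n + m)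
  | h, n, F, m => (-1 : ℂ) • e y (n + m)
  | x, n, F, m => (-1 : ℂ) • e p (n + m)
  | x, n, h, m => ((n : ℂ) - m) • e E (n + m + (a - 1))
  | h, n, x, m => ((m : ℂ) - n) • e E (n + m + (a - 1))
  | p, n, y, m => ((m : ℂ) - n) • e F (n + m + (a - 1))
  | y, n, p, m => ((n : ℂ) - m) • e F (n + m + (a - 1))
  | x, n, y, m => (-1 : ℂ) • e L (n + m + (a - 1)) + (((m : ℂ) - n) / 2) • e H (n + m + (a - 1))
  | y, n, x, m => (-1 : ℂ) • e L (n + m + (a - 1)) + (((n : ℂ) - m) / 2) • e H (n + m + (a - 1))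
  | p, n, h, m => e L (n + m + (a - 1)) + (((m : ℂ) - n) / 2) • e H (n + m + (a - 1))
  | h, n, p, m => e L (n + m + (a - 1)) + (((n : ℂ) - m) / 2) • e H (n + m + (a - 1))
  | _, _, _, _ => 0

def φ (a : ℤ) : V →ₗ[ℂ] Module.End ℂ GA :=
  Finsupp.linearCombination ℂ (fun i : Kd × ℤ => bas a i.1 i.2)

@[simp] lemma φ_e (a : ℤ) (k n) : φ a (e k n) = bas a k n := by
  simp [φ, e]

lemma tshift_apply (k : ℤ) (u : Lau) (j : ℤ) : tshift k u j = u (j - k) := by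
  have : j = (j - k) + k := by ring
  conv_lhs => rw [this]
  exact Finsupp.mapDomain_apply (add_left_injective k) u (j - k)

lemma tder_apply (u : Lau) (j : ℤ) : tder u j = ((j : ℂ) + 1) * u (j + 1) := by
  induction u using Finsupp.induction_linear with
  | zero => simp
  | add f g hf hg => simp [hf, hg, mul_add]
  | single n c =>
    simp only [tder, Finsupp.lsum_single, LinearMap.smul_apply, Finsupp.lsingle_apply,
      Finsupp.smul_apply, Finsupp.single_apply, smul_eq_mul]
    by_cases hn : n = j + 1
    · subst hn; simp
    · rw [if_neg (by omega), if_neg hn]; simp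

lemma L_app (α : ℂ) (n : ℤ) (u0 u1 u2 u3 : Lau) : Lop α n (u0, u1, u2, u3) =
    (-tshift (n+1) (tder u0), -tshift (n+1) (tder u1) - ((n + α + 1) / 2) • tshift n u1,
      -tshift (n+1) (tder u2) - ((n + α + 1) / 2) • tshift n u2,
      -tshift (n+1) (tder u3) - (n + α + 1) • tshift n u3) := by
  simp [Lop, mk4, Mt, Dt, Mθ1, Mθ2, Dθ1, Dθ2, pr0, pr1, pr2, pr3]
  refine ⟨?_, ?_, ?_⟩ <;> module

lemma E_app (n : ℤ) (u0 u1 u2 u3 : Lau) : Eop n (u0, u1, u2, u3) =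
    (0, 0, tshift n u1, 0) := by
  simp [Eop, mk4, Mt, Dt, Mθ1, Mθ2, Dθ1, Dθ2, pr0, pr1, pr2, pr3]

lemma F_app (n : ℤ) (u0 u1 u2 u3 : Lau) : Fop n (u0, u1, u2, u3) =
    (0, tshift n u2, 0, 0) := by
  simp [Fop, mk4, Mt, Dt, Mθ1, Mθ2, Dθ1, Dθ2, pr0, pr1, pr2, pr3]

lemma H_app (n : ℤ) (u0 u1 u2 u3 : Lau) : Hop n (u0, u1, u2, u3) =
    (0, -tshift n u1, tshift n u2, 0) := by
  simp [Hop, mk4, Mt, Dt, Mθ1, Mθ2, Dθ1, Dθ2, pr0, pr1, pr2, pr3]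

lemma x_app (n : ℤ) (u0 u1 u2 u3 : Lau) : xop n (u0, u1, u2, u3) =
    (tshift (n+1) u1, 0, tshift (n+1) u3, 0) := by
  simp [xop, mk4, Mt, Dt, Mθ1, Mθ2, Dθ1, Dθ2, pr0, pr1, pr2, pr3]

lemma p_app (n : ℤ) (u0 u1 u2 u3 : Lau) : pop n (u0, u1, u2, u3) =
    (-tshift (n+1) u2, tshift (n+1) u3, 0, 0) := by
  simp [pop, mk4, Mt, Dt, Mθ1, Mθ2, Dθ1, Dθ2, pr0, pr1, pr2, pr3]

lemma h_app (α : ℂ) (n : ℤ) (u0 u1 u2 u3 : Lau) : hop α n (u0, u1, u2, u3) =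
    (0, 0, tshift n (tder u0), -tshift n (tder u1) - (n + α) • tshift (n-1) u1) := by
  simp [hop, mk4, Mt, Dt, Mθ1, Mθ2, Dθ1, Dθ2, pr0, pr1, pr2, pr3]

lemma y_app (α : ℂ) (n : ℤ) (u0 u1 u2 u3 : Lau) : yop α n (u0, u1, u2, u3) =
    (0, tshift n (tder u0), 0, tshift n (tder u2) + (n + α) • tshift (n-1) u2) := by
  simp [yop, mk4, Mt, Dt, Mθ1, Mθ2, Dθ1, Dθ2, pr0, pr1, pr2, pr3]

lemma s_app (u0 u1 u2 u3 : Lau) : sigmaGA (u0, u1, u2, u3) = (u0, -u1, -u2, u3) := by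
  simp [sigmaGA, mk4, pr0, pr1, pr2, pr3]

def sg : Kd → ℂ
  | L => 1 | E => 1 | H => 1 | F => 1 | h => -1 | y => -1 | x => -1 | p => -1

lemma conj_bas (a : ℤ) (k n) : sigmaGA * bas a k n * sigmaGA = sg k • bas a k n := by
  refine LinearMap.ext fun u => ?_
  obtain ⟨u0, u1, u2, u3⟩ := u
  cases k <;>
  simp [bas, sg, s_app, L_app, E_app, F_app, H_app, x_app, p_app, h_app, y_app] <;> 
  try (first | module | (constructor <;> module))

section gen
variable {A : Type*} [Ring A] [Algebra ℂ A]

def gbr (s x y : A) : A :=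
  x * y - ((1 : ℂ) / 2) • ((y + s * y * s) * x)
    - ((1 : ℂ) / 2) • ((y - s * y * s) * (s * x * s))

lemma gbr_ev (s x y : A) (hy : s * y * s = y) : gbr s x y = x * y - y * x := by
  simp only [gbr, hy, sub_self, zero_mul, smul_zero, sub_zero]
  rw [← two_smul ℂ y, smul_mul_assoc, smul_smul]; norm_num

lemma gbr_odd (c : ℂ) (s x y : A) (hy : s * y * s = -y) (hx : s * x * s = c • x) :
    gbr s x y = x * y - c • (y * x) := by
  simp only [gbr, hy, hx, add_neg_cancel, zero_mul, smul_zero, sub_zero, sub_neg_eq_add]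
  rw [← two_smul ℂ y, smul_mul_assoc, smul_smul, mul_smul_comm]; norm_num

lemma gbr_ev_left (s u y : A) (hu : s * u * s = u) : gbr s u y = u * y - y * u := by
  simp only [gbr, hu, add_mul, sub_mul]
  module

lemma gbr_jac (s u x y : A) (hs : s * s = 1) (hu : s * u * s = u) :
    gbr s u (gbr s x y) = gbr s (gbr s u x) y + gbr s x (gbr s u y) := by
  have hsu : s * u = u * s := by
    calc s * u = s * u * (s * s) := by rw [hs, mul_one]
      _ = (s * u * s) * s := by noncomm_ring
      _ = u * s := by rw [hu]
  have hc : ∀ z : A, s * (u * z - z * u) * s = u * (s * z * s) - (s * z * s) * u := by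
    intro z
    calc s * (u * z - z * u) * s = (s * u) * z * s - s * z * (u * s) := by noncomm_ring
      _ = (u * s) * z * s - s * z * (s * u) := by rw [hsu]
      _ = _ := by noncomm_ring
  rw [gbr_ev_left _ _ _ hu, gbr_ev_left _ _ _ hu, gbr_ev_left _ _ _ hu]
  simp only [gbr, hc]
  generalize s * x * s = x'
  generalize s * y * s = y'
  simp only [mul_add, add_mul, mul_sub, sub_mul, smul_add, smul_sub, smul_mul_assoc,
    mul_smul_comm, mul_assoc]
  module

lemma gbr_add_left (s x x' y : A) : gbr s (x + x') y = gbr s x y + gbr s x' y := by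
  simp only [gbr, mul_add, add_mul, sub_mul, smul_add, smul_sub]; module
lemma gbr_add_right (s x y y' : A) : gbr s x (y + y') = gbr s x y + gbr s x y' := by
  simp only [gbr, mul_add, add_mul, sub_mul, smul_add, smul_sub]; module
lemma gbr_smul_left (s : A) (c : ℂ) (x y : A) : gbr s (c • x) y = c • gbr s x y := by
  simp only [gbr, smul_mul_assoc, mul_smul_comm, smul_sub, smul_comm c]
lemma gbr_smul_right (s : A) (c : ℂ) (x y : A) : gbr s x (c • y) = c • gbr s x y := by
  simp only [gbr, smul_mul_assoc, mul_smul_comm, smul_sub, add_mul, sub_mul, smul_add]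
  module
lemma gconj_odd (z : A) : (-1 : ℂ) • z = -z := by simp
end gen

lemma sbr_eq (X Y : Module.End ℂ GA) : sbr X Y = gbr sigmaGA X Y := rfl

def sbrL : Module.End ℂ GA →ₗ[ℂ] Module.End ℂ GA →ₗ[ℂ] Module.End ℂ GA :=
  LinearMap.mk₂ ℂ sbr (fun x x' z => gbr_add_left sigmaGA x x' z)
    (fun c x z => gbr_smul_left sigmaGA c x z)
    (fun x z z' => gbr_add_right sigmaGA x z z')
    (fun c x z => gbr_smul_right sigmaGA c x z)

lemma sbr_ev (X Y : Module.End ℂ GA) (hY : sigmaGA * Y * sigmaGA = Y) :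
    sbr X Y = X * Y - Y * X := gbr_ev sigmaGA X Y hY

lemma sbr_odd (c : ℂ) (X Y : Module.End ℂ GA) (hY : sigmaGA * Y * sigmaGA = -Y)
    (hX : sigmaGA * X * sigmaGA = c • X) :
    sbr X Y = X * Y - c • (Y * X) := gbr_odd c sigmaGA X Y hY hX

lemma sig_sq : sigmaGA * sigmaGA = 1 := by
  refine LinearMap.ext fun u => ?_
  obtain ⟨u0, u1, u2, u3⟩ := u
  simp [s_app]

lemma sbr_jac (u X Y : Module.End ℂ GA) (hu : sigmaGA * u * sigmaGA = u) :
    sbr u (sbr X Y) = sbr (sbr u X) Y + sbr X (sbr u Y) :=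
  gbr_jac sigmaGA u X Y sig_sq hu

lemma sbr_bas1 (a : ℤ) (k n l m) (hl : sg l = 1) : sbr (bas a k n) (bas a l m) = 
    bas a k n * bas a l m - bas a l m * bas a k n := 
  sbr_ev _ _ (by simp [conj_bas, hl])
lemma sbr_bas2 (a : ℤ) (k n l m) (hl : sg l = -1) : sbr (bas a k n) (bas a l m) = 
    bas a k n * bas a l m - sg k • (bas a l m * bas a k n) := 
  sbr_odd _ _ _ (by rw [conj_bas, hl]; exact gconj_odd (bas a l m)) (conj_bas _ _ _)

set_option maxHeartbeats 4000000 in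
lemma sbr_bas (a : ℤ) (k n l m) : sbr (bas a k n) (bas a l m) = φ a (tb a k n l m) := by
  have key : sbr (bas a k n) (bas a l m) = 
      bas a k n * bas a l m - (if sg l = 1 then 1 else sg k) • (bas a l m * bas a k n) := by
    by_cases hl : sg l = 1
    · rw [sbr_bas1 _ _ _ _ _ hl]; simp [hl]
    · rw [sbr_bas2 _ _ _ _ _ (by cases l <;> simp_all [sg])]; simp [hl]
  rw [key]
  refine LinearMap.ext fun u => ?_
  obtain ⟨u0, u1, u2, u3⟩ := u
  have h1 : ¬ ((-1 : ℂ) = 1) := by norm_num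
  cases k <;> cases l <;>
  simp only [tb, sg, h1, if_true, if_false, map_add, map_smul, map_zero, φ_e, bas, LinearMap.sub_apply,
    LinearMap.add_apply, LinearMap.smul_apply, Module.End.mul_apply, LinearMap.zero_apply,
    s_app, L_app, E_app, F_app, H_app, x_app, p_app, h_app, y_app, Prod.smul_mk, 
    Prod.mk_add_mk, Prod.mk_sub_mk, Prod.mk.injEq, Prod.mk_eq_zero] <;>
  (refine ⟨?_, ?_, ?_, ?_⟩ <;> (first | (simp; done) | (
    ext j
    simp only [Finsupp.add_apply, Finsupp.sub_apply, Finsupp.neg_apply, Finsupp.smul_apply, 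
      Finsupp.zero_apply, tshift_apply, tder_apply, smul_eq_mul]
    push_cast
    ring_nf)))

def fn (v : GA) (P : GA →ₗ[ℂ] Lau) (j : ℤ) : Module.End ℂ GA →ₗ[ℂ] ℂ :=
  ((Finsupp.lapply j).comp P).comp (LinearMap.applyₗ v)

lemma fn_apply (v : GA) (P : GA →ₗ[ℂ] Lau) (j : ℤ) (X : Module.End ℂ GA) :
    fn v P j X = P (X v) j := rfl

def co (a : ℤ) : Kd → ℤ → Module.End ℂ GA →ₗ[ℂ] ℂ
  | L, n => -fn (Finsupp.single 1 1, 0, 0, 0) pr0 (n + 1)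
  | h, n => fn (Finsupp.single 1 1, 0, 0, 0) pr2 n
  | y, n => fn (Finsupp.single 1 1, 0, 0, 0) pr1 n
  | E, n => fn (0, Finsupp.single 0 1, 0, 0) pr2 n
  | F, n => fn (0, 0, Finsupp.single 0 1, 0) pr1 n
  | x, n => fn (0, Finsupp.single 0 1, 0, 0) pr0 (n + a)
  | p, n => -fn (0, 0, Finsupp.single 0 1, 0) pr0 (n + a)
  | H, n => -fn (0, Finsupp.single 0 1, 0, 0) pr1 n
      + (((n : ℂ) + a + 1) / 2) • fn (Finsupp.single 1 1, 0, 0, 0) pr0 (n + 1)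

lemma co_bas (a : ℤ) (k n l m) : co a k n (bas a l m) = if l = k ∧ m = n then 1 else 0 := by
  have e1 : ∀ j : ℤ, j = 0 → (j : ℂ) = 0 := by intro j hj; simp [hj]
  have e2 : ∀ u v : ℤ, (u - v = 0) ↔ v = u := by intro u v; omega
  have e3 : ∀ u v : ℤ, (0 = u - v) ↔ v = u := by intro u v; omega
  have e4 : ∀ u v : ℤ, (1 = u - v + 1) ↔ v = u := by intro u v; omega
  cases k <;> cases l <;>
  simp [co, bas, fn_apply, L_app, E_app, F_app, H_app, x_app, p_app, h_app, y_app, pr0, pr1, pr2,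
    tshift_apply, tder_apply, Finsupp.single_apply, e3, e4] <;>
  by_cases hm : m = n <;> simp [hm] <;> (first | omega | (intro hh; omega))

lemma co_φ (a : ℤ) (c : V) (i : Kd × ℤ) : co a i.1 i.2 (φ a c) = c i := by
  have : (co a i.1 i.2).comp (φ a) = Finsupp.lapply i := by
    refine Finsupp.lhom_ext' fun j => LinearMap.ext_ring ?_
    obtain ⟨l, m⟩ := j
    obtain ⟨k, n⟩ := i
    have := φ_e a l m
    rw [e] at this
    simp [this, co_bas, Finsupp.single_apply]
  exact LinearMap.congr_fun this c

lemma φ_inj (a : ℤ) : Function.Injective (φ a) := by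
  intro c d hcd
  ext i
  rw [← co_φ a c, hcd, co_φ]

lemma bas_mem (a : ℤ) (k n) : bas a k n ∈ s2Span (a : ℂ) := by
  apply Submodule.subset_span
  cases k
  · exact ⟨n, by simp [bas]⟩
  · exact ⟨n, by simp [bas]⟩
  · exact ⟨n, by simp [bas]⟩
  · exact ⟨n, by simp [bas]⟩
  · exact ⟨n, by simp [bas]⟩
  · exact ⟨n, by simp [bas]⟩
  · exact ⟨n - 1 + a, by simp [bas]⟩
  · exact ⟨n - 1 + a, by simp [bas]⟩

lemma range_φ (a : ℤ) : LinearMap.range (φ a) = s2Span (a : ℂ) := by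
  rw [φ, Finsupp.range_linearCombination]
  apply le_antisymm
  · rw [Submodule.span_le]
    rintro _ ⟨⟨k, n⟩, rfl⟩
    exact bas_mem a k n
  · apply Submodule.span_mono
    rintro _ ⟨n, rfl | rfl | rfl | rfl | rfl | rfl | rfl | rfl⟩
    · exact ⟨(L, n), rfl⟩
    · exact ⟨(E, n), rfl⟩
    · exact ⟨(H, n), rfl⟩
    · exact ⟨(F, n), rfl⟩
    · exact ⟨(h, n), rfl⟩
    · exact ⟨(p, n + 1 - a), by simp only [bas]; congr 1; ring⟩
    · exact ⟨(x, n + 1 - a), by simp only [bas]; congr 1; ring⟩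
    · exact ⟨(y, n), rfl⟩

def Ψ (a : ℤ) : V ≃ₗ[ℂ] ↥(s2Span (a : ℂ)) :=
  (LinearEquiv.ofInjective (φ a) (φ_inj a)).trans (LinearEquiv.ofEq _ _ (range_φ a))

lemma Ψ_coe (a : ℤ) (v : V) : ((Ψ a v : ↥(s2Span (a : ℂ))) : Module.End ℂ GA) = φ a v := rfl

def lft {M : Type*} [AddCommMonoid M] [Module ℂ M] (f : Kd → ℤ → M) : V →ₗ[ℂ] M :=
  Finsupp.linearCombination ℂ (fun i : Kd × ℤ => f i.1 i.2)

lemma lft_e {M : Type*} [AddCommMonoid M] [Module ℂ M] (f : Kd → ℤ → M) (k n) :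
    lft f (e k n) = f k n := by simp [lft, e]

lemma hext {M : Type*} [AddCommMonoid M] [Module ℂ M] {f g : V →ₗ[ℂ] M}
    (hfg : ∀ k n, f (e k n) = g (e k n)) : f = g := by
  refine Finsupp.lhom_ext' fun j => LinearMap.ext_ring ?_
  exact hfg j.1 j.2

def br (a : ℤ) : V →ₗ[ℂ] V →ₗ[ℂ] V := lft fun k n => lft fun l m => tb a k n l m

lemma br_e (a : ℤ) (k n l m) : br a (e k n) (e l m) = tb a k n l m := by
  simp [br, lft_e]

def par : V →ₗ[ℂ] V := lft fun k n => sg k • e k n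

lemma par_e (k n) : par (e k n) = sg k • e k n := by simp [par, lft_e]

lemma φ_br (a : ℤ) (u v : V) : φ a (br a u v) = sbr (φ a u) (φ a v) := by
  have : (br a).compr₂ (φ a) = sbrL.compl₁₂ (φ a) (φ a) := by
    apply hext
    intro k n
    apply hext
    intro l m
    simp only [LinearMap.compr₂_apply, LinearMap.compl₁₂_apply, br_e, φ_e]
    exact (sbr_bas a k n l m).symm
  exact LinearMap.congr_fun (LinearMap.congr_fun this u) v

def cj : Module.End ℂ GA →ₗ[ℂ] Module.End ℂ GA :=
  (LinearMap.mulLeft ℂ sigmaGA).comp (LinearMap.mulRight ℂ sigmaGA)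

lemma φ_par (a : ℤ) (u : V) : φ a (par u) = sigmaGA * φ a u * sigmaGA := by
  have : (φ a).comp par = cj.comp (φ a) := by
    apply hext
    intro k n
    simp [par_e, cj, ← conj_bas, mul_assoc]
  have := LinearMap.congr_fun this u
  simpa [cj, mul_assoc] using this

lemma br_jac (a : ℤ) (u v w : V) (hu : par u = u) :
    br a u (br a v w) = br a (br a u v) w + br a v (br a u w) := by
  apply φ_inj a
  rw [map_add]
  simp only [φ_br]
  exact sbr_jac _ _ _ (by rw [← φ_par, hu])

lemma par_apply (u : V) (i) : par u i = sg i.1 * u i := by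
  have : (Finsupp.lapply i).comp par = sg i.1 • (Finsupp.lapply i : V →ₗ[ℂ] ℂ) := by
    apply hext
    intro k n
    obtain ⟨l, m⟩ := i
    simp only [LinearMap.comp_apply, par_e]
    simp [e, Finsupp.single_apply]
    split_ifs with hh
    · rw [hh.1]
    · rfl
  exact LinearMap.congr_fun this u

/-- conjugate of D on the model -/
def cn (a : ℤ) (D : ↥(s2Span (a : ℂ)) →ₗ[ℂ] ↥(s2Span (a : ℂ))) : V →ₗ[ℂ] V :=
  (Ψ a).symm.toLinearMap.comp (D.comp (Ψ a).toLinearMap)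

def un (a : ℤ) (D : V →ₗ[ℂ] V) : ↥(s2Span (a : ℂ)) →ₗ[ℂ] ↥(s2Span (a : ℂ)) :=
  (Ψ a).toLinearMap.comp (D.comp (Ψ a).symm.toLinearMap)

lemma un_coe (a : ℤ) (D : V →ₗ[ℂ] V) (z) :
    ((un a D z : ↥(s2Span (a : ℂ))) : Module.End ℂ GA) = φ a (D ((Ψ a).symm z)) := rfl

lemma φ_cn (a : ℤ) (D) (u : V) : φ a (cn a D u) = (D (Ψ a u) : Module.End ℂ GA) := by
  rw [← Ψ_coe]; simp [cn]

lemma coe_symm (a : ℤ) (z : ↥(s2Span (a : ℂ))) : (z : Module.End ℂ GA) = φ a ((Ψ a).symm z) := by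
  rw [← Ψ_coe]; simp

def EvD (a : ℤ) (D : V →ₗ[ℂ] V) : Prop :=
  (∀ u, D (par u) = par (D u)) ∧ ∀ u v, D (br a u v) = br a (D u) v + br a u (D v)

def OdD (a : ℤ) (D : V →ₗ[ℂ] V) : Prop :=
  (∀ u, D (par u) = -par (D u)) ∧ ∀ u v, D (br a u v) = br a (D u) v + br a (par u) (D v)

lemma ev_cn (a : ℤ) (D) (hD : IsEvenDer (a : ℂ) D) : EvD a (cn a D) := by
  constructor
  · intro u
    apply φ_inj a
    rw [φ_par, φ_cn, φ_cn]
    exact hD.1 (Ψ a u) (Ψ a (par u)) (by rw [Ψ_coe, Ψ_coe, φ_par])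
  · intro u v
    apply φ_inj a
    rw [map_add, φ_br, φ_br, φ_cn, φ_cn, φ_cn]
    exact hD.2 (Ψ a u) (Ψ a v) (Ψ a (br a u v)) (by rw [Ψ_coe, Ψ_coe, Ψ_coe, φ_br])

lemma od_cn (a : ℤ) (D) (hD : IsOddDer (a : ℂ) D) : OdD a (cn a D) := by
  constructor
  · intro u
    apply φ_inj a
    rw [map_neg, φ_par, φ_cn, φ_cn]
    exact hD.1 (Ψ a u) (Ψ a (par u)) (by rw [Ψ_coe, Ψ_coe, φ_par])
  · intro u v
    apply φ_inj a
    rw [map_add, φ_br, φ_br, φ_cn, φ_cn, φ_cn, φ_par]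
    exact hD.2 (Ψ a u) (Ψ a v) (Ψ a (br a u v)) (by rw [Ψ_coe, Ψ_coe, Ψ_coe, φ_br])

lemma ev_un (a : ℤ) (D) (hD : EvD a D) : IsEvenDer (a : ℂ) (un a D) := by
  constructor
  · intro u z hz
    rw [un_coe, un_coe, ← φ_par, ← hD.1]
    rw [coe_symm, coe_symm, ← φ_par] at hz
    rw [φ_inj a hz]
  · intro u v z hz
    rw [un_coe, un_coe, un_coe, coe_symm a u, coe_symm a v, ← φ_br, ← φ_br, ← map_add, ← hD.2]
    rw [coe_symm, coe_symm, coe_symm a v, ← φ_br] at hz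
    rw [φ_inj a hz]

def dg (cE cH cF : ℂ) : Kd → ℤ → V
  | h, n => (-cH) • e h n + cE • e x n
  | y, n => (-cH) • e y n + cE • e p n
  | x, n => cH • e x n + cF • e h n
  | p, n => cH • e p n + cF • e y n
  | _, _ => 0

def Dg (cE cH cF : ℂ) : V →ₗ[ℂ] V := lft (dg cE cH cF)

lemma Dg_e (cE cH cF : ℂ) (k n) : Dg cE cH cF (e k n) = dg cE cH cF k n := lft_e _ _ _

lemma Dg_comb (cE cH cF : ℂ) (v : V) :
    Dg cE cH cF v = cE • Dg 1 0 0 v + cH • Dg 0 1 0 v + cF • Dg 0 0 1 v := by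
  have : Dg cE cH cF = cE • Dg 1 0 0 + cH • Dg 0 1 0 + cF • Dg 0 0 1 := by
    apply hext
    intro k n
    simp only [LinearMap.add_apply, LinearMap.smul_apply, Dg_e]
    cases k <;> simp only [dg] <;> module
  rw [this]; simp

set_option maxHeartbeats 4000000 in
lemma ev_Dg (a : ℤ) (cE cH cF : ℂ) : EvD a (Dg cE cH cF) := by
  constructor
  · intro u
    have : (Dg cE cH cF).comp par = par.comp (Dg cE cH cF) := by
      apply hext
      intro k n
      simp only [LinearMap.comp_apply, par_e, Dg_e, map_smul]
      cases k <;> simp only [dg, sg, map_add, map_smul, par_e, map_zero] <;> module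
    exact LinearMap.congr_fun this u
  · intro u v
    have : (br a).compr₂ (Dg cE cH cF) =
        (br a).compl₁₂ (Dg cE cH cF) LinearMap.id + (br a).compl₁₂ LinearMap.id (Dg cE cH cF) := by
      apply hext
      intro k n
      apply hext
      intro l m
      simp only [LinearMap.compr₂_apply, LinearMap.compl₁₂_apply, LinearMap.add_apply,
        LinearMap.id_apply, br_e, Dg_e]
      cases k <;> cases l <;>
      simp only [dg, tb, map_add, map_smul, map_zero, LinearMap.add_apply, LinearMap.smul_apply,
        LinearMap.zero_apply, br_e, Dg_e] <;> module
    exact LinearMap.congr_fun (LinearMap.congr_fun this u) v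

def lam (a : ℤ) : Kd → ℤ → ℤ
  | L, n => -2 * n
  | E, n => -2 * n
  | H, n => -2 * n
  | F, n => -2 * n
  | _, n => -2 * n + 1 - a

def mu : Kd → ℤ
  | L => 0 | E => 2 | H => 0 | F => -2 | h => 1 | y => -1 | x => 1 | p => -1

def wt (a : ℤ) (k : Kd) (n : ℤ) : ℂ := (lam a k n : ℂ) / 2 + Complex.I * mu k

lemma wt_eq (a : ℤ) {k l n m} (hw : wt a k n = wt a l m) : lam a k n = lam a l m ∧ mu k = mu l := by
  have h1 := congrArg Complex.re hw
  have h2 := congrArg Complex.im hw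
  simp [wt] at h1 h2
  have e2 : ((2 : ℂ)) = ((2 : ℝ) : ℂ) := by norm_num
  constructor
  · exact_mod_cast h1
  · exact_mod_cast h2

lemma wt_zero (a : ℤ) {k n} (hw : wt a k n = 0) : (k = L ∨ k = H) ∧ n = 0 := by
  have : wt a k n = wt a L 0 := by rw [hw]; simp [wt, lam, mu]
  obtain ⟨h1, h2⟩ := wt_eq a this
  cases k <;> simp [lam, mu] at h1 h2 ⊢ <;> omega

def T0 (P Q : ℂ) : V := P • e L 0 + Q • e H 0

lemma par_T0 (P Q : ℂ) : par (T0 P Q) = T0 P Q := by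
  simp [T0, par_e, sg]

lemma br_T0 (a : ℤ) (P Q : ℂ) (k n) :
    br a (T0 P Q) (e k n) = (P * ((lam a k n : ℂ) / 2) + Q * mu k) • e k n := by
  cases k <;> simp only [T0, map_add, map_smul, LinearMap.add_apply, LinearMap.smul_apply, br_e, tb,
    lam, mu, zero_add] <;> push_cast <;> module

lemma br_T0' (a : ℤ) (P Q : ℂ) (k n) :
    br a (e k n) (T0 P Q) = -((P * ((lam a k n : ℂ) / 2) + Q * mu k) • e k n) := by
  cases k <;> simp only [T0, map_add, map_smul, LinearMap.add_apply, LinearMap.smul_apply, br_e, tb,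
    lam, mu, add_zero] <;> push_cast <;> module

def sc (f : Kd → ℤ → ℂ) : V →ₗ[ℂ] V := lft fun k n => f k n • e k n

lemma sc_apply (f) (u : V) (i) : sc f u i = f i.1 i.2 * u i := by
  have : (Finsupp.lapply i).comp (sc f) = f i.1 i.2 • (Finsupp.lapply i : V →ₗ[ℂ] ℂ) := by
    apply hext
    intro k n
    obtain ⟨l, m⟩ := i
    simp only [LinearMap.comp_apply, sc, lft_e]
    simp [e, Finsupp.single_apply]
    split_ifs with hh
    · rw [hh.1, hh.2]
    · rfl
  exact LinearMap.congr_fun this u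

def T : V := T0 1 Complex.I

lemma br_T (a : ℤ) (v : V) : br a T v = sc (wt a) v := by
  have : br a T = sc (wt a) := by
    apply hext
    intro k n
    rw [T, br_T0, sc, lft_e, wt]; simp
  rw [this]

lemma br_T' (a : ℤ) (v : V) : br a v T = -sc (wt a) v := by
  have : (br a).flip T = -sc (wt a) := by
    apply hext
    intro k n
    rw [LinearMap.flip_apply, T, br_T0', LinearMap.neg_apply, sc, lft_e, wt]; simp
  exact LinearMap.congr_fun this v

lemma T0_of (v : V) (hv : ∀ k n, v (k, n) ≠ 0 → (k = L ∨ k = H) ∧ n = 0) :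
    v = T0 (v (L, 0)) (v (H, 0)) := by
  ext ⟨k, n⟩
  by_cases hk : (k = L ∨ k = H) ∧ n = 0
  · obtain ⟨rfl | rfl, rfl⟩ := hk <;> simp [T0, e, Finsupp.single_apply]
  · have h1 : v (k, n) = 0 := by
      by_contra hc; exact hk (hv _ _ hc)
    rw [h1]
    cases k <;> simp [T0, e, Finsupp.single_apply] at hk ⊢ <;> intro hh <;> exact absurd hh.symm hk

lemma e_self (k n) : e k n (k, n) = 1 := by simp [e]
lemma e_ne {k n l m} (hne : (l, m) ≠ (k, n)) : e k n (l, m) = 0 := by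
  simp only [e]; exact Finsupp.single_eq_of_ne hne

lemma T0_zero (a : ℤ) (P Q : ℂ) (hz : ∀ n, P * ((lam a E n : ℂ) / 2) + Q * mu E = 0) :
    P = 0 ∧ Q = 0 := by
  have h0 := hz 0
  have h1 := hz 1
  simp [lam, mu] at h0 h1
  simp [h0] at h1
  exact ⟨h1, h0⟩

lemma main1 (a : ℤ) (D : V →ₗ[ℂ] V)
    (hD : ∀ v, D (br a T v) = br a (D T) v + br a T (D v)) :
    ∃ u : V, (∀ i, (D T) i = 0 → u i = 0) ∧
      ∀ k n l m, (D (e k n) + br a u (e k n)) (l, m) ≠ 0 → wt a l m = wt a k n := by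
  refine ⟨sc (fun k n => (wt a k n)⁻¹) (D T), ?_, ?_⟩
  · intro i hi; rw [sc_apply, hi, mul_zero]
  set u := sc (fun k n => (wt a k n)⁻¹) (D T) with hu
  set v0 := D T + br a u T with hv0
  have hT : v0 = T0 (v0 (L, 0)) (v0 (H, 0)) := by
    apply T0_of
    intro k n hkn
    apply wt_zero a
    by_contra hw
    apply hkn
    rw [hv0, br_T', Finsupp.add_apply, Finsupp.neg_apply, sc_apply, hu, sc_apply]
    simp only
    rw [← mul_assoc, mul_inv_cancel₀ hw]; ring
  have key : ∀ v, D (br a T v) + br a u (br a T v) = br a v0 v + br a T (D v + br a u v) := by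
    intro v
    have h1 := br_jac a T u v (par_T0 _ _)
    have h2 : br a T u = - br a u T := by rw [br_T, br_T']; simp
    rw [h2] at h1
    rw [hD v, hv0, map_add, map_add, h1]
    simp only [map_neg, LinearMap.neg_apply, LinearMap.add_apply]
    abel
  have key2 : ∀ k n l m, (wt a k n - wt a l m) * (D (e k n) + br a u (e k n)) (l, m) =
      (v0 (L, 0) * ((lam a k n : ℂ) / 2) + v0 (H, 0) * mu k) * e k n (l, m) := by
    intro k n l m
    have h1 := key (e k n)
    have h3 : br a T (e k n) = wt a k n • e k n := by rw [br_T, sc, lft_e]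
    rw [hT, br_T0, h3, br_T, map_smul, map_smul] at h1
    have h2 := DFunLike.congr_fun h1 (l, m)
    rw [Finsupp.add_apply, Finsupp.add_apply, sc_apply] at h2
    simp only [Finsupp.smul_apply, smul_eq_mul, Finsupp.add_apply] at h2 ⊢
    linear_combination h2
  have hz : v0 (L, 0) = 0 ∧ v0 (H, 0) = 0 := by
    apply T0_zero a
    intro n
    have := key2 E n E n
    rw [e_self] at this
    rw [mul_one] at this
    rw [← this]; ring
  intro k n l m hne
  have := key2 k n l m
  rw [hz.1, hz.2] at this
  simp only [zero_mul, add_zero, mul_eq_zero] at this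
  rcases this with h1 | h1
  · exact (sub_eq_zero.mp h1).symm
  · exact absurd h1 hne

set_option maxHeartbeats 4000000 in
lemma par_br (a : ℤ) (u v : V) : par (br a u v) = br a (par u) (par v) := by
  have : (br a).compr₂ par = (br a).compl₁₂ par par := by
    apply hext
    intro k n
    apply hext
    intro l m
    simp only [LinearMap.compr₂_apply, LinearMap.compl₁₂_apply, br_e, par_e, map_smul,
      LinearMap.smul_apply]
    cases k <;> cases l <;>
    simp only [tb, sg, map_add, map_smul, map_zero, par_e] <;> module
  exact LinearMap.congr_fun (LinearMap.congr_fun this u) v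

lemma sg_of_mu {k l} (hm : mu k = mu l) : sg k = sg l := by
  cases k <;> cases l <;> simp [mu, sg] at hm ⊢

lemma sg_sq (k) : sg k * sg k = 1 := by cases k <;> simp [sg]
lemma sg_ne (k) : sg k ≠ 0 := by cases k <;> simp [sg]

lemma odd_main (a : ℤ) (D : V →ₗ[ℂ] V) (hD : OdD a D) : ∃ u, ∀ v, D v = br a u v := by
  obtain ⟨u, hu1, hu2⟩ := main1 a D (by
    intro v; rw [hD.2]; rw [show par T = T from par_T0 _ _])
  have hu : par u = -u := by
    ext i
    rw [par_apply, Finsupp.neg_apply]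
    by_cases hi : u i = 0
    · simp [hi]
    · have h1 := hD.1 T
      rw [show par T = T from par_T0 _ _] at h1
      have h2 := DFunLike.congr_fun h1 i
      rw [Finsupp.neg_apply, par_apply] at h2
      have h3 : D T i ≠ 0 := fun hc => hi (hu1 i hc)
      have h4 : sg i.1 = -1 := by
        have : (sg i.1 + 1) * D T i = 0 := by linear_combination h2
        rcases mul_eq_zero.mp this with h5 | h5
        · linear_combination h5
        · exact absurd h5 h3
      rw [h4]; ring
  refine ⟨-u, ?_⟩
  have : D = br a (-u) := by
    apply hext
    intro k n
    have h0 : D (e k n) + br a u (e k n) = 0 := by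
      ext ⟨l, m⟩
      by_contra hne
      have hs := sg_of_mu (wt_eq a (hu2 k n l m hne)).2
      have h1 : sg k • (D (e k n) + br a u (e k n)) = - par (D (e k n) + br a u (e k n)) := by
        have h2 := hD.1 (e k n)
        rw [par_e, map_smul] at h2
        rw [map_add, par_br, hu, par_e, smul_add, h2]
        simp only [map_neg, LinearMap.neg_apply, map_smul]
        module
      have h2 := DFunLike.congr_fun h1 (l, m)
      rw [Finsupp.neg_apply, par_apply, hs.symm, Finsupp.smul_apply, smul_eq_mul] at h2
      have h3 : sg l * (D (e k n) + br a u (e k n)) (l, m) = 0 := by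
        simp only at h2
        linear_combination h2 / 2
      rcases mul_eq_zero.mp h3 with h4 | h4
      · exact sg_ne _ h4
      · exact hne h4
    rw [map_neg, LinearMap.neg_apply]
    exact eq_neg_of_add_eq_zero_left h0
  intro v; rw [this]

lemma ev_add (a : ℤ) (D : V →ₗ[ℂ] V) (hD : EvD a D) (u : V) (hu : par u = u) :
    EvD a (D + br a u) := by
  constructor
  · intro v
    simp only [LinearMap.add_apply, map_add, hD.1, par_br, hu]
  · intro v w
    simp only [LinearMap.add_apply, map_add, hD.2, br_jac a u v w hu]
    abel

def WP (a : ℤ) (D : V →ₗ[ℂ] V) : Prop :=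
  ∀ k n l m, D (e k n) (l, m) ≠ 0 → wt a l m = wt a k n

lemma wp1 (a : ℤ) (D) (hD : WP a D) (k n) (hk : k = E ∨ k = F) :
    ∃ c : ℂ, D (e k n) = c • e k n := by
  refine ⟨D (e k n) (k, n), ?_⟩
  ext ⟨l, m⟩
  by_cases hlm : (l, m) = (k, n)
  · rw [hlm]; simp [e_self]
  · rw [Finsupp.smul_apply, e_ne hlm, smul_zero]
    by_contra hc
    obtain ⟨h1, h2⟩ := wt_eq a (hD _ _ _ _ hc)
    apply hlm
    rcases hk with rfl | rfl <;> cases l <;> simp [lam, mu] at h1 h2 ⊢ <;> omega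

lemma wp2 (a : ℤ) (D) (hD : WP a D) (k k' n)
    (hk : (k = L ∧ k' = H) ∨ (k = y ∧ k' = p) ∨ (k = p ∧ k' = y)) :
    ∃ c d : ℂ, D (e k n) = c • e k n + d • e k' n := by
  refine ⟨D (e k n) (k, n), D (e k n) (k', n), ?_⟩
  have hkk : k ≠ k' := by rcases hk with ⟨rfl, rfl⟩ | ⟨rfl, rfl⟩ | ⟨rfl, rfl⟩ <;> simp
  ext ⟨l, m⟩
  by_cases hlm : (l, m) = (k, n)
  · rw [hlm]; simp [e_self]
    rw [e_ne (by simp [hkk])]; simp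
  by_cases hlm' : (l, m) = (k', n)
  · rw [hlm']; simp [e_self]
    rw [e_ne (by simp [hkk.symm])]; simp
  · rw [Finsupp.add_apply, Finsupp.smul_apply, Finsupp.smul_apply, e_ne hlm, e_ne hlm']
    simp only [smul_zero, add_zero]
    by_contra hc
    obtain ⟨h1, h2⟩ := wt_eq a (hD _ _ _ _ hc)
    rcases hk with ⟨rfl, rfl⟩ | ⟨rfl, rfl⟩ | ⟨rfl, rfl⟩ <;> cases l <;>
      simp [lam, mu] at h1 h2 hlm hlm' <;> omega

lemma sm_e {c d : ℂ} {k n} (hc : c • e k n = d • e k n) : c = d := by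
  have := DFunLike.congr_fun hc (k, n)
  simpa [e_self] using this

lemma even2 (a : ℤ) (D : V →ₗ[ℂ] V) (hD : EvD a D) (hw : WP a D)
    (hE : ∀ n, D (e E n) = 0) (hF : ∀ n, D (e F n) = 0) :
    ∃ cE cH cF : ℂ, ∀ v, D v = Dg cE cH cF v := by
  have hH : ∀ n, D (e H n) = 0 := by
    intro n
    have := hD.2 (e E n) (e F 0)
    rw [hE, hF, br_e] at this
    simpa [tb] using this
  have hL : ∀ n, D (e L n) = 0 := by
    intro n
    obtain ⟨A, B, hAB⟩ := wp2 a D hw L H n (by simp)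
    have key : ∀ m : ℤ, A * (-(m : ℂ)) + B * 2 = 0 := by
      intro m
      have := hD.2 (e L n) (e E m)
      rw [hE, hAB, br_e] at this
      simp only [tb, map_smul, hE, smul_zero, map_add, LinearMap.add_apply, LinearMap.smul_apply,
        br_e, map_zero, add_zero] at this
      apply sm_e (k := E) (n := n + m)
      rw [zero_smul, this]; module
    have h0 := key 0
    have h1 := key 1
    simp at h0
    simp [h0] at h1
    rw [hAB, h0, h1]; simp
  obtain ⟨A, B, hy⟩ := wp2 a D hw y p 0 (by simp)
  obtain ⟨G, C, hp⟩ := wp2 a D hw p y 0 (by simp)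
  have hh : ∀ m, D (e h m) = A • e h m + B • e x m := by
    intro m
    have := hD.2 (e E m) (e y 0)
    rw [hE, hy, br_e] at this
    simpa [tb, br_e] using this
  have hx : ∀ m, D (e x m) = G • e x m + C • e h m := by
    intro m
    have := hD.2 (e E m) (e p 0)
    rw [hE, hp, br_e] at this
    simpa [tb, br_e] using this
  have hy' : ∀ m, D (e y m) = A • e y m + B • e p m := by
    intro m
    have := hD.2 (e F m) (e h 0)
    rw [hF, hh, br_e] at this
    simpa [tb, br_e] using this
  have hp' : ∀ m, D (e p m) = G • e p m + C • e y m := by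
    intro m
    have := hD.2 (e F m) (e x 0)
    rw [hF, hx, br_e] at this
    simpa [tb, br_e] using this
  have hAG : A = -G := by
    have := hD.2 (e x 0) (e y 0)
    rw [hx, hy, br_e] at this
    simp only [tb, map_smul, map_add, hL, hH, LinearMap.add_apply, LinearMap.smul_apply, br_e,
      smul_zero, add_zero] at this
    apply sm_e (k := L) (n := 0 + 0 + (a - 1))
    have h2 : (0 : V) = (-(A + G)) • e L (0 + 0 + (a - 1)) := by
      rw [this]; simp only [add_zero]; push_cast; module
    have h3 : A • e L (0 + 0 + (a - 1)) = A • e L (0 + 0 + (a - 1)) + 0 := by simp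
    rw [h3, h2]; module
  refine ⟨B, G, C, ?_⟩
  have : D = Dg B G C := by
    apply hext
    intro k n
    rw [Dg_e]
    cases k <;> simp only [dg, hE, hF, hH, hL, hh, hx, hy', hp', hAG]
  intro v; rw [this]

lemma even1 (a : ℤ) (D : V →ₗ[ℂ] V) (hD : EvD a D) (hw : WP a D) :
    ∃ P Q cE cH cF : ℂ, ∀ v, D v = Dg cE cH cF v + br a (T0 P Q) v := by
  choose cE hE using fun n => wp1 a D hw E n (by simp)
  choose cF hF using fun n => wp1 a D hw F n (by simp)
  have hH : ∀ n m, D (e H (n + m)) = (cE n + cF m) • e H (n + m) := by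
    intro n m
    have := hD.2 (e E n) (e F m)
    rw [hE, hF, br_e] at this
    simp only [tb, map_smul, LinearMap.smul_apply, br_e] at this
    rw [this]; module
  have h00 : cE 0 + cF 0 = 0 := by
    have := hD.2 (e H (0 + 0)) (e E 0)
    rw [hH, hE, br_e] at this
    simp only [tb, map_smul, LinearMap.smul_apply, br_e, hE, add_zero] at this
    have h2 : (2 * cE 0) • e E 0 = ((cE 0 + cF 0) * 2 + 2 * cE 0) • e E 0 := by
      rw [mul_smul, this]; module
    have := sm_e h2
    linear_combination (-1/2) * this
  have hadd : ∀ n m, cE n + cF m = cE (n + m) + cF 0 := by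
    intro n m
    have h1 := hH n m
    have h2 := hH (n + m) 0
    rw [add_zero] at h2
    exact sm_e (h1.symm.trans h2)
  have hF' : ∀ m, cF m = cE m - 2 * cE 0 := by
    intro m
    have := hadd 0 m
    rw [zero_add] at this
    linear_combination this + h00
  let g : ℤ →+ ℂ := AddMonoidHom.mk' (fun n => cE n - cE 0) (by
    intro n m
    have := hadd n m
    rw [hF' m] at this
    linear_combination -this - h00)
  have hg : ∀ n : ℤ, cE n - cE 0 = n * g 1 := by
    intro n
    have : g n = n • g 1 := by rw [← map_zsmul]; simp
    rw [zsmul_eq_mul] at this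
    exact this
  set P := -g 1 with hP
  set Q := cE 0 / 2 with hQ
  have hbE : ∀ n, br a (T0 P Q) (e E n) = cE n • e E n := by
    intro n
    rw [br_T0]; congr 1
    simp only [lam, mu]; push_cast
    linear_combination -hg n + (-(n:ℂ)) * hP + 2 * hQ
  have hbF : ∀ n, br a (T0 P Q) (e F n) = cF n • e F n := by
    intro n
    rw [br_T0]; congr 1
    rw [hF']
    simp only [lam, mu]; push_cast
    linear_combination -hg n + (-(n:ℂ)) * hP - 2 * hQ
  have hneg : br a (-T0 P Q) = -br a (T0 P Q) := by rw [map_neg]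
  obtain ⟨c1, c2, c3, hc⟩ := even2 a (D + br a (-T0 P Q))
    (ev_add a D hD _ (by rw [map_neg, par_T0])) (by
      intro k n l m hne
      by_cases hkl : (l, m) = (k, n)
      · obtain ⟨rfl, rfl⟩ := Prod.mk.inj hkl; rfl
      · apply hw
        intro hc
        apply hne
        rw [hneg, LinearMap.add_apply, LinearMap.neg_apply, br_T0, Finsupp.add_apply,
          Finsupp.neg_apply, Finsupp.smul_apply, e_ne hkl, hc]
        simp)
    (by intro n; rw [hneg, LinearMap.add_apply, LinearMap.neg_apply, hbE, hE]; simp)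
    (by intro n; rw [hneg, LinearMap.add_apply, LinearMap.neg_apply, hbF, hF]; simp)
  refine ⟨P, Q, c1, c2, c3, ?_⟩
  intro v
  rw [← hc v, hneg]; simp

lemma even_main (a : ℤ) (D : V →ₗ[ℂ] V) (hD : EvD a D) :
    ∃ (cE cH cF : ℂ) (u : V), ∀ v, D v = Dg cE cH cF v + br a u v := by
  obtain ⟨u, hu1, hu2⟩ := main1 a D (fun v => hD.2 T v)
  have hu : par u = u := by
    ext i
    rw [par_apply]
    by_cases hi : u i = 0
    · simp [hi]
    · have h1 := hD.1 T
      rw [show par T = T from par_T0 _ _] at h1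
      have h2 := DFunLike.congr_fun h1 i
      rw [par_apply] at h2
      have h3 : D T i ≠ 0 := fun hc => hi (hu1 i hc)
      have h4 : sg i.1 = 1 := by
        have : (sg i.1 - 1) * D T i = 0 := by linear_combination -h2
        rcases mul_eq_zero.mp this with h5 | h5
        · linear_combination h5
        · exact absurd h5 h3
      rw [h4]; ring
  obtain ⟨P, Q, cE, cH, cF, hc⟩ := even1 a (D + br a u) (ev_add a D hD u hu) hu2
  refine ⟨cE, cH, cF, T0 P Q - u, fun v => ?_⟩
  have := hc v
  rw [LinearMap.add_apply] at this
  rw [map_sub, LinearMap.sub_apply, ← add_sub_assoc, ← this]; abel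

lemma indep (a : ℤ) (cE cH cF : ℂ) (s : V) (hs : ∀ v, Dg cE cH cF v = br a s v) :
    cE = 0 ∧ cH = 0 ∧ cF = 0 := by
  have hT : s = T0 (s (L, 0)) (s (H, 0)) := by
    apply T0_of
    intro k n hkn
    apply wt_zero a
    have h1 := hs T
    rw [br_T'] at h1
    have h2 : Dg cE cH cF T = 0 := by simp [T, T0, Dg_e, dg]
    rw [h2] at h1
    have h3 := DFunLike.congr_fun h1 (k, n)
    rw [Finsupp.neg_apply, sc_apply] at h3
    simp at h3
    exact h3.resolve_right hkn
  have hz := T0_zero a (s (L, 0)) (s (H, 0)) (by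
    intro n
    have h1 := hs (e E n)
    rw [hT, br_T0, Dg_e] at h1
    simp only [dg] at h1
    apply sm_e (k := E) (n := n)
    rw [← h1, zero_smul])
  rw [hz.1, hz.2] at hT
  have hs0 : s = 0 := by rw [hT]; simp [T0]
  have h1 := hs (e h 0)
  have h2 := hs (e x 0)
  rw [hs0, Dg_e] at h1 h2
  simp only [dg, map_zero, LinearMap.zero_apply] at h1 h2
  have a1 := DFunLike.congr_fun h1 (x, 0)
  have a2 := DFunLike.congr_fun h2 (h, 0)
  have a3 := DFunLike.congr_fun h2 (x, 0)
  simp [e, Finsupp.single_apply] at a1 a2 a3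
  exact ⟨a1, a3, a2⟩

end S2

open S2

/-- For `α ∈ ℤ`, the Lie superalgebra of exterior derivations
`Der_ext S'(2,α) = Der S'(2,α)/Inn S'(2,α)` is purely even and isomorphic to
`𝔰𝔩(2,ℂ)`: it is spanned by the classes of three even derivations `𝖤, 𝖧, 𝖥`
satisfying `[𝖧,𝖤] = 2𝖤`, `[𝖧,𝖥] = −2𝖥`, `[𝖤,𝖥] = 𝖧` modulo inner derivations,
acting on the odd basis elements by `𝖤(𝔥_k^α) = 𝔵_{k−1+α}`, `𝖤(𝔶_k^α) = 𝔭_{k−1+α}`,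
`𝖥(𝔵_k) = 𝔥_{k+1−α}^α`, `𝖥(𝔭_k) = 𝔶_{k+1−α}^α`, `𝖧(𝔵_k) = 𝔵_k`,
`𝖧(𝔥_k^α) = −𝔥_k^α`, `𝖧(𝔭_k) = 𝔭_k`, `𝖧(𝔶_k^α) = −𝔶_k^α`. -/
theorem exterior_derivations_integral_alpha (a : ℤ) :
    ∃ DE DH DF : ↥(s2Span (a : ℂ)) →ₗ[ℂ] ↥(s2Span (a : ℂ)),
      IsEvenDer (a : ℂ) DE ∧ IsEvenDer (a : ℂ) DH ∧ IsEvenDer (a : ℂ) DF ∧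
      -- the action (4.15) on the odd basis elements
      (∀ (k : ℤ) (z : ↥(s2Span (a : ℂ))), (z : Module.End ℂ GA) = hop (a : ℂ) k →
        ((DE z : Module.End ℂ GA)) = xop (k - 1 + a)) ∧
      (∀ (k : ℤ) (z : ↥(s2Span (a : ℂ))), (z : Module.End ℂ GA) = yop (a : ℂ) k →
        ((DE z : Module.End ℂ GA)) = pop (k - 1 + a)) ∧
      (∀ (k : ℤ) (z : ↥(s2Span (a : ℂ))), (z : Module.End ℂ GA) = xop k →
        ((DF z : Module.End ℂ GA)) = hop (a : ℂ) (k + 1 - a)) ∧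
      (∀ (k : ℤ) (z : ↥(s2Span (a : ℂ))), (z : Module.End ℂ GA) = pop k →
        ((DF z : Module.End ℂ GA)) = yop (a : ℂ) (k + 1 - a)) ∧
      (∀ (k : ℤ) (z : ↥(s2Span (a : ℂ))), (z : Module.End ℂ GA) = xop k →
        ((DH z : Module.End ℂ GA)) = xop k) ∧
      (∀ (k : ℤ) (z : ↥(s2Span (a : ℂ))), (z : Module.End ℂ GA) = hop (a : ℂ) k →
        ((DH z : Module.End ℂ GA)) = -hop (a : ℂ) k) ∧
      (∀ (k : ℤ) (z : ↥(s2Span (a : ℂ))), (z : Module.End ℂ GA) = pop k →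
        ((DH z : Module.End ℂ GA)) = pop k) ∧
      (∀ (k : ℤ) (z : ↥(s2Span (a : ℂ))), (z : Module.End ℂ GA) = yop (a : ℂ) k →
        ((DH z : Module.End ℂ GA)) = -yop (a : ℂ) k) ∧
      -- the classes satisfy the `𝔰𝔩(2)` relations modulo inner derivations
      (∃ s : ↥(s2Span (a : ℂ)), ∀ x : ↥(s2Span (a : ℂ)),
        ((DH (DE x) : Module.End ℂ GA)) - ((DE (DH x) : Module.End ℂ GA))
          - (2 : ℂ) • ((DE x : Module.End ℂ GA))
          = sbr (s : Module.End ℂ GA) (x : Module.End ℂ GA)) ∧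
      (∃ s : ↥(s2Span (a : ℂ)), ∀ x : ↥(s2Span (a : ℂ)),
        ((DH (DF x) : Module.End ℂ GA)) - ((DF (DH x) : Module.End ℂ GA))
          + (2 : ℂ) • ((DF x : Module.End ℂ GA))
          = sbr (s : Module.End ℂ GA) (x : Module.End ℂ GA)) ∧
      (∃ s : ↥(s2Span (a : ℂ)), ∀ x : ↥(s2Span (a : ℂ)),
        ((DE (DF x) : Module.End ℂ GA)) - ((DF (DE x) : Module.End ℂ GA))
          - ((DH x : Module.End ℂ GA))
          = sbr (s : Module.End ℂ GA) (x : Module.End ℂ GA)) ∧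
      -- the classes of `𝖤, 𝖧, 𝖥` span `Der_ext S'(2,α)` …
      (∀ D : ↥(s2Span (a : ℂ)) →ₗ[ℂ] ↥(s2Span (a : ℂ)), IsSuperDer (a : ℂ) D →
        ∃ (cE cH cF : ℂ) (s : ↥(s2Span (a : ℂ))), ∀ x : ↥(s2Span (a : ℂ)),
          ((D x : Module.End ℂ GA)) = cE • ((DE x : Module.End ℂ GA))
            + cH • ((DH x : Module.End ℂ GA)) + cF • ((DF x : Module.End ℂ GA))
            + sbr (s : Module.End ℂ GA) (x : Module.End ℂ GA)) ∧
      -- … which is purely even: every odd derivation is inner …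
      (∀ D : ↥(s2Span (a : ℂ)) →ₗ[ℂ] ↥(s2Span (a : ℂ)), IsOddDer (a : ℂ) D →
        IsInnerDer (a : ℂ) D) ∧
      -- … and the classes of `𝖤, 𝖧, 𝖥` are linearly independent, so that
      -- `Der_ext S'(2,α) ≅ 𝔰𝔩(2,ℂ)`
      (∀ (cE cH cF : ℂ) (s : ↥(s2Span (a : ℂ))),
        (∀ x : ↥(s2Span (a : ℂ)),
          cE • ((DE x : Module.End ℂ GA)) + cH • ((DH x : Module.End ℂ GA))
            + cF • ((DF x : Module.End ℂ GA))
            = sbr (s : Module.End ℂ GA) (x : Module.End ℂ GA)) →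
        cE = 0 ∧ cH = 0 ∧ cF = 0) := by
  have hsb0 : ∀ X : Module.End ℂ GA, sbr 0 X = 0 := by
    intro X
    have := LinearMap.congr_fun (map_zero sbrL) X
    exact this
  have hφs : ∀ u v : V, φ a u - φ a v = φ a (u - v) := by
    intro u v
    have h1 : φ a u = φ a (u - v) + φ a v := by rw [← map_add, sub_add_cancel]
    refine LinearMap.ext fun z => ?_
    rw [LinearMap.sub_apply, h1, LinearMap.add_apply]
    abel
  have hcoe : ∀ (u : V) (z : ↥(s2Span (a : ℂ))), (z : Module.End ℂ GA) = φ a u →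
      (Ψ a).symm z = u := by
    intro u z hz
    rw [coe_symm] at hz
    exact φ_inj a hz
  have hx : ∀ k : ℤ, xop k = φ a (e .x (k + 1 - a)) := by
    intro k; rw [φ_e]; simp only [bas]; congr 1; ring
  have hp : ∀ k : ℤ, pop k = φ a (e .p (k + 1 - a)) := by
    intro k; rw [φ_e]; simp only [bas]; congr 1; ring
  have hh : ∀ k : ℤ, hop (a : ℂ) k = φ a (e .h k) := by
    intro k; rw [φ_e]; simp only [bas]
  have hy : ∀ k : ℤ, yop (a : ℂ) k = φ a (e .y k) := by
    intro k; rw [φ_e]; simp only [bas]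
  have hodd : ∀ D : ↥(s2Span (a : ℂ)) →ₗ[ℂ] ↥(s2Span (a : ℂ)), IsOddDer (a : ℂ) D →
      IsInnerDer (a : ℂ) D := by
    intro D hD
    obtain ⟨u, hu⟩ := odd_main a _ (od_cn a D hD)
    refine ⟨Ψ a u, fun z => ?_⟩
    have := φ_cn a D ((Ψ a).symm z)
    rw [hu, φ_br, LinearEquiv.apply_symm_apply, ← coe_symm] at this
    rw [← this, Ψ_coe]
  refine ⟨un a (Dg 1 0 0), un a (Dg 0 1 0), un a (Dg 0 0 1), ev_un a _ (ev_Dg a _ _ _),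
    ev_un a _ (ev_Dg a _ _ _), ev_un a _ (ev_Dg a _ _ _), ?_, ?_, ?_, ?_, ?_, ?_, ?_, ?_,
    ?_, ?_, ?_, ?_, hodd, ?_⟩
  · intro k z hz
    rw [un_coe, hcoe _ z (hz.trans (hh k)), Dg_e, hx, show k - 1 + a + 1 - a = k by ring]
    simp [dg]
  · intro k z hz
    rw [un_coe, hcoe _ z (hz.trans (hy k)), Dg_e, hp, show k - 1 + a + 1 - a = k by ring]
    simp [dg]
  · intro k z hz
    rw [un_coe, hcoe _ z (hz.trans (hx k)), Dg_e, hh]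
    simp [dg]
  · intro k z hz
    rw [un_coe, hcoe _ z (hz.trans (hp k)), Dg_e, hy]
    simp [dg]
  · intro k z hz
    rw [un_coe, hcoe _ z (hz.trans (hx k)), Dg_e, hx]
    simp [dg]
  · intro k z hz
    rw [un_coe, hcoe _ z (hz.trans (hh k)), Dg_e, hh]
    simp only [dg, one_smul, zero_smul, add_zero, neg_smul, map_neg]
  · intro k z hz
    rw [un_coe, hcoe _ z (hz.trans (hp k)), Dg_e, hp]
    simp [dg]
  · intro k z hz
    rw [un_coe, hcoe _ z (hz.trans (hy k)), Dg_e, hy]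
    simp only [dg, one_smul, zero_smul, add_zero, neg_smul, map_neg]
  · refine ⟨0, fun z => ?_⟩
    rw [show ((0 : ↥(s2Span (a : ℂ))) : Module.End ℂ GA) = 0 from rfl, hsb0]
    simp only [un_coe]
    rw [← map_smul, hφs, hφs]
    have : (Dg 0 1 0).comp (Dg 1 0 0) - (Dg 1 0 0).comp (Dg 0 1 0) - (2 : ℂ) • Dg 1 0 0 = 0 := by
      apply hext
      intro k n
      cases k <;> simp [Dg_e, dg] <;> module
    have := LinearMap.congr_fun this ((Ψ a).symm z)
    have h2 : Dg 0 1 0 (Dg 1 0 0 ((Ψ a).symm z)) - Dg 1 0 0 (Dg 0 1 0 ((Ψ a).symm z))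
      - (2 : ℂ) • Dg 1 0 0 ((Ψ a).symm z) = 0 := this
    simp only [un, LinearMap.comp_apply, LinearEquiv.coe_coe, LinearEquiv.symm_apply_apply]
    rw [h2, map_zero]
  · refine ⟨0, fun z => ?_⟩
    rw [show ((0 : ↥(s2Span (a : ℂ))) : Module.End ℂ GA) = 0 from rfl, hsb0]
    simp only [un_coe]
    rw [← map_smul, hφs, ← map_add]
    have : (Dg 0 1 0).comp (Dg 0 0 1) - (Dg 0 0 1).comp (Dg 0 1 0) + (2 : ℂ) • Dg 0 0 1 = 0 := by
      apply hext
      intro k n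
      cases k <;> simp [Dg_e, dg] <;> module
    have := LinearMap.congr_fun this ((Ψ a).symm z)
    have h2 : Dg 0 1 0 (Dg 0 0 1 ((Ψ a).symm z)) - Dg 0 0 1 (Dg 0 1 0 ((Ψ a).symm z))
      + (2 : ℂ) • Dg 0 0 1 ((Ψ a).symm z) = 0 := this
    simp only [un, LinearMap.comp_apply, LinearEquiv.coe_coe, LinearEquiv.symm_apply_apply]
    rw [h2, map_zero]
  · refine ⟨0, fun z => ?_⟩
    rw [show ((0 : ↥(s2Span (a : ℂ))) : Module.End ℂ GA) = 0 from rfl, hsb0]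
    simp only [un_coe]
    rw [hφs, hφs]
    have : (Dg 1 0 0).comp (Dg 0 0 1) - (Dg 0 0 1).comp (Dg 1 0 0) - Dg 0 1 0 = 0 := by
      apply hext
      intro k n
      cases k <;> simp [Dg_e, dg]
    have := LinearMap.congr_fun this ((Ψ a).symm z)
    have h2 : Dg 1 0 0 (Dg 0 0 1 ((Ψ a).symm z)) - Dg 0 0 1 (Dg 1 0 0 ((Ψ a).symm z))
      - Dg 0 1 0 ((Ψ a).symm z) = 0 := this
    simp only [un, LinearMap.comp_apply, LinearEquiv.coe_coe, LinearEquiv.symm_apply_apply]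
    rw [h2, map_zero]
  · rintro D ⟨De, Do, rfl, hDe, hDo⟩
    obtain ⟨u, hu⟩ := odd_main a _ (od_cn a Do hDo)
    obtain ⟨cE, cH, cF, w, hw⟩ := even_main a _ (ev_cn a De hDe)
    refine ⟨cE, cH, cF, Ψ a (w + u), fun z => ?_⟩
    have h1 := φ_cn a Do ((Ψ a).symm z)
    rw [LinearEquiv.apply_symm_apply, hu] at h1
    have h2 := φ_cn a De ((Ψ a).symm z)
    rw [LinearEquiv.apply_symm_apply, hw, Dg_comb] at h2
    rw [LinearMap.add_apply, Submodule.coe_add, ← h1, ← h2, Ψ_coe, coe_symm a z, ← φ_br]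
    simp only [un_coe, ← map_smul, ← map_add, LinearMap.add_apply]
    congr 1
    simp only [map_add, LinearMap.add_apply]
    abel
  · intro cE cH cF s hs
    apply indep a cE cH cF ((Ψ a).symm s)
    intro v
    apply φ_inj a
    have := hs (Ψ a v)
    simp only [un_coe, LinearEquiv.symm_apply_apply] at this
    rw [Dg_comb, φ_br, ← coe_symm, map_add, map_add, map_smul, map_smul, map_smul, this, Ψ_coe]
end
end

section
/- Let α ∈ ℂ∖ℤ. The Lie superalgebra of exterior derivations Der_ext S'(2,α) = Der S'(2,α)/Inn S'(2,α) is one-dimensional, spanned by the class of the even derivation 𝖧 of S'(2,α) defined by 𝖧(𝔵_k) = 𝔵_k, 𝖧(𝔥_k^α) = −𝔥_k^α, 𝖧(𝔭_k) = 𝔭_k, 𝖧(𝔶_k^α) = −𝔶_k^α, and 𝖧(ℒ_n^α) = 𝖧(E_n) = 𝖧(H_n) = 𝖧(F_n) = 0. -/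
noncomputable section

set_option linter.unusedSimpArgs false

abbrev W8 : Type := Fin 8 → ℂ
abbrev V8 : Type := ℤ →₀ W8

def gen8 (α : ℂ) (n : ℤ) : Fin 8 → Module.End ℂ GA :=
  ![Lop α n, Eop n, Hop n, Fop n, xop (n-1), pop (n-1), hop α (n+1), yop α (n+1)]

def G8 (α : ℂ) (n : ℤ) : W8 →ₗ[ℂ] Module.End ℂ GA := Fintype.linearCombination ℂ (gen8 α n)

def Phi8 (α : ℂ) : V8 →ₗ[ℂ] Module.End ℂ GA := Finsupp.lsum ℂ (G8 α)

def e0 (k : ℤ) : GA := (Finsupp.single k 1, 0, 0, 0)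
def e1 (k : ℤ) : GA := (0, Finsupp.single k 1, 0, 0)
def e2 (k : ℤ) : GA := (0, 0, Finsupp.single k 1, 0)
def e3 (k : ℤ) : GA := (0, 0, 0, Finsupp.single k 1)

lemma tder_s (k : ℤ) (c : ℂ) : tder (Finsupp.single k c) = Finsupp.single (k-1) (k * c) := by
  simp [tder]

lemma tshift_s (n k : ℤ) (c : ℂ) : tshift n (Finsupp.single k c) = Finsupp.single (k+n) c := by
  simp [tshift]

lemma GA_ext {S T : Module.End ℂ GA} (h0 : ∀ k, S (e0 k) = T (e0 k)) (h1 : ∀ k, S (e1 k) = T (e1 k))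
    (h2 : ∀ k, S (e2 k) = T (e2 k)) (h3 : ∀ k, S (e3 k) = T (e3 k)) : S = T := by
  apply LinearMap.prod_ext
  · apply Finsupp.lhom_ext'; intro k; apply LinearMap.ext_ring; exact h0 k
  apply LinearMap.prod_ext
  · apply Finsupp.lhom_ext'; intro k; apply LinearMap.ext_ring; exact h1 k
  apply LinearMap.prod_ext
  · apply Finsupp.lhom_ext'; intro k; apply LinearMap.ext_ring; exact h2 k
  · apply Finsupp.lhom_ext'; intro k; apply LinearMap.ext_ring; exact h3 k

lemma G8_apply (α : ℂ) (n : ℤ) (v : W8) : G8 α n v = v 0 • Lop α n + v 1 • Eop n + v 2 • Hop n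
    + v 3 • Fop n + v 4 • xop (n-1) + v 5 • pop (n-1) + v 6 • hop α (n+1) + v 7 • yop α (n+1) := by
  simp [G8, Fintype.linearCombination_apply, Fin.sum_univ_eight, gen8]

lemma G8_e0 (α : ℂ) (n k : ℤ) (v : W8) : G8 α n v (e0 k) =
    (-k * v 0) • e0 (k+n) + (k * v 7) • e1 (k+n) + (k * v 6) • e2 (k+n) := by
  have h1 : k - 1 + (n+1) = k + n := by ring
  simp [G8_apply, Lop, Eop, Hop, Fop, xop, pop, hop, yop, mk4, pr0, pr1, pr2, pr3, Mt, Mθ1, Mθ2,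
    Dt, Dθ1, Dθ2, e0, e1, e2, e3, tder_s, tshift_s, h1, mul_comm]
lemma G8_e1 (α : ℂ) (n k : ℤ) (v : W8) : G8 α n v (e1 k) =
    v 4 • e0 (k+n) + (-(k + (n+(α+1))/2) * v 0 - v 2) • e1 (k+n) + v 1 • e2 (k+n)
     + (-(k+n+(α+1)) * v 6) • e3 (k+n) := by
  have h1 : k - 1 + (n+1) = k + n := by ring
  simp [G8_apply, Lop, Eop, Hop, Fop, xop, pop, hop, yop, mk4, pr0, pr1, pr2, pr3, Mt, Mθ1, Mθ2,
    Dt, Dθ1, Dθ2, e0, e1, e2, e3, tder_s, tshift_s, h1]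
  constructor <;> (ext l; by_cases h : k + n = l <;> simp [h]; try ring)
lemma G8_e2 (α : ℂ) (n k : ℤ) (v : W8) : G8 α n v (e2 k) =
    (-v 5) • e0 (k+n) + v 3 • e1 (k+n) + (-(k + (n+(α+1))/2) * v 0 + v 2) • e2 (k+n)
     + ((k+n+(α+1)) * v 7) • e3 (k+n) := by
  have h1 : k - 1 + (n+1) = k + n := by ring
  simp [G8_apply, Lop, Eop, Hop, Fop, xop, pop, hop, yop, mk4, pr0, pr1, pr2, pr3, Mt, Mθ1, Mθ2,
    Dt, Dθ1, Dθ2, e0, e1, e2, e3, tder_s, tshift_s, h1]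
  constructor <;> (ext l; by_cases h : k + n = l <;> simp [h]; try ring)
lemma G8_e3 (α : ℂ) (n k : ℤ) (v : W8) : G8 α n v (e3 k) =
    v 5 • e1 (k+n) + v 4 • e2 (k+n) + (-(k+n+(α+1)) * v 0) • e3 (k+n) := by
  have h1 : k - 1 + (n+1) = k + n := by ring
  simp [G8_apply, Lop, Eop, Hop, Fop, xop, pop, hop, yop, mk4, pr0, pr1, pr2, pr3, Mt, Mθ1, Mθ2,
    Dt, Dθ1, Dθ2, e0, e1, e2, e3, tder_s, tshift_s, h1]
  ext l; by_cases h : k + n = l <;> simp [h]; try ring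

lemma sig_e0 (k : ℤ) : sigmaGA (e0 k) = e0 k := by simp [sigmaGA, mk4, pr0, pr1, pr2, pr3, e0]
lemma sig_e1 (k : ℤ) : sigmaGA (e1 k) = -e1 k := by simp [sigmaGA, mk4, pr0, pr1, pr2, pr3, e1]
lemma sig_e2 (k : ℤ) : sigmaGA (e2 k) = -e2 k := by simp [sigmaGA, mk4, pr0, pr1, pr2, pr3, e2]
lemma sig_e3 (k : ℤ) : sigmaGA (e3 k) = e3 k := by simp [sigmaGA, mk4, pr0, pr1, pr2, pr3, e3]

def sgW (v : W8) : W8 := ![v 0, v 1, v 2, v 3, -v 4, -v 5, -v 6, -v 7]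

lemma G8_sig (α : ℂ) (n : ℤ) (v : W8) : sigmaGA * G8 α n v * sigmaGA = G8 α n (sgW v) := by
  apply GA_ext <;> intro k <;>
  simp only [Module.End.mul_apply, sig_e0, sig_e1, sig_e2, sig_e3, G8_e0, G8_e1, G8_e2, G8_e3, map_add,
    map_neg, map_smul] <;> simp [sgW] <;> module

def BW (α : ℂ) (m n : ℤ) (v w : W8) : W8 :=
  ![(m-n) * v 0 * w 0 + (-v 4 * w 7 + v 5 * w 6) + (-v 7 * w 4 + v 6 * w 5),
    -n * v 0 * w 1 + m * v 1 * w 0 + 2 * (v 2 * w 1 - v 1 * w 2) + (m-n-(α+1)) * v 4 * w 6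
      + (n-m-(α+1)) * v 6 * w 4,
    -n * v 0 * w 2 + m * v 2 * w 0 + (v 1 * w 3 - v 3 * w 1)
      + (n+(α+1)-m)/2 * (v 4 * w 7 + v 5 * w 6) + (m+(α+1)-n)/2 * (v 7 * w 4 + v 6 * w 5),
    -n * v 0 * w 3 + m * v 3 * w 0 - 2 * (v 2 * w 3 - v 3 * w 2) + (n+(α+1)-m) * v 5 * w 7
      + (m+(α+1)-n) * v 7 * w 5,
    ((m+(α+1))/2-n) * v 0 * w 4 - ((n+(α+1))/2-m) * v 4 * w 0 + v 1 * w 5 - v 5 * w 1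
      + v 2 * w 4 - v 4 * w 2,
    ((m+(α+1))/2-n) * v 0 * w 5 - ((n+(α+1))/2-m) * v 5 * w 0 + v 3 * w 4 - v 4 * w 3
      - (v 2 * w 5 - v 5 * w 2),
    ((m-(α+1))/2-n) * v 0 * w 6 - ((n-(α+1))/2-m) * v 6 * w 0 + v 1 * w 7 - v 7 * w 1
      + v 2 * w 6 - v 6 * w 2,
    ((m-(α+1))/2-n) * v 0 * w 7 - ((n-(α+1))/2-m) * v 7 * w 0 + v 3 * w 6 - v 6 * w 3
      - (v 2 * w 7 - v 7 * w 2)]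

set_option maxHeartbeats 2000000 in
lemma G8_br (α : ℂ) (m n : ℤ) (v w : W8) :
    sbr (G8 α m v) (G8 α n w) = G8 α (m+n) (BW α m n v w) := by
  unfold sbr
  rw [G8_sig, G8_sig]
  have hk : ∀ k : ℤ, k + m + n = k + (m+n) := fun k => by ring
  have hk' : ∀ k : ℤ, k + n + m = k + (m+n) := fun k => by ring
  apply GA_ext <;> intro k <;>
  simp only [Module.End.mul_apply, LinearMap.sub_apply, LinearMap.add_apply, LinearMap.smul_apply,
    G8_e0, G8_e1, G8_e2, G8_e3, map_add, map_smul, hk, hk'] <;>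
  simp [sgW, BW] <;> module

lemma Phi8_single (α : ℂ) (n : ℤ) (w : W8) : Phi8 α (Finsupp.single n w) = G8 α n w := by
  simp [Phi8]

lemma Phi_c0 (α : ℂ) (f : V8) (n : ℤ) : (Phi8 α f (e0 1)).1 (1+n) = - f n 0 := by
  induction f using Finsupp.induction_linear with
  | zero => simp
  | add f g hf hg => simp [hf, hg]; ring
  | single m w =>
    rw [Phi8_single, G8_e0]; by_cases h : m = n <;> simp [e0, e1, e2, e3, h, Finsupp.single_apply]
lemma Phi_c6 (α : ℂ) (f : V8) (n : ℤ) : (Phi8 α f (e0 1)).2.2.1 (1+n) = f n 6 := by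
  induction f using Finsupp.induction_linear with
  | zero => simp
  | add f g hf hg => simp [hf, hg]
  | single m w =>
    rw [Phi8_single, G8_e0]; by_cases h : m = n <;> simp [e0, e1, e2, e3, h, Finsupp.single_apply]
lemma Phi_c7 (α : ℂ) (f : V8) (n : ℤ) : (Phi8 α f (e0 1)).2.1 (1+n) = f n 7 := by
  induction f using Finsupp.induction_linear with
  | zero => simp
  | add f g hf hg => simp [hf, hg]
  | single m w =>
    rw [Phi8_single, G8_e0]; by_cases h : m = n <;> simp [e0, e1, e2, e3, h, Finsupp.single_apply]
lemma Phi_c4 (α : ℂ) (f : V8) (n : ℤ) : (Phi8 α f (e1 0)).1 (0+n) = f n 4 := by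
  induction f using Finsupp.induction_linear with
  | zero => simp
  | add f g hf hg => simp only [map_add, LinearMap.add_apply, Prod.fst_add, Finsupp.add_apply, Pi.add_apply, hf, hg]
  | single m w =>
    rw [Phi8_single, G8_e1]; by_cases h : m = n <;> simp [e0, e1, e2, e3, h, Finsupp.single_apply]
lemma Phi_c1 (α : ℂ) (f : V8) (n : ℤ) : (Phi8 α f (e1 0)).2.2.1 (0+n) = f n 1 := by
  induction f using Finsupp.induction_linear with
  | zero => simp
  | add f g hf hg => simp only [map_add, LinearMap.add_apply, Prod.fst_add, Prod.snd_add, Finsupp.add_apply, Pi.add_apply, hf, hg]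
  | single m w =>
    rw [Phi8_single, G8_e1]; by_cases h : m = n <;> simp [e0, e1, e2, e3, h, Finsupp.single_apply]
lemma Phi_c5 (α : ℂ) (f : V8) (n : ℤ) : (Phi8 α f (e2 0)).1 (0+n) = - f n 5 := by
  induction f using Finsupp.induction_linear with
  | zero => simp
  | add f g hf hg => simp only [map_add, LinearMap.add_apply, Prod.fst_add, Finsupp.add_apply, Pi.add_apply, hf, hg, neg_add]
  | single m w =>
    rw [Phi8_single, G8_e2]; by_cases h : m = n <;> simp [e0, e1, e2, e3, h, Finsupp.single_apply]
lemma Phi_c3 (α : ℂ) (f : V8) (n : ℤ) : (Phi8 α f (e2 0)).2.1 (0+n) = f n 3 := by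
  induction f using Finsupp.induction_linear with
  | zero => simp
  | add f g hf hg => simp only [map_add, LinearMap.add_apply, Prod.fst_add, Prod.snd_add, Finsupp.add_apply, Pi.add_apply, hf, hg]
  | single m w =>
    rw [Phi8_single, G8_e2]; by_cases h : m = n <;> simp [e0, e1, e2, e3, h, Finsupp.single_apply]
lemma Phi_c2 (α : ℂ) (f : V8) (n : ℤ) : (Phi8 α f (e2 0)).2.2.1 (0+n)
    = (-(n+(α+1))/2) * f n 0 + f n 2 := by
  induction f using Finsupp.induction_linear with
  | zero => simp
  | add f g hf hg =>
    simp only [map_add, LinearMap.add_apply, Prod.fst_add, Prod.snd_add, Finsupp.add_apply, Pi.add_apply, hf, hg]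
    ring
  | single m w =>
    rw [Phi8_single, G8_e2]; by_cases h : m = n <;> simp [e0, e1, e2, e3, h, Finsupp.single_apply]
    ring

lemma Phi_inj (α : ℂ) : Function.Injective (Phi8 α) := by
  rw [injective_iff_map_eq_zero]
  intro f hf
  ext n i
  have h0 := Phi_c0 α f n
  have h1 := Phi_c1 α f n
  have h2 := Phi_c2 α f n
  have h3 := Phi_c3 α f n
  have h4 := Phi_c4 α f n
  have h5 := Phi_c5 α f n
  have h6 := Phi_c6 α f n
  have h7 := Phi_c7 α f n
  simp [hf] at h0 h1 h2 h3 h4 h5 h6 h7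
  simp [h0] at h2
  fin_cases i <;> first | assumption | (symm; assumption)

lemma Phi_range (α : ℂ) : LinearMap.range (Phi8 α) = s2Span α := by
  apply le_antisymm
  · rintro _ ⟨f, rfl⟩
    induction f using Finsupp.induction_linear with
    | zero => simp
    | add f g hf hg => rw [map_add]; exact add_mem hf hg
    | single n w =>
      rw [Phi8_single, G8_apply]
      have key : ∀ T ∈ s2Gen α, ∀ c : ℂ, c • T ∈ s2Span α := fun T hT c =>
        Submodule.smul_mem _ _ (Submodule.subset_span hT)
      refine add_mem (add_mem (add_mem (add_mem (add_mem (add_mem (add_mem ?_ ?_) ?_) ?_) ?_) ?_) ?_) ?_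
      · exact key _ ⟨n, by simp⟩ _
      · exact key _ ⟨n, by simp⟩ _
      · exact key _ ⟨n, by simp⟩ _
      · exact key _ ⟨n, by simp⟩ _
      · exact key _ ⟨n-1, by simp⟩ _
      · exact key _ ⟨n-1, by simp⟩ _
      · exact key _ ⟨n+1, by simp⟩ _
      · exact key _ ⟨n+1, by simp⟩ _
  · rw [s2Span, Submodule.span_le]
    rintro _ ⟨n, rfl | rfl | rfl | rfl | rfl | rfl | rfl | rfl⟩
    · exact ⟨Finsupp.single n (Pi.single 0 1), by simp [Phi8_single, G8_apply]⟩
    · exact ⟨Finsupp.single n (Pi.single 1 1), by simp [Phi8_single, G8_apply]⟩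
    · exact ⟨Finsupp.single n (Pi.single 2 1), by simp [Phi8_single, G8_apply]⟩
    · exact ⟨Finsupp.single n (Pi.single 3 1), by simp [Phi8_single, G8_apply]⟩
    · exact ⟨Finsupp.single (n-1) (Pi.single 6 1), by simp [Phi8_single, G8_apply]⟩
    · exact ⟨Finsupp.single (n+1) (Pi.single 5 1), by simp [Phi8_single, G8_apply]⟩
    · exact ⟨Finsupp.single (n+1) (Pi.single 4 1), by simp [Phi8_single, G8_apply]⟩
    · exact ⟨Finsupp.single (n-1) (Pi.single 7 1), by simp [Phi8_single, G8_apply]⟩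

def eqv8 (α : ℂ) : V8 ≃ₗ[ℂ] ↥(s2Span α) :=
  (LinearEquiv.ofInjective (Phi8 α) (Phi_inj α)).trans (LinearEquiv.ofEq _ _ (Phi_range α))

lemma eqv8_coe (α : ℂ) (f : V8) : ((eqv8 α f : ↥(s2Span α)) : Module.End ℂ GA) = Phi8 α f := rfl

def sgL : W8 →ₗ[ℂ] W8 where
  toFun := sgW
  map_add' v w := by ext i; fin_cases i <;> simp [sgW] <;> ring
  map_smul' c v := by ext i; fin_cases i <;> simp [sgW]

def BL (α : ℂ) (m n : ℤ) : W8 →ₗ[ℂ] W8 →ₗ[ℂ] W8 :=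
  LinearMap.mk₂ ℂ (BW α m n)
    (by intro v v' w; ext i; fin_cases i <;> simp [BW] <;> ring)
    (by intro c v w; ext i; fin_cases i <;> simp [BW] <;> ring)
    (by intro v w w'; ext i; fin_cases i <;> simp [BW] <;> ring)
    (by intro c v w; ext i; fin_cases i <;> simp [BW] <;> ring)

lemma BL_apply (α : ℂ) (m n : ℤ) (v w : W8) : BL α m n v w = BW α m n v w := rfl

/-- parity on V8 -/
def sgV : V8 →ₗ[ℂ] V8 := Finsupp.mapRange.linearMap sgL

lemma sgV_single (n : ℤ) (w : W8) : sgV (Finsupp.single n w) = Finsupp.single n (sgW w) := by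
  simp [sgV, sgL]
lemma sgV_apply (f : V8) (n : ℤ) : sgV f n = sgW (f n) := by
  simp [sgV, sgL]

def bV (α : ℂ) : V8 →ₗ[ℂ] V8 →ₗ[ℂ] V8 :=
  Finsupp.lsum ℂ (fun m => LinearMap.flip (Finsupp.lsum ℂ fun n =>
    LinearMap.flip ((BL α m n).compr₂ (Finsupp.lsingle (m+n)))))

lemma bV_single (α : ℂ) (m n : ℤ) (v w : W8) : bV α (Finsupp.single m v) (Finsupp.single n w)
   = Finsupp.single (m+n) (BW α m n v w) := by
  simp [bV, BL_apply]

lemma bV_right (α : ℂ) (f : V8) (p n : ℤ) (w : W8) : bV α f (Finsupp.single n w) (p+n)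
   = BW α p n (f p) w := by
  induction f using Finsupp.induction_linear with
  | zero => simp [← BL_apply]
  | add f g hf hg => simp only [map_add, LinearMap.add_apply, Finsupp.add_apply, hf, hg, ← BL_apply]
  | single m v =>
    rw [bV_single]; by_cases h : m = p <;> simp [h, ← BL_apply, Finsupp.single_apply]

lemma bV_left (α : ℂ) (f : V8) (p n : ℤ) (w : W8) : bV α (Finsupp.single n w) f (n+p)
   = BW α n p w (f p) := by
  induction f using Finsupp.induction_linear with
  | zero => simp [← BL_apply]
  | add f g hf hg => simp only [map_add, Finsupp.add_apply, hf, hg, ← BL_apply]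
  | single m v =>
    rw [bV_single]; by_cases h : m = p <;> simp [h, ← BL_apply, Finsupp.single_apply]

lemma sbr_add_left (x x' y : Module.End ℂ GA) : sbr (x + x') y = sbr x y + sbr x' y := by
  apply LinearMap.ext; intro z
  simp only [sbr, LinearMap.sub_apply, LinearMap.add_apply, LinearMap.smul_apply,
    Module.End.mul_apply, map_add]
  module
lemma sbr_add_right (x y y' : Module.End ℂ GA) : sbr x (y+y') = sbr x y + sbr x y' := by
  apply LinearMap.ext; intro z
  simp only [sbr, LinearMap.sub_apply, LinearMap.add_apply, LinearMap.smul_apply,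
    Module.End.mul_apply, map_add]
  module
lemma sbr_zero_left (y : Module.End ℂ GA) : sbr 0 y = 0 := by
  apply LinearMap.ext; intro z
  simp only [sbr, LinearMap.sub_apply, LinearMap.add_apply, LinearMap.smul_apply,
    Module.End.mul_apply, map_zero, LinearMap.zero_apply, sub_zero, smul_zero]
lemma sbr_zero_right (y : Module.End ℂ GA) : sbr y 0 = 0 := by
  apply LinearMap.ext; intro z
  simp only [sbr, LinearMap.sub_apply, LinearMap.add_apply, LinearMap.smul_apply,
    Module.End.mul_apply, map_zero, LinearMap.zero_apply, sub_zero, smul_zero, add_zero]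

lemma Phi_bV (α : ℂ) (f g : V8) : Phi8 α (bV α f g) = sbr (Phi8 α f) (Phi8 α g) := by
  induction f using Finsupp.induction_linear with
  | zero => simp [sbr_zero_left]
  | add f f' hf hf' => simp only [map_add, LinearMap.add_apply, hf, hf', sbr_add_left]
  | single m v =>
    induction g using Finsupp.induction_linear with
    | zero => simp [sbr_zero_right]
    | add f f' hf hf' => simp only [map_add, hf, hf', sbr_add_right]
    | single n w => rw [bV_single, Phi8_single, Phi8_single, Phi8_single, G8_br]

lemma Phi_sgV (α : ℂ) (f : V8) : Phi8 α (sgV f) = sigmaGA * Phi8 α f * sigmaGA := by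
  induction f using Finsupp.induction_linear with
  | zero => simp
  | add f f' hf hf' => simp only [map_add, hf, hf', mul_add, add_mul]
  | single m v => rw [sgV_single, Phi8_single, Phi8_single, G8_sig]

set_option maxHeartbeats 2000000 in
lemma BW_jac (α : ℂ) (m n p : ℤ) (u v w : W8) : BW α m (n+p) u (BW α n p v w)
   = BW α (m+n) p (BW α m n u v) w + (1/2:ℂ) • BW α n (m+p) (v + sgW v) (BW α m p u w)
    + (1/2:ℂ) • BW α n (m+p) (v - sgW v) (BW α m p (sgW u) w) := by
  ext i; fin_cases i <;> simp [BW, sgW] <;> ring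

lemma bV_jac (α : ℂ) (u v w : V8) : bV α u (bV α v w)
   = bV α (bV α u v) w + (1/2:ℂ) • bV α (v + sgV v) (bV α u w)
    + (1/2:ℂ) • bV α (v - sgV v) (bV α (sgV u) w) := by
  induction u using Finsupp.induction_linear with
  | zero => simp
  | add f f' hf hf' => 
    simp only [map_add, LinearMap.add_apply, map_sub, LinearMap.sub_apply] at hf hf' ⊢; rw [hf, hf']; module
  | single m u =>
    induction v using Finsupp.induction_linear with
    | zero => simp
    | add f f' hf hf' =>
      simp only [map_add, LinearMap.add_apply, map_sub, LinearMap.sub_apply] at hf hf' ⊢; rw [hf, hf']; module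
    | single n v =>
      induction w using Finsupp.induction_linear with
      | zero => simp
      | add f f' hf hf' => 
        simp only [map_add, LinearMap.add_apply, map_sub, LinearMap.sub_apply] at hf hf' ⊢; rw [hf, hf']; module
      | single p w =>
        have e1 : n + (m + p) = m + (n + p) := by ring
        have e2 : m + n + p = m + (n + p) := by ring
        simp only [sgV_single, ← Finsupp.single_add, ← Finsupp.single_sub, bV_single, e1, e2,
          Finsupp.smul_single]
        rw [BW_jac]

lemma bV_jac_even (α : ℂ) (u v w : V8) (h : sgV u = u) : bV α u (bV α v w)
   = bV α (bV α u v) w + bV α v (bV α u w) := by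
  rw [bV_jac, h]; simp only [map_add, LinearMap.add_apply, map_sub, LinearMap.sub_apply]; module

lemma bV_jac_odd (α : ℂ) (u v w : V8) (h : sgV u = -u) : bV α u (bV α v w)
   = bV α (bV α u v) w + bV α (sgV v) (bV α u w) := by
  rw [bV_jac, h]; simp only [map_add, LinearMap.add_apply, map_sub, LinearMap.sub_apply, map_neg, LinearMap.neg_apply]; module

lemma BW_sg (α : ℂ) (m n : ℤ) (v w : W8) : sgW (BW α m n v w) = BW α m n (sgW v) (sgW w) := by
  ext i; fin_cases i <;> simp [BW, sgW] <;> ring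

lemma bV_sg (α : ℂ) (u v : V8) : sgV (bV α u v) = bV α (sgV u) (sgV v) := by
  induction u using Finsupp.induction_linear with
  | zero => simp
  | add f f' hf hf' => simp only [map_add, LinearMap.add_apply, hf, hf']
  | single m u =>
    induction v using Finsupp.induction_linear with
    | zero => simp
    | add f f' hf hf' => simp only [map_add, LinearMap.add_apply, hf, hf']
    | single n v => simp only [sgV_single, bV_single, BW_sg]

def blk : Fin 8 → Fin 3 := ![0,0,0,0,1,1,2,2]
def lamc (α : ℂ) : Fin 8 → ℂ :=
  ![0,0,0,0,(α+1)/2,(α+1)/2,-((α+1)/2),-((α+1)/2)]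
def lam (α : ℂ) (n : ℤ) (i : Fin 8) : ℂ := -(n:ℂ) + lamc α i
def sgn : Fin 8 → ℂ := ![1,1,1,1,-1,-1,-1,-1]
def hh : Fin 8 → ℂ := ![0,0,0,0,1,1,-1,-1]
def eb (j : Fin 8) : W8 := Pi.single j 1

lemma sgW_apply (v : W8) (i : Fin 8) : sgW v i = sgn i * v i := by
  fin_cases i <;> simp [sgW, sgn]

lemma lam_eq (α : ℂ) (hα : ∀ k : ℤ, α ≠ (k : ℂ)) (n m : ℤ) (i j : Fin 8)
    (h : lam α n i = lam α m j) : n = m ∧ blk i = blk j := by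
  have h1 : ∀ k : ℤ, α + 1 ≠ (k:ℂ) := fun k hk => hα (k-1) (by push_cast; linear_combination hk)
  have key : blk i = blk j → n = m := by
    intro hb
    have : lamc α i = lamc α j := by
      revert hb; fin_cases i <;> fin_cases j <;> simp [blk, lamc]
    unfold lam at h
    rw [this] at h
    have : (n:ℂ) = m := by linear_combination -h
    exact_mod_cast this
  by_cases hb : blk i = blk j
  · exact ⟨key hb, hb⟩
  · exfalso
    have a1 := h1 (n-m)
    have a2 := h1 (m-n)
    have a3 := h1 (2*(n-m))
    have a4 := h1 (2*(m-n))
    push_cast at a1 a2 a3 a4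
    unfold lam at h
    revert hb h
    fin_cases i <;> fin_cases j <;> simp [blk, lamc] <;> intro h <;>
    first
    | exact a1 (by linear_combination h)
    | exact a2 (by linear_combination h)
    | exact a3 (by linear_combination 2*h)
    | exact a4 (by linear_combination 2*h)
    | exact a1 (by linear_combination -h)
    | exact a2 (by linear_combination -h)
    | exact a3 (by linear_combination -2*h)
    | exact a4 (by linear_combination -2*h)

lemma lam_zero (α : ℂ) (hα : ∀ k : ℤ, α ≠ (k : ℂ)) (n : ℤ) (i : Fin 8)
    (h : lam α n i = 0) : n = 0 ∧ blk i = 0 := by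
  have := lam_eq α hα n 0 i 0 (by rw [h]; simp [lam, lamc])
  simpa [blk] using this

def L0 : V8 := Finsupp.single 0 (eb 0)

lemma bV_L0 (α : ℂ) (f : V8) (n : ℤ) (i : Fin 8) : bV α L0 f n i = lam α n i * f n i := by
  have := bV_left α f n 0 (eb 0)
  rw [zero_add] at this
  rw [L0, this]
  fin_cases i <;> simp [BW, eb, lam, lamc] <;> first | (left; ring1) | ring1

lemma bV_L0' (α : ℂ) (f : V8) (n : ℤ) (i : Fin 8) : bV α f L0 n i = -lam α n i * f n i := by
  have := bV_right α f n 0 (eb 0)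
  rw [add_zero] at this
  rw [L0, this]
  fin_cases i <;> simp [BW, eb, lam, lamc] <;> first | (left; ring1) | ring1

lemma sgV_L0 : sgV L0 = L0 := by
  rw [L0, sgV_single]; congr 1; ext i; fin_cases i <;> simp [sgW, eb]

def RV (α : ℂ) (f : V8) : V8 :=
  Finsupp.onFinset f.support (fun n i => (lam α n i)⁻¹ * f n i) (by
    intro n hn
    rw [Finsupp.mem_support_iff]
    intro h; apply hn; ext i; simp [h])

lemma RV_apply (α : ℂ) (f : V8) (n : ℤ) (i : Fin 8) : RV α f n i = (lam α n i)⁻¹ * f n i := rfl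

def EvenV (α : ℂ) (D : V8 →ₗ[ℂ] V8) : Prop := (∀ f, D (sgV f) = sgV (D f)) ∧
  ∀ f g, D (bV α f g) = bV α (D f) g + bV α f (D g)
def OddV (α : ℂ) (D : V8 →ₗ[ℂ] V8) : Prop := (∀ f, D (sgV f) = -sgV (D f)) ∧
  ∀ f g, D (bV α f g) = bV α (D f) g + bV α (sgV f) (D g)

lemma EvenV_sub (α : ℂ) (D : V8 →ₗ[ℂ] V8) (h : EvenV α D) (s : V8) (hs : sgV s = s) :
    EvenV α (D - bV α s) := by
  refine ⟨fun f => ?_, fun f g => ?_⟩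
  · simp only [LinearMap.sub_apply, map_sub, h.1, bV_sg, hs]
  · simp only [LinearMap.sub_apply, map_sub, h.2, bV_jac_even α s f g hs]; abel

lemma OddV_sub (α : ℂ) (D : V8 →ₗ[ℂ] V8) (h : OddV α D) (s : V8) (hs : sgV s = -s) :
    OddV α (D - bV α s) := by
  refine ⟨fun f => ?_, fun f g => ?_⟩
  · simp only [LinearMap.sub_apply, map_sub, h.1, bV_sg, hs, map_neg, LinearMap.neg_apply]; abel
  · simp only [LinearMap.sub_apply, map_sub, h.2, bV_jac_odd α s f g hs]; abel

lemma V_ext (D E : V8 →ₗ[ℂ] V8)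
    (h : ∀ n j, D (Finsupp.single n (eb j)) = E (Finsupp.single n (eb j))) : D = E := by
  apply Finsupp.lhom_ext'
  intro n
  apply LinearMap.pi_ext'
  intro j
  apply LinearMap.ext_ring
  exact h n j

lemma bV_L0_eb (α : ℂ) (n : ℤ) (j : Fin 8) : bV α L0 (Finsupp.single n (eb j)) =
    lam α n j • Finsupp.single n (eb j) := by
  ext m i
  rw [bV_L0]
  by_cases h : n = m
  · subst h
    by_cases hj : j = i
    · subst hj; simp
    · simp [eb, Pi.single_apply, Ne.symm hj, eq_comm]
  · simp [h, Finsupp.single_apply]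

lemma comm_L0 (α : ℂ) (hα : ∀ k : ℤ, α ≠ (k : ℂ)) (D : V8 →ₗ[ℂ] V8)
    (h : ∀ f, D (bV α L0 f) = bV α L0 (D f)) (n m : ℤ) (j i : Fin 8)
    (hne : ¬ (n = m ∧ blk j = blk i)) : D (Finsupp.single n (eb j)) m i = 0 := by
  have h1 := h (Finsupp.single n (eb j))
  rw [bV_L0_eb, map_smul] at h1
  have h2 := congrFun (DFunLike.congr_fun h1 m) i
  rw [bV_L0] at h2
  simp only [Finsupp.smul_apply, Pi.smul_apply, smul_eq_mul] at h2
  have h3 := mul_eq_mul_right_iff.1 h2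
  rcases h3 with h3 | h3
  · exact absurd (lam_eq α hα _ _ _ _ h3) hne
  · exact h3

lemma sgn_blk (i j : Fin 8) (h : blk i = blk j) : sgn i = sgn j := by
  revert h; fin_cases i <;> fin_cases j <;> simp [blk, sgn]

lemma sgn_sq (i : Fin 8) : sgn i * sgn i = 1 := by
  fin_cases i <;> simp [sgn]

lemma sgV_eb (n : ℤ) (j : Fin 8) : sgV (Finsupp.single n (eb j)) = sgn j • Finsupp.single n (eb j) := by
  rw [sgV_single, Finsupp.smul_single]; congr 1; ext i; rw [sgW_apply]
  by_cases hj : j = i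
  · subst hj; simp
  · simp [eb, Pi.single_apply, Ne.symm hj, eq_comm]

lemma odd_inner (α : ℂ) (hα : ∀ k : ℤ, α ≠ (k : ℂ)) (D : V8 →ₗ[ℂ] V8) (h : OddV α D) :
    ∃ s : V8, D = bV α s := by
  have hu : sgV (D L0) = - D L0 := by
    have := h.1 L0
    rw [sgV_L0] at this
    rw [eq_neg_iff_add_eq_zero] at this ⊢; rw [add_comm]; exact this
  have hui : ∀ n i, sgn i * D L0 n i = - D L0 n i := by
    intro n i
    have := congrFun (DFunLike.congr_fun hu n) i
    rwa [sgV_apply, sgW_apply] at this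
  set s := - RV α (D L0) with hs
  have hss : sgV s = -s := by
    ext n i
    rw [sgV_apply, sgW_apply]
    simp only [hs, Finsupp.neg_apply, Pi.neg_apply, RV_apply]
    linear_combination -(lam α n i)⁻¹ * hui n i
  have h1 := OddV_sub α D h s hss
  refine ⟨s, ?_⟩
  set D1 := D - bV α s with hD1
  have hD1L : D1 L0 = 0 := by
    ext n i
    simp only [hD1, LinearMap.sub_apply, Finsupp.sub_apply, Pi.sub_apply, bV_L0', hs,
      Finsupp.neg_apply, Pi.neg_apply, RV_apply]
    by_cases hl : lam α n i = 0
    · have := (lam_zero α hα n i hl).2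
      have := sgn_blk i 0 this
      have h3 := hui n i
      rw [this] at h3
      simp only [sgn, Matrix.cons_val_zero, one_mul] at h3
      have : D L0 n i = 0 := by linear_combination h3/2
      simp [this]
    · field_simp; simp
  have hc : ∀ f, D1 (bV α L0 f) = bV α L0 (D1 f) := by
    intro f; rw [h1.2, hD1L, sgV_L0]; simp
  have : D1 = 0 := by
    apply V_ext
    intro n j
    ext m i
    by_cases hne : n = m ∧ blk j = blk i
    · have h4 := h1.1 (Finsupp.single n (eb j))
      rw [sgV_eb, map_smul] at h4
      have h5 := congrFun (DFunLike.congr_fun h4 m) i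
      simp only [Finsupp.smul_apply, Pi.smul_apply, smul_eq_mul, Finsupp.neg_apply, Pi.neg_apply,
        sgV_apply, sgW_apply, sgn_blk j i hne.2] at h5
      have := sgn_sq i
      simp only [LinearMap.zero_apply, Finsupp.zero_apply, Pi.zero_apply]
      linear_combination (sgn i/2) * h5 - D1 (Finsupp.single n (eb j)) m i * this
    · simpa using comm_L0 α hα D1 hc n m j i hne
  rw [hD1] at this
  exact sub_eq_zero.1 this

/-- Core computations: matrix form of a degree preserving derivation. -/
def HDer (α : ℂ) (T : ℤ → Fin 8 → W8) : Prop := ∀ m n j k i,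
  ∑ l, BW α m n (eb j) (eb k) l * T (m+n) l i = BW α m n (T m j) (eb k) i + BW α m n (eb j) (T n k) i

lemma core1 (α : ℂ) (T : ℤ → Fin 8 → W8) (hb : ∀ n j i, blk j ≠ blk i → T n j i = 0)
    (h0 : T 0 0 = 0) (hd : HDer α T) : ∃ w0 : W8, (∀ i, blk i ≠ 0 → w0 i = 0) ∧ w0 0 = 0 ∧
    ∀ j, blk j = 0 → T 0 j = BW α 0 0 w0 (eb j) := by
  have hHE := fun i => hd 0 0 2 1 i
  have hHF := fun i => hd 0 0 2 3 i
  have hEF := fun i => hd 0 0 1 3 i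
  have HE0 := hHE 0
  have HE1 := hHE 1
  have HE2 := hHE 2
  have HE3 := hHE 3
  have HF0 := hHF 0
  have HF1 := hHF 1
  have HF2 := hHF 2
  have HF3 := hHF 3
  have EF0 := hEF 0
  have EF1 := hEF 1
  have EF2 := hEF 2
  have EF3 := hEF 3
  simp [BW, eb, Fin.sum_univ_eight] at HE0 HE1 HE2 HE3 HF0 HF1 HF2 HF3 EF0 EF1 EF2 EF3
  refine ⟨![0, T 0 3 2, T 0 1 1 / 2, - T 0 1 2, 0,0,0,0], ?_, rfl, ?_⟩
  · intro i; fin_cases i <;> simp [blk]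
  · intro j hj
    ext i
    by_cases hi : blk i = 0
    · revert hi hj
      fin_cases j <;> fin_cases i <;> simp [blk, BW, eb, h0] <;> grind
    · rw [hb 0 j i (by rw [hj]; exact Ne.symm hi)]
      revert hi hj
      fin_cases j <;> fin_cases i <;> simp [blk, BW, eb]

lemma core2 (α : ℂ) (hα : ∀ k : ℤ, α ≠ (k : ℂ)) (T : ℤ → Fin 8 → W8)
    (hb : ∀ n j i, blk j ≠ blk i → T n j i = 0)
    (h0 : ∀ j, blk j = 0 → T 0 j = 0) (hd : HDer α T) : ∃ c κ : ℂ, ∀ n j,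
    T n j = (c * hh j + κ * lam α n j) • eb j := by
  have z0 := h0 0 rfl
  have z1 := h0 1 rfl
  have z2 := h0 2 rfl
  have z3 := h0 3 rfl
  have hdiag : ∀ n j i, i ≠ j → T n j i = 0 := by
    intro n j i hij
    by_cases hbl : blk j = blk i
    · have hH := fun j i => hd 0 n 2 j i
      have E00 := hH 0 1
      have E01 := hH 0 3
      have E10 := hH 1 0
      have E12 := hH 1 2
      have E13 := hH 1 3
      have E20 := hH 2 1
      have E21 := hH 2 3
      have E30 := hH 3 0
      have E31 := hH 3 1
      have E32 := hH 3 2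
      have E45 := hH 4 5
      have E54 := hH 5 4
      have E67 := hH 6 7
      have E76 := hH 7 6
      have EE0 := hd 0 n 1 0 1
      have EF0 := hd 0 n 1 3 0
      simp [BW, eb, Fin.sum_univ_eight, z0, z1, z2, z3] at E00 E01 E10 E12 E13 E20 E21 E30 E31 E32 E45 E54 E67 E76 EE0 EF0
      revert hbl hij
      fin_cases j <;> fin_cases i <;> simp [blk] <;> grind
    · exact hb n j i hbl
  have b12 : ∀ n, T n 1 1 = T n 2 2 := by
    intro n
    have h := hd 0 n 1 2 1
    simp [BW, eb, Fin.sum_univ_eight, z0, z1, z2, z3] at h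
    exact h
  have b23 : ∀ n, T n 2 2 = T n 3 3 := by
    intro n
    have h := hd 0 n 1 3 2
    simp [BW, eb, Fin.sum_univ_eight, z0, z1, z2, z3] at h
    exact h
  have c45 : ∀ n, T n 4 4 = T n 5 5 := by
    intro n
    have h := hd 0 n 1 5 4
    simp [BW, eb, Fin.sum_univ_eight, z0, z1, z2, z3] at h
    exact h
  have d67 : ∀ n, T n 6 6 = T n 7 7 := by
    intro n
    have h := hd 0 n 1 7 6
    simp [BW, eb, Fin.sum_univ_eight, z0, z1, z2, z3] at h
    exact h
  have badd : ∀ m n, T (m+n) 1 1 = T m 1 1 + T n 1 1 := by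
    intro m n
    have h := hd m n 1 3 2
    simp [BW, eb, Fin.sum_univ_eight] at h
    rw [b12, h, b12 n, b23 n]
  have bn : ∀ n, T n 1 1 = n * T 1 1 1 := by
    intro n
    let φ : ℤ →+ ℂ := ⟨⟨fun n => T n 1 1, by simp [z1]⟩, badd⟩
    have := map_zsmul φ n 1
    simpa [φ] using this
  have an : ∀ n, T n 0 0 = T n 1 1 := by
    intro n
    have h := hd n 1 0 1 1
    simp [BW, eb, Fin.sum_univ_eight] at h
    have := badd n 1
    grind
  have cn : ∀ n, T n 4 4 = T n 1 1 + T 0 4 4 := by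
    intro n
    have h := hd n 0 1 5 4
    simp [BW, eb, Fin.sum_univ_eight] at h
    rw [h, c45 0]
  have dn : ∀ n, T n 6 6 = T n 1 1 + T 0 6 6 := by
    intro n
    have h := hd n 0 1 7 6
    simp [BW, eb, Fin.sum_univ_eight] at h
    rw [h, d67 0]
  have cd : T 0 4 4 + T 0 6 6 = 0 := by
    have h := hd 0 0 4 6 1
    simp [BW, eb, Fin.sum_univ_eight, z1] at h
    have ha : α + 1 ≠ 0 := fun h => hα (-1) (by push_cast; linear_combination h)
    have h' : (α+1) * (T 0 4 4 + T 0 6 6) = 0 := by linear_combination h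
    exact (mul_eq_zero.1 h').resolve_left ha
  refine ⟨T 0 4 4 + T 1 1 1 * (α+1)/2, - T 1 1 1, fun n j => ?_⟩
  ext i
  by_cases hij : i = j
  · subst hij
    have q1 := bn n
    have q2 := an n
    have q3 := cn n
    have q4 := dn n
    have q5 := b12 n
    have q6 := b23 n
    have q7 := c45 n
    have q8 := d67 n
    fin_cases i <;> simp [eb, hh, lam, lamc] <;> grind
  · rw [hdiag n j i hij]; simp [eb, hij]

lemma even_comm_matrix (α : ℂ) (hα : ∀ k : ℤ, α ≠ (k : ℂ)) (D : V8 →ₗ[ℂ] V8) (h : EvenV α D)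
    (hL : D L0 = 0) :
    ∃ T : ℤ → Fin 8 → W8, (∀ n j, D (Finsupp.single n (eb j)) = Finsupp.single n (T n j)) ∧
      (∀ n j i, blk j ≠ blk i → T n j i = 0) ∧ T 0 0 = 0 ∧ HDer α T := by
  have hc : ∀ f, D (bV α L0 f) = bV α L0 (D f) := by
    intro f; rw [h.2, hL]; simp
  have hz := comm_L0 α hα D hc
  have h1 : ∀ n j, D (Finsupp.single n (eb j))
      = Finsupp.single n (D (Finsupp.single n (eb j)) n) := by
    intro n j
    ext m i
    by_cases hn : n = m
    · subst hn; simp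
    · rw [hz n m j i (fun h => hn h.1)]; simp [Finsupp.single_apply, hn]
  refine ⟨fun n j => D (Finsupp.single n (eb j)) n, h1, ?_, ?_, ?_⟩
  · intro n j i hb
    exact hz n n j i (fun h => hb h.2)
  · change D L0 0 = 0
    rw [hL]; rfl
  · intro m n j k i
    have h2 := h.2 (Finsupp.single m (eb j)) (Finsupp.single n (eb k))
    rw [h1 m j, h1 n k, bV_single, bV_single, bV_single] at h2
    have h3 := congrFun (DFunLike.congr_fun h2 (m+n)) i
    simp only [Finsupp.add_apply, Finsupp.single_eq_same, Pi.add_apply] at h3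
    rw [← h3]
    set w := BW α m n (eb j) (eb k)
    have hw : Finsupp.single (m+n) w = ∑ l, w l • (Finsupp.single (m+n) (eb l) : V8) := by
      ext p i
      by_cases hp : m + n = p
      · subst hp; simp [Finsupp.finsetSum_apply, Finset.sum_apply, eb, Pi.single_apply]
      · simp [Finsupp.finsetSum_apply, Finset.sum_apply, hp]
    rw [hw, map_sum]
    simp only [map_smul, Finsupp.finsetSum_apply, Finset.sum_apply, Finsupp.smul_apply,
      Pi.smul_apply, smul_eq_mul]

def hL8 : W8 →ₗ[ℂ] W8 where
  toFun v i := hh i * v i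
  map_add' v w := by ext i; simp; ring
  map_smul' c v := by ext i; simp; ring

def hV : V8 →ₗ[ℂ] V8 := Finsupp.mapRange.linearMap hL8

lemma hV_single (n : ℤ) (w : W8) : hV (Finsupp.single n w) = Finsupp.single n (hL8 w) := by
  simp [hV]

lemma hV_eb (n : ℤ) (j : Fin 8) : hV (Finsupp.single n (eb j)) = Finsupp.single n (hh j • eb j) := by
  rw [hV_single]; congr 1; ext i
  by_cases hj : j = i
  · subst hj; simp [hL8]
  · simp [hL8, eb, Pi.single_apply, Ne.symm hj]

lemma hV_even (α : ℂ) : EvenV α hV := by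
  refine ⟨fun f => ?_, fun f g => ?_⟩
  · ext n i
    simp [hV, sgV_apply, sgW_apply, hL8]; ring
  · induction f using Finsupp.induction_linear with
    | zero => simp
    | add f f' hf hf' => simp only [map_add, LinearMap.add_apply, hf, hf']; abel
    | single m v =>
      induction g using Finsupp.induction_linear with
      | zero => simp
      | add f f' hf hf' => simp only [map_add, LinearMap.add_apply, hf, hf']; abel
      | single n w =>
        rw [hV_single, hV_single, bV_single, bV_single, bV_single, hV_single, ← Finsupp.single_add]
        congr 1
        ext i
        fin_cases i <;> simp [hL8, BW, hh] <;> ring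

lemma blk_sgn (i : Fin 8) (h : sgn i = 1) : blk i = 0 := by
  revert h; fin_cases i <;> simp [sgn, blk] <;> norm_num

lemma sgV_even0 (w : W8) (hw : ∀ i, blk i ≠ 0 → w i = 0) :
    sgV (Finsupp.single 0 w) = Finsupp.single 0 w := by
  rw [sgV_single]; congr 1; ext i
  rw [sgW_apply]
  by_cases hb : blk i = 0
  · rw [sgn_blk i 0 hb]; simp [sgn]
  · simp [hw i hb]

lemma even_inner (α : ℂ) (hα : ∀ k : ℤ, α ≠ (k : ℂ)) (D : V8 →ₗ[ℂ] V8) (h : EvenV α D) :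
    ∃ (c : ℂ) (s : V8), D = c • hV + bV α s := by
  have hu : sgV (D L0) = D L0 := by
    have := h.1 L0
    rw [sgV_L0] at this
    exact this.symm
  have hui : ∀ n i, sgn i * D L0 n i = D L0 n i := by
    intro n i
    have := congrFun (DFunLike.congr_fun hu n) i
    rwa [sgV_apply, sgW_apply] at this
  set s := - RV α (D L0) with hs
  have hss : sgV s = s := by
    ext n i
    rw [sgV_apply, sgW_apply]
    simp only [hs, Finsupp.neg_apply, Pi.neg_apply, RV_apply]
    linear_combination -(lam α n i)⁻¹ * hui n i
  have h1 := EvenV_sub α D h s hss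
  set D1 := D - bV α s with hD1
  have hD1z : ∀ n i, lam α n i ≠ 0 → D1 L0 n i = 0 := by
    intro n i hl
    simp only [hD1, LinearMap.sub_apply, Finsupp.sub_apply, Pi.sub_apply, bV_L0', hs,
      Finsupp.neg_apply, Pi.neg_apply, RV_apply]
    field_simp; simp
  set u := D1 L0 0 with hu0
  have hsingle : D1 L0 = Finsupp.single 0 u := by
    ext n i
    by_cases hn : n = 0
    · subst hn; simp [hu0]
    · rw [hD1z n i (fun hl => hn (lam_zero α hα n i hl).1)]; simp [Finsupp.single_apply, Ne.symm hn]
  have hublk : ∀ i, blk i ≠ 0 → u i = 0 := fun i hi =>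
    hD1z 0 i (fun hl => hi (lam_zero α hα 0 i hl).2)
  have hB : ∀ n j i, blk j = blk i → BW α 0 n u (eb j) i = 0 := by
    intro n j i hji
    have h2 := h1.2 L0 (Finsupp.single n (eb j))
    rw [hsingle, bV_L0_eb, map_smul, bV_single, zero_add] at h2
    have h3 := congrFun (DFunLike.congr_fun h2 n) i
    simp only [Finsupp.add_apply, Finsupp.single_eq_same, Pi.add_apply, bV_L0, Finsupp.smul_apply,
      Pi.smul_apply, smul_eq_mul] at h3
    have : lam α n j = lam α n i := by
      unfold lam; congr 1; revert hji; fin_cases i <;> fin_cases j <;> simp [blk, lamc]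
    rw [this] at h3
    linear_combination -h3
  have hu_zero : u = 0 := by
    have a0 := hB 1 0 0 rfl
    have a1 := hB 0 1 1 rfl
    have a2 := hB 0 1 2 rfl
    have a3 := hB 0 3 2 rfl
    simp [BW, eb] at a0 a1 a2 a3
    ext i
    by_cases hb : blk i = 0
    · revert hb; fin_cases i <;> simp [blk, a0, a1, a2, a3]
    · simpa using hublk i hb
  have hL : D1 L0 = 0 := by rw [hsingle, hu_zero]; simp
  obtain ⟨T, hT, hTb, hT0, hTd⟩ := even_comm_matrix α hα D1 h1 hL
  obtain ⟨w0, hw, hw0, hTw⟩ := core1 α T hTb hT0 hTd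
  have h2 := EvenV_sub α D1 h1 (Finsupp.single 0 w0) (sgV_even0 w0 hw)
  set D2 := D1 - bV α (Finsupp.single 0 w0) with hD2
  have hkill : ∀ j, blk j = 0 → D2 (Finsupp.single 0 (eb j)) = 0 := by
    intro j hj
    rw [hD2, LinearMap.sub_apply, hT, bV_single, hTw j hj]; simp
  obtain ⟨T', hT', hTb', hT0', hTd'⟩ := even_comm_matrix α hα D2 h2 (hkill 0 rfl)
  obtain ⟨c, κ, hcκ⟩ := core2 α hα T' hTb' (by
    intro j hj
    have := hkill j hj
    rw [hT'] at this
    simpa using this) hTd'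
  refine ⟨c, s + Finsupp.single 0 w0 + κ • L0, ?_⟩
  have hfin : D2 = c • hV + bV α (κ • L0) := by
    apply V_ext
    intro n j
    rw [hT', hcκ, LinearMap.add_apply, LinearMap.smul_apply, hV_eb, map_smul, LinearMap.smul_apply,
      bV_L0_eb]
    simp only [Finsupp.smul_single, ← Finsupp.single_add]
    congr 1; module
  have hD : D = D2 + bV α (Finsupp.single 0 w0) + bV α s := by rw [hD2, hD1]; abel
  rw [hD, hfin, map_add, map_add]; abel

lemma hV_not_inner (α : ℂ) (c : ℂ) (s : V8) (h : ∀ x, c • hV x = bV α s x) : c = 0 := by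
  have key : ∀ n j, c * hh j = BW α 0 n (s 0) (eb j) j := by
    intro n j
    have h1 := h (Finsupp.single n (eb j))
    rw [hV_eb] at h1
    have h2 := congrFun (DFunLike.congr_fun h1 n) j
    have h3 := bV_right α s 0 n (eb j)
    rw [zero_add] at h3
    rw [h3] at h2
    rw [← h2]
    simp [eb]
  have a1 := key 0 4
  have a2 := key 0 5
  have a3 := key 1 4
  simp [BW, eb, hh] at a1 a2 a3
  grind

/-- transfer -/
lemma even_transfer (α : ℂ) (D : ↥(s2Span α) →ₗ[ℂ] ↥(s2Span α)) (h : IsEvenDer α D) :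
    EvenV α ((eqv8 α).symm.toLinearMap ∘ₗ D ∘ₗ (eqv8 α).toLinearMap) := by
  refine ⟨fun f => ?_, fun f g => ?_⟩
  · apply Phi_inj α
    rw [Phi_sgV]
    simp only [← eqv8_coe, LinearMap.comp_apply, LinearEquiv.coe_coe, LinearEquiv.apply_symm_apply]
    apply h.1
    rw [eqv8_coe, eqv8_coe, Phi_sgV]
  · apply Phi_inj α
    rw [map_add, Phi_bV, Phi_bV]
    simp only [← eqv8_coe, LinearMap.comp_apply, LinearEquiv.coe_coe, LinearEquiv.apply_symm_apply]
    apply h.2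
    rw [eqv8_coe, eqv8_coe, eqv8_coe, Phi_bV]

lemma odd_transfer (α : ℂ) (D : ↥(s2Span α) →ₗ[ℂ] ↥(s2Span α)) (h : IsOddDer α D) :
    OddV α ((eqv8 α).symm.toLinearMap ∘ₗ D ∘ₗ (eqv8 α).toLinearMap) := by
  refine ⟨fun f => ?_, fun f g => ?_⟩
  · apply Phi_inj α
    rw [map_neg, Phi_sgV]
    simp only [← eqv8_coe, LinearMap.comp_apply, LinearEquiv.coe_coe, LinearEquiv.apply_symm_apply]
    apply h.1
    rw [eqv8_coe, eqv8_coe, Phi_sgV]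
  · apply Phi_inj α
    rw [map_add, Phi_bV, Phi_bV, Phi_sgV]
    simp only [← eqv8_coe, LinearMap.comp_apply, LinearEquiv.coe_coe, LinearEquiv.apply_symm_apply]
    apply h.2
    rw [eqv8_coe, eqv8_coe, eqv8_coe, Phi_bV]

def DH8 (α : ℂ) : ↥(s2Span α) →ₗ[ℂ] ↥(s2Span α) :=
  (eqv8 α).toLinearMap ∘ₗ hV ∘ₗ (eqv8 α).symm.toLinearMap

lemma DH8_eqv (α : ℂ) (f : V8) : DH8 α (eqv8 α f) = eqv8 α (hV f) := by
  simp [DH8]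

lemma DH8_even (α : ℂ) : IsEvenDer α (DH8 α) := by
  refine ⟨fun x z hz => ?_, fun x y z hz => ?_⟩
  · obtain ⟨f, rfl⟩ := (eqv8 α).surjective x
    obtain ⟨g, rfl⟩ := (eqv8 α).surjective z
    rw [eqv8_coe, eqv8_coe, ← Phi_sgV] at hz
    have := Phi_inj α hz
    rw [DH8_eqv, DH8_eqv, eqv8_coe, eqv8_coe, ← Phi_sgV, this, (hV_even α).1]
  · obtain ⟨f, rfl⟩ := (eqv8 α).surjective x
    obtain ⟨g, rfl⟩ := (eqv8 α).surjective y
    obtain ⟨k, rfl⟩ := (eqv8 α).surjective z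
    rw [eqv8_coe, eqv8_coe, eqv8_coe, ← Phi_bV] at hz
    have := Phi_inj α hz
    rw [DH8_eqv, DH8_eqv, DH8_eqv, eqv8_coe, eqv8_coe, eqv8_coe, eqv8_coe, eqv8_coe,
      ← Phi_bV, ← Phi_bV, this, (hV_even α).2, map_add]

lemma DH8_gen (α : ℂ) (n : ℤ) (j : Fin 8) (z : ↥(s2Span α))
    (hz : (z : Module.End ℂ GA) = G8 α n (eb j)) :
    ((DH8 α z : ↥(s2Span α)) : Module.End ℂ GA) = hh j • (z : Module.End ℂ GA) := by
  obtain ⟨f, rfl⟩ := (eqv8 α).surjective z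
  rw [eqv8_coe, ← Phi8_single] at hz
  have := Phi_inj α hz
  rw [DH8_eqv, eqv8_coe, eqv8_coe, this, hV_eb, ← Finsupp.smul_single, map_smul]

/-- For `α ∈ ℂ∖ℤ`, the Lie superalgebra of exterior derivations
`Der_ext S'(2,α) = Der S'(2,α)/Inn S'(2,α)` is one-dimensional, spanned by the class
of the even derivation `𝖧` with `𝖧(𝔵_k) = 𝔵_k`, `𝖧(𝔥_k^α) = −𝔥_k^α`,
`𝖧(𝔭_k) = 𝔭_k`, `𝖧(𝔶_k^α) = −𝔶_k^α` and `𝖧(ℒ_n^α) = 𝖧(E_n) = 𝖧(H_n) = 𝖧(F_n) = 0`. -/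
theorem exterior_derivations_nonintegral_alpha (α : ℂ) (hα : ∀ k : ℤ, α ≠ (k : ℂ)) :
    ∃ DH : ↥(s2Span α) →ₗ[ℂ] ↥(s2Span α),
      IsEvenDer α DH ∧
      -- the defining values of `𝖧` on the basis
      (∀ (k : ℤ) (z : ↥(s2Span α)), (z : Module.End ℂ GA) = xop k →
        ((DH z : Module.End ℂ GA)) = xop k) ∧
      (∀ (k : ℤ) (z : ↥(s2Span α)), (z : Module.End ℂ GA) = hop α k →
        ((DH z : Module.End ℂ GA)) = -hop α k) ∧
      (∀ (k : ℤ) (z : ↥(s2Span α)), (z : Module.End ℂ GA) = pop k →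
        ((DH z : Module.End ℂ GA)) = pop k) ∧
      (∀ (k : ℤ) (z : ↥(s2Span α)), (z : Module.End ℂ GA) = yop α k →
        ((DH z : Module.End ℂ GA)) = -yop α k) ∧
      (∀ (n : ℤ) (z : ↥(s2Span α)), (z : Module.End ℂ GA) = Lop α n →
        ((DH z : Module.End ℂ GA)) = 0) ∧
      (∀ (n : ℤ) (z : ↥(s2Span α)), (z : Module.End ℂ GA) = Eop n →
        ((DH z : Module.End ℂ GA)) = 0) ∧
      (∀ (n : ℤ) (z : ↥(s2Span α)), (z : Module.End ℂ GA) = Hop n →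
        ((DH z : Module.End ℂ GA)) = 0) ∧
      (∀ (n : ℤ) (z : ↥(s2Span α)), (z : Module.End ℂ GA) = Fop n →
        ((DH z : Module.End ℂ GA)) = 0) ∧
      -- the class of `𝖧` spans `Der_ext S'(2,α)` …
      (∀ D : ↥(s2Span α) →ₗ[ℂ] ↥(s2Span α), IsSuperDer α D →
        ∃ (c : ℂ) (s : ↥(s2Span α)), ∀ x : ↥(s2Span α),
          ((D x : Module.End ℂ GA)) = c • ((DH x : Module.End ℂ GA))
            + sbr (s : Module.End ℂ GA) (x : Module.End ℂ GA)) ∧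
      -- … and the class of `𝖧` is nonzero, so `Der_ext S'(2,α)` is one-dimensional
      (∀ (c : ℂ) (s : ↥(s2Span α)),
        (∀ x : ↥(s2Span α), c • ((DH x : Module.End ℂ GA))
          = sbr (s : Module.End ℂ GA) (x : Module.End ℂ GA)) → c = 0) := by
  refine ⟨DH8 α, DH8_even α, ?_, ?_, ?_, ?_, ?_, ?_, ?_, ?_, ?_, ?_⟩
  · intro k z hz
    rw [DH8_gen α (k+1) 4 z (by rw [hz]; simp [G8_apply, eb]), hz]; simp [hh]
  · intro k z hz
    rw [DH8_gen α (k-1) 6 z (by rw [hz]; simp [G8_apply, eb]), hz]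
    have hc : hh 6 = -1 := by simp [hh]
    rw [hc]
    apply LinearMap.ext; intro y
    rw [LinearMap.smul_apply, LinearMap.neg_apply]
    generalize (hop α k) y = w
    refine Prod.ext ?_ (Prod.ext ?_ (Prod.ext ?_ ?_)) <;> exact neg_one_smul ℂ _
  · intro k z hz
    rw [DH8_gen α (k+1) 5 z (by rw [hz]; simp [G8_apply, eb]), hz]; simp [hh]
  · intro k z hz
    rw [DH8_gen α (k-1) 7 z (by rw [hz]; simp [G8_apply, eb]), hz]
    have hc : hh 7 = -1 := by simp [hh]
    rw [hc]
    apply LinearMap.ext; intro y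
    rw [LinearMap.smul_apply, LinearMap.neg_apply]
    generalize (yop α k) y = w
    refine Prod.ext ?_ (Prod.ext ?_ (Prod.ext ?_ ?_)) <;> exact neg_one_smul ℂ _
  · intro k z hz
    rw [DH8_gen α k 0 z (by rw [hz]; simp [G8_apply, eb]), hz]; simp [hh]
  · intro k z hz
    rw [DH8_gen α k 1 z (by rw [hz]; simp [G8_apply, eb]), hz]; simp [hh]
  · intro k z hz
    rw [DH8_gen α k 2 z (by rw [hz]; simp [G8_apply, eb]), hz]; simp [hh]
  · intro k z hz
    rw [DH8_gen α k 3 z (by rw [hz]; simp [G8_apply, eb]), hz]; simp [hh]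
  · rintro D ⟨De, Do, rfl, he, ho⟩
    obtain ⟨c, s, hs⟩ := even_inner α hα _ (even_transfer α De he)
    obtain ⟨s', hs'⟩ := odd_inner α hα _ (odd_transfer α Do ho)
    refine ⟨c, eqv8 α (s + s'), fun x => ?_⟩
    obtain ⟨f, rfl⟩ := (eqv8 α).surjective x
    have e1 : De (eqv8 α f) = eqv8 α (c • hV f + bV α s f) := by
      have := LinearMap.congr_fun hs f
      rw [LinearMap.comp_apply, LinearMap.comp_apply] at this
      exact ((eqv8 α).symm_apply_eq).1 this
    have e2 : Do (eqv8 α f) = eqv8 α (bV α s' f) := by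
      have := LinearMap.congr_fun hs' f
      rw [LinearMap.comp_apply, LinearMap.comp_apply] at this
      exact ((eqv8 α).symm_apply_eq).1 this
    rw [LinearMap.add_apply, e1, e2, DH8_eqv, ← map_add, eqv8_coe, eqv8_coe, eqv8_coe, eqv8_coe,
      ← Phi_bV, ← (Phi8 α).map_smul, ← (Phi8 α).map_add, map_add (bV α), LinearMap.add_apply, add_assoc]
  · intro c s h
    obtain ⟨g, rfl⟩ := (eqv8 α).surjective s
    apply hV_not_inner α c g
    intro f
    have := h (eqv8 α f)
    rw [DH8_eqv, eqv8_coe, eqv8_coe, eqv8_coe, ← Phi_bV, ← (Phi8 α).map_smul] at this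
    exact Phi_inj α this
end
end

section
/- For any α ∈ ℂ, set 𝐋₀ = −ℒ_0^α + (1/2)(1−α)H_0 ∈ S(2,α). Then for every basis element s of S'(2,α), [𝐋₀, s] = (deg s)·s, where deg ℒ_n^α = deg H_n = deg 𝔥_n^α = deg 𝔭_n = n, deg E_n = deg 𝔵_n = n + 1 − α, and deg F_n = deg 𝔶_n^α = n − 1 + α. In particular, the grading deg of S'(2,α) by ℤ ± α is the eigenvalue decomposition of ad 𝐋₀. -/
noncomputable section

theorem tder_single (m : ℤ) (c : ℂ) :
    tder (Finsupp.single m c) = Finsupp.single (m - 1) ((m : ℂ) * c) := by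
  simp [tder]

theorem tshift_single (k m : ℤ) (c : ℂ) :
    tshift k (Finsupp.single m c) = Finsupp.single (m + k) c := by
  simp [tshift]

theorem tshift_tshift (k l : ℤ) (a : Lau) : tshift k (tshift l a) = tshift (l + k) a := by
  induction a using Finsupp.induction_linear with
  | zero => simp
  | add f g hf hg => simp only [map_add, hf, hg]
  | single m c => simp only [tshift_single, add_assoc]

theorem tder_tshift (k : ℤ) (a : Lau) :
    tder (tshift k a) = tshift k (tder a) + (k : ℂ) • tshift (k - 1) a := by
  induction a using Finsupp.induction_linear with
  | zero => simp
  | add f g hf hg => simp only [map_add, hf, hg, smul_add]; abel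
  | single m c =>
    simp only [tshift_single, tder_single, Finsupp.smul_single, smul_eq_mul]
    rw [show m - 1 + k = m + k - 1 by ring, show m + (k - 1) = m + k - 1 by ring,
      ← Finsupp.single_add]
    congr 1
    push_cast
    ring

theorem tshift_zero' (a : Lau) : tshift 0 a = a := by
  simp only [tshift, add_zero, Finsupp.lmapDomain_apply]
  exact Finsupp.mapDomain_id

theorem mk4_apply (f0 f1 f2 f3 : GA →ₗ[ℂ] Lau) (x : GA) :
    mk4 f0 f1 f2 f3 x = (f0 x, f1 x, f2 x, f3 x) := rfl
theorem pr0_apply (a b c d : Lau) : pr0 (a, b, c, d) = a := rfl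
theorem pr1_apply (a b c d : Lau) : pr1 (a, b, c, d) = b := rfl
theorem pr2_apply (a b c d : Lau) : pr2 (a, b, c, d) = c := rfl
theorem pr3_apply (a b c d : Lau) : pr3 (a, b, c, d) = d := rfl

theorem L0_apply (alf : ℂ) (a b c d : Lau) :
    (-Lop alf 0 + ((1 - alf) / 2) • Hop 0) (a, b, c, d) =
      (tshift 1 (tder a), tshift 1 (tder b) + alf • b, tshift 1 (tder c) + c,
        tshift 1 (tder d) + (1 + alf) • d) := by
  simp only [Lop, Hop, Mt, Dt, Dθ1, Dθ2, Mθ1, Mθ2, LinearMap.add_apply, LinearMap.sub_apply,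
    LinearMap.neg_apply, LinearMap.smul_apply, Module.End.mul_apply, mk4_apply,
    LinearMap.comp_apply, pr0_apply, pr1_apply, pr2_apply, pr3_apply, LinearMap.zero_apply,
    map_zero, map_neg, tshift_zero', Prod.mk_add_mk, Prod.neg_mk, Prod.smul_mk, Prod.mk_sub_mk,
    zero_add, Int.cast_zero, map_add, Prod.mk.injEq]
  refine ⟨?_, ?_, ?_, ?_⟩ <;> module

/-- For any `α ∈ ℂ`, the element `𝐋₀ = −ℒ₀^α + (1/2)(1−α)H₀` of
`S(2,α)` satisfies `[𝐋₀, s] = (deg s)·s` for every basis element `s` of `S'(2,α)`,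
where `deg ℒ_n^α = deg H_n = deg 𝔥_n^α = deg 𝔭_n = n`, `deg E_n = deg 𝔵_n = n+1−α`
and `deg F_n = deg 𝔶_n^α = n−1+α`: the grading `deg` of `S'(2,α)` by `ℤ ± α` is the
eigenvalue decomposition of `ad 𝐋₀`. -/
theorem grading_operator_of_s2alpha (alf : ℂ) (n : ℤ) :
    ((-Lop alf 0 + ((1 - alf) / 2) • Hop 0) * Lop alf n
        - Lop alf n * (-Lop alf 0 + ((1 - alf) / 2) • Hop 0) = (n : ℂ) • Lop alf n) ∧
    ((-Lop alf 0 + ((1 - alf) / 2) • Hop 0) * Hop n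
        - Hop n * (-Lop alf 0 + ((1 - alf) / 2) • Hop 0) = (n : ℂ) • Hop n) ∧
    ((-Lop alf 0 + ((1 - alf) / 2) • Hop 0) * hop alf n
        - hop alf n * (-Lop alf 0 + ((1 - alf) / 2) • Hop 0) = (n : ℂ) • hop alf n) ∧
    ((-Lop alf 0 + ((1 - alf) / 2) • Hop 0) * pop n
        - pop n * (-Lop alf 0 + ((1 - alf) / 2) • Hop 0) = (n : ℂ) • pop n) ∧
    ((-Lop alf 0 + ((1 - alf) / 2) • Hop 0) * Eop n
        - Eop n * (-Lop alf 0 + ((1 - alf) / 2) • Hop 0) = ((n : ℂ) + 1 - alf) • Eop n) ∧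
    ((-Lop alf 0 + ((1 - alf) / 2) • Hop 0) * xop n
        - xop n * (-Lop alf 0 + ((1 - alf) / 2) • Hop 0) = ((n : ℂ) + 1 - alf) • xop n) ∧
    ((-Lop alf 0 + ((1 - alf) / 2) • Hop 0) * Fop n
        - Fop n * (-Lop alf 0 + ((1 - alf) / 2) • Hop 0) = ((n : ℂ) - 1 + alf) • Fop n) ∧
    ((-Lop alf 0 + ((1 - alf) / 2) • Hop 0) * yop alf n
        - yop alf n * (-Lop alf 0 + ((1 - alf) / 2) • Hop 0) = ((n : ℂ) - 1 + alf) • yop alf n) := by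
  have hL := L0_apply alf
  generalize (-Lop alf 0 + ((1 - alf) / 2) • Hop 0) = L at hL ⊢
  refine ⟨?_, ?_, ?_, ?_, ?_, ?_, ?_, ?_⟩ <;>
  · refine LinearMap.ext ?_
    rintro ⟨a, b, c, d⟩
    rw [LinearMap.sub_apply, Module.End.mul_apply, Module.End.mul_apply, hL]
    simp only [Lop.eq_def alf n, Hop.eq_def n, hop, pop, Eop, xop, Fop, yop,
      Mt, Dt, Dθ1, Dθ2, Mθ1, Mθ2, LinearMap.add_apply, LinearMap.sub_apply,
      LinearMap.neg_apply, LinearMap.smul_apply, Module.End.mul_apply, mk4_apply,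
      LinearMap.comp_apply, pr0_apply, pr1_apply, pr2_apply, pr3_apply, LinearMap.zero_apply,
      map_zero, map_neg, Prod.mk_add_mk, Prod.neg_mk, Prod.smul_mk, Prod.mk_sub_mk, hL,
      map_add, map_sub, map_smul, tder_tshift, tshift_tshift, Prod.mk.injEq]
    ring_nf
    refine ⟨?_, ?_, ?_, ?_⟩ <;> (try push_cast) <;> module
end
end
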